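/- arXiv:1308.6693 — 2 statements merged into one kernel-verified Lean document; each statement's English description precedes it below -/
import Mathlib

section
/- Let Γ be a flat y-monotone orthogonal drawing of a finite simple planar graph G. Then there exists a flat visibility representation Γ' of G with the same y-coordinates as Γ and the same left-to-right order in each row. In particular, Γ' has the same height as Γ. -/
open Set

/-- A point in the plane. -/
abbrev Pt : Type := ℝ × ℝ

/-- A point has integer coordinates. -/
def IsIntPt (p : Pt) : Prop := (∃ a : ℤ, p.1 = (a : ℝ)) ∧ (∃ b : ℤ, p.2 = (b : ℝ))

/-- The (closed) segments of a polygonal chain, as pairs of consecutive corners. -/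
def chainSegs (l : List Pt) : List (Pt × Pt) := l.zip l.tail

/-- The set of points covered by a polygonal chain. -/
def chainSet (l : List Pt) : Set Pt := ⋃ s ∈ chainSegs l, segment ℝ s.1 s.2

/-- A polygonal chain is simple (non-self-intersecting): it has at least two
corners, all corners are distinct, and two of its segments meet only if they are
consecutive, and then only in their shared corner. -/
def IsSimpleChain (l : List Pt) : Prop :=
  2 ≤ l.length ∧ l.Nodup ∧
    ∀ i j : ℕ, i < j → ∀ (hi : i < (chainSegs l).length) (hj : j < (chainSegs l).length),
      segment ℝ ((chainSegs l).get ⟨i, hi⟩).1 ((chainSegs l).get ⟨i, hi⟩).2 ∩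
        segment ℝ ((chainSegs l).get ⟨j, hj⟩).1 ((chainSegs l).get ⟨j, hj⟩).2 ⊆
        if j = i + 1 then {((chainSegs l).get ⟨j, hj⟩).1} else (∅ : Set Pt)

/-- Every interior corner of the chain is a genuine bend (a direction change). -/
def GenuineBends (l : List Pt) : Prop :=
  ∀ i : ℕ, ∀ h : i + 2 < l.length,
    ¬ Collinear ℝ ({l.get ⟨i, by omega⟩, l.get ⟨i + 1, by omega⟩, l.get ⟨i + 2, h⟩} : Set Pt)

/-- The chain is a y-monotone path (horizontal segments allowed). -/
def IsMonoChain (l : List Pt) : Prop :=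
  (l.map Prod.snd).Chain' (· ≤ ·) ∨ (l.map Prod.snd).Chain' (fun a b => b ≤ a)

/-- All segments of the chain are horizontal or vertical. -/
def IsOrthoChain (l : List Pt) : Prop :=
  ∀ s ∈ chainSegs l, s.1.1 = s.2.1 ∨ s.1.2 = s.2.2

/-- A poly-line drawing of a graph `G`: every vertex is a point, and every edge
`uv` is the polygonal chain through the list `bends u v` of bend points
(listed in order from `u` to `v`). -/
structure PolylineDrawing {V : Type*} (G : SimpleGraph V) where
  pos : V → Pt
  bends : V → V → List Pt
  bends_symm : ∀ u v, bends v u = (bends u v).reverse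

namespace PolylineDrawing

variable {V : Type*} {G : SimpleGraph V}

/-- The corner list of the curve of edge `uv`. -/
def chain (D : PolylineDrawing G) (u v : V) : List Pt :=
  D.pos u :: (D.bends u v ++ [D.pos v])

/-- The set of points of the curve of edge `uv`. -/
def curve (D : PolylineDrawing G) (u v : V) : Set Pt := chainSet (D.chain u v)

/-- The defining elements of the drawing: vertex points and bends. -/
def points (D : PolylineDrawing G) : Set Pt :=
  Set.range D.pos ∪ ⋃ (u) (v) (_ : G.Adj u v), {p | p ∈ D.bends u v}

/-- The drawing is planar: vertex points are pairwise distinct, every edge curve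
is a simple chain whose interior corners are genuine bends, an edge curve contains
no vertex point other than its endpoints, and two distinct edge curves intersect
only in points of common endpoints. -/
def IsPlanar (D : PolylineDrawing G) : Prop :=
  Function.Injective D.pos ∧
  (∀ u v, G.Adj u v → IsSimpleChain (D.chain u v) ∧ GenuineBends (D.chain u v)) ∧
  (∀ u v w, G.Adj u v → w ≠ u → w ≠ v → D.pos w ∉ D.curve u v) ∧
  (∀ u v x y, G.Adj u v → G.Adj x y → s(u, v) ≠ s(x, y) →
    D.curve u v ∩ D.curve x y ⊆ D.pos '' (({u, v} : Set V) ∩ ({x, y} : Set V)))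

/-- All defining elements have integer coordinates. -/
def IntCoords (D : PolylineDrawing G) : Prop := ∀ p ∈ D.points, IsIntPt p

/-- A straight-line drawing: no edge has bends. -/
def IsStraightLine (D : PolylineDrawing G) : Prop := ∀ u v : V, D.bends u v = []

/-- Every edge curve is a y-monotone path. -/
def IsYMonotone (D : PolylineDrawing G) : Prop :=
  ∀ u v, G.Adj u v → IsMonoChain (D.chain u v)

/-- The drawing fits (after translation) in the rows `1, …, h`. -/
def InHeight (D : PolylineDrawing G) (h : ℕ) : Prop :=
  ∃ y0 : ℤ, ∀ p ∈ D.points, (y0 : ℝ) ≤ p.2 ∧ p.2 ≤ (y0 : ℝ) + (h : ℝ) - 1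

/-- The drawing fits (after translation) in the columns `1, …, w`. -/
def InWidth (D : PolylineDrawing G) (w : ℕ) : Prop :=
  ∃ x0 : ℤ, ∀ p ∈ D.points, (x0 : ℝ) ≤ p.1 ∧ p.1 ≤ (x0 : ℝ) + (w : ℝ) - 1

end PolylineDrawing

/-- An axis-parallel box (possibly degenerated to a segment or a point). -/
structure Box where
  x1 : ℝ
  x2 : ℝ
  y1 : ℝ
  y2 : ℝ
  hx : x1 ≤ x2
  hy : y1 ≤ y2

/-- The set of points of a box. -/
def Box.pts (b : Box) : Set Pt := Set.Icc b.x1 b.x2 ×ˢ Set.Icc b.y1 b.y2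

/-- An orthogonal drawing of a graph `G`: every vertex is an axis-aligned box, and
every edge `uv` is an axis-parallel polygonal chain `chain u v` (its first corner is
the attachment point on the box of `u`, its last corner the attachment point on the
box of `v`). -/
structure OrthDrawing {V : Type*} (G : SimpleGraph V) where
  box : V → Box
  chain : V → V → List Pt
  chain_symm : ∀ u v, chain v u = (chain u v).reverse

namespace OrthDrawing

variable {V : Type*} {G : SimpleGraph V}

/-- The set of points of the curve of edge `uv`. -/
def curve (D : OrthDrawing G) (u v : V) : Set Pt := chainSet (D.chain u v)

/-- The defining elements of the drawing: corners of vertex boxes, and corners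
(attachment points and bends) of edge chains. -/
def points (D : OrthDrawing G) : Set Pt :=
  (⋃ v, ({((D.box v).x1, (D.box v).y1), ((D.box v).x1, (D.box v).y2),
          ((D.box v).x2, (D.box v).y1), ((D.box v).x2, (D.box v).y2)} : Set Pt)) ∪
    ⋃ (u) (v) (_ : G.Adj u v), {p | p ∈ D.chain u v}

/-- All points covered by the drawing (boxes and edge curves). -/
def region (D : OrthDrawing G) : Set Pt :=
  (⋃ v, (D.box v).pts) ∪ ⋃ (u) (v) (_ : G.Adj u v), D.curve u v

/-- The drawing is planar: vertex boxes are pairwise disjoint; every edge curve is a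
simple axis-parallel chain, with genuine bends, joining the boxes of its endpoints;
an edge curve meets a vertex box only in its attachment points; and two distinct
edge curves intersect only in common endpoints. -/
def IsPlanar (D : OrthDrawing G) : Prop :=
  (∀ u v : V, u ≠ v → Disjoint (D.box u).pts (D.box v).pts) ∧
  (∀ u v, G.Adj u v → IsSimpleChain (D.chain u v) ∧ IsOrthoChain (D.chain u v) ∧
      GenuineBends (D.chain u v)) ∧
  (∀ u v, G.Adj u v → ∃ p q l, D.chain u v = p :: (l ++ [q]) ∧
      p ∈ (D.box u).pts ∧ q ∈ (D.box v).pts) ∧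
  (∀ u v w, G.Adj u v → D.curve u v ∩ (D.box w).pts ⊆
      {p | (w = u ∧ (D.chain u v).head? = some p) ∨
           (w = v ∧ (D.chain u v).getLast? = some p)}) ∧
  (∀ u v x y, G.Adj u v → G.Adj x y → s(u, v) ≠ s(x, y) →
      D.curve u v ∩ D.curve x y ⊆
        {p | ((D.chain u v).head? = some p ∨ (D.chain u v).getLast? = some p) ∧
             ((D.chain x y).head? = some p ∨ (D.chain x y).getLast? = some p)})

/-- A flat drawing: every vertex box is degenerated to a horizontal segment. -/
def IsFlat (D : OrthDrawing G) : Prop := ∀ v, (D.box v).y1 = (D.box v).y2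

/-- A visibility representation: an orthogonal drawing without bends, i.e. every
edge is a single horizontal or vertical segment. -/
def IsVR (D : OrthDrawing G) : Prop := ∀ u v, G.Adj u v → (D.chain u v).length = 2

/-- Every edge curve is a y-monotone path. -/
def IsYMonotone (D : OrthDrawing G) : Prop := ∀ u v, G.Adj u v → IsMonoChain (D.chain u v)

/-- All defining elements have integer coordinates. -/
def IntCoords (D : OrthDrawing G) : Prop := ∀ p ∈ D.points, IsIntPt p

/-- The drawing fits (after translation) in the rows `1, …, h`. -/
def InHeight (D : OrthDrawing G) (h : ℕ) : Prop :=
  ∃ y0 : ℤ, ∀ p ∈ D.points, (y0 : ℝ) ≤ p.2 ∧ p.2 ≤ (y0 : ℝ) + (h : ℝ) - 1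

/-- The drawing fits (after translation) in the columns `1, …, w`. -/
def InWidth (D : OrthDrawing G) (w : ℕ) : Prop :=
  ∃ x0 : ℤ, ∀ p ∈ D.points, (x0 : ℝ) ≤ p.1 ∧ p.1 ≤ (x0 : ℝ) + (w : ℝ) - 1

end OrthDrawing


namespace FlatVR

/-- Extension of a locally transitive relation to a ranking. -/
lemma exists_rank {A : Type} [Fintype A] (bot : A → ℤ) (P : A → A → Prop)
    (hirr : ∀ a, ¬ P a a)
    (ht : ∀ s t r, bot s ≤ bot t → bot r ≤ bot t → P s t → P t r → P s r) :
    ∃ f : A → ℤ, ∀ a b, P a b → f a < f b := by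
  classical
  have key : ∀ S : Finset A, ∃ f : A → ℚ, ∀ a ∈ S, ∀ b ∈ S, P a b → f a < f b := by
    intro S
    induction S using Finset.induction_on_max_value bot with
    | empty => exact ⟨fun _ => 0, by simp⟩
    | insert t S htS hmax ih =>
      obtain ⟨f, hf⟩ := ih
      obtain ⟨m, hm1, hm2⟩ := Order.exists_between_finsets
        (lo := (S.filter (fun s => P s t)).image f) (hi := (S.filter (fun s => P t s)).image f) (by
          intro x hx z hz
          simp only [Finset.mem_image, Finset.mem_filter] at hx hz
          obtain ⟨s, ⟨hs, hst⟩, rfl⟩ := hx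
          obtain ⟨r, ⟨hr, hrt⟩, rfl⟩ := hz
          exact hf s hs r hr (ht s t r (hmax s hs) (hmax r hr) hst hrt))
      refine ⟨Function.update f t m, ?_⟩
      intro a ha b hb hab
      rw [Finset.mem_insert] at ha hb
      rcases ha with rfl | ha <;> rcases hb with rfl | hb
      · exact absurd hab (hirr _)
      · have : b ≠ a := fun h => htS (h ▸ hb)
        rw [Function.update_self, Function.update_of_ne this]
        exact hm2 _ (Finset.mem_image_of_mem _ (Finset.mem_filter.2 ⟨hb, hab⟩))
      · have : a ≠ b := fun h => htS (h ▸ ha)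
        rw [Function.update_self, Function.update_of_ne this]
        exact hm1 _ (Finset.mem_image_of_mem _ (Finset.mem_filter.2 ⟨ha, hab⟩))
      · have h1 : a ≠ t := fun h => htS (h ▸ ha)
        have h2 : b ≠ t := fun h => htS (h ▸ hb)
        rw [Function.update_of_ne h1, Function.update_of_ne h2]
        exact hf a ha b hb hab
  obtain ⟨f, hf⟩ := key Finset.univ
  refine ⟨fun a => ((Finset.univ.filter (fun b => f b < f a)).card : ℤ), ?_⟩
  intro a b hab
  have h := hf a (Finset.mem_univ _) b (Finset.mem_univ _) hab
  simp only [Nat.cast_lt]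
  apply Finset.card_lt_card
  rw [Finset.ssubset_iff_of_subset]
  · exact ⟨a, by simpa using h, by simp⟩
  · intro c hc
    simp only [Finset.mem_filter, Finset.mem_univ, true_and] at hc ⊢
    exact hc.trans h

/-- The combinatorial core: a sweep from bottom to top. -/
lemma core {A : Type} [Fintype A] (bot top : A → ℤ) (Gam : A → ℤ → Set ℝ) (rho xi : A → ℤ → ℝ)
    (g1 : ∀ a k, bot a ≤ k → k ≤ top a → (Gam a k).OrdConnected)
    (g2 : ∀ a k, bot a ≤ k → k ≤ top a → rho a k ∈ Gam a k)
    (g3 : ∀ a b k x, bot a ≤ k → k ≤ top a → bot b ≤ k → k ≤ top b →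
      x ∈ Gam a k → x ∈ Gam b k → rho a k = rho b k)
    (g4 : ∀ a k, bot a ≤ k → k < top a → xi a k ∈ Gam a k ∧ xi a k ∈ Gam a (k + 1))
    (g5 : ∀ a b k, bot a ≤ k → k < top a → bot b ≤ k → k < top b →
      rho a k = rho b k → a = b ∨ (bot a = k ∧ bot b = k)) :
    ∃ f : A → ℤ,
      (∀ a b k, bot a ≤ k → k ≤ top a → bot b ≤ k → k ≤ top b → rho a k < rho b k → f a < f b) ∧
      (∀ a b k, bot a ≤ k → k < top a → bot b ≤ k → k < top b → xi a k < xi b k → f a < f b) := by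
  have hO : ∀ a b k, bot a ≤ k → k ≤ top a → bot b ≤ k → k ≤ top b → rho a k < rho b k →
      ∀ x ∈ Gam a k, ∀ z ∈ Gam b k, x < z := by
    intro a b k h1 h2 h3 h4 hr x hx z hz
    by_contra hc
    push Not at hc
    have ra := g2 a k h1 h2
    have rb := g2 b k h3 h4
    rcases le_total (rho a k) z with h | h
    · have : z ∈ Gam a k := (g1 a k h1 h2).out ra hx ⟨h, hc⟩
      exact hr.ne (g3 a b k z h1 h2 h3 h4 this hz)
    · have : rho a k ∈ Gam b k := (g1 b k h3 h4).out hz rb ⟨h, hr.le⟩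
      exact hr.ne (g3 a b k _ h1 h2 h3 h4 ra this)
  let R : ℤ → A → A → Prop := fun k a b => rho a k < rho b k ∨
    (rho a k = rho b k ∧ (bot a = k ∧ k < top a) ∧ (bot b = k ∧ k < top b) ∧ xi a k < xi b k)
  have hRirr : ∀ k a, ¬ R k a a := by
    intro k a h
    rcases h with h | h
    · exact lt_irrefl _ h
    · exact lt_irrefl _ h.2.2.2
  have hRtr : ∀ k a b c, R k a b → R k b c → R k a c := by
    intro k a b c h h'
    rcases h with h | ⟨h, ha, hb, hx⟩ <;> rcases h' with h' | ⟨h', hb', hc', hx'⟩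
    · exact Or.inl (h.trans h')
    · exact Or.inl (h' ▸ h)
    · exact Or.inl (h ▸ h')
    · exact Or.inr ⟨h.trans h', ha, hc', hx.trans hx'⟩
  have hxiR : ∀ a b k, bot a ≤ k → k < top a → bot b ≤ k → k < top b → xi a k < xi b k →
      R k a b := by
    intro a b k h1 h2 h3 h4 hx
    rcases lt_trichotomy (rho a k) (rho b k) with h | h | h
    · exact Or.inl h
    · rcases g5 a b k h1 h2 h3 h4 h with rfl | ⟨ha, hb⟩
      · exact absurd hx (lt_irrefl _)
      · exact Or.inr ⟨h, ⟨ha, h2⟩, ⟨hb, h4⟩, hx⟩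
    · exact absurd hx (hO b a k h3 h4.le h1 h2.le h _ (g4 b k h3 h4).1 _ (g4 a k h1 h2).1).not_gt
  have hdown1 : ∀ a b k, bot a ≤ k → k + 1 ≤ top a → bot b ≤ k → k + 1 ≤ top b →
      R (k + 1) a b → R k a b := by
    intro a b k h1 h2 h3 h4 hR
    apply hxiR a b k h1 (by omega) h3 (by omega)
    rcases hR with h | h
    · exact hO a b (k + 1) (by omega) h2 (by omega) h4 h _ (g4 a k h1 (by omega)).2 _
        (g4 b k h3 (by omega)).2
    · exact absurd h.2.1.1 (by omega)
  have hdown : ∀ (n : ℕ) a b k, bot a ≤ k → k + n ≤ top a → bot b ≤ k → k + n ≤ top b →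
      R (k + n) a b → R k a b := by
    intro n
    induction n with
    | zero => intro a b k _ _ _ _ h; simpa using h
    | succ n ih =>
      intro a b k h1 h2 h3 h4 h
      push_cast at h2 h4 h
      apply ih a b k h1 (by omega) h3 (by omega)
      apply hdown1 a b _ (by omega) (by omega) (by omega) (by omega)
      rwa [add_assoc]
  obtain ⟨f, hf⟩ := exists_rank bot
    (fun a b => ∃ k, (bot a ≤ k ∧ k ≤ top a) ∧ (bot b ≤ k ∧ k ≤ top b) ∧ R k a b)
    (by rintro a ⟨k, _, _, h⟩; exact hRirr k a h)
    (by
      rintro s t r hs hr ⟨k, ⟨h1, h2⟩, ⟨h3, h4⟩, h5⟩ ⟨j, ⟨i1, i2⟩, ⟨i3, i4⟩, i5⟩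
      refine ⟨bot t, ⟨hs, by omega⟩, ⟨hr, by omega⟩, hRtr _ _ t _ ?_ ?_⟩
      · obtain ⟨n, hn⟩ := Int.eq_ofNat_of_zero_le (show 0 ≤ k - bot t by omega)
        have hk : k = bot t + n := by omega
        subst hk
        exact hdown n s t _ hs h2 le_rfl h4 h5
      · obtain ⟨n, hn⟩ := Int.eq_ofNat_of_zero_le (show 0 ≤ j - bot t by omega)
        have hk : j = bot t + n := by omega
        subst hk
        exact hdown n t r _ le_rfl i2 hr i4 i5)
  refine ⟨f, ?_, ?_⟩
  · intro a b k h1 h2 h3 h4 h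
    exact hf a b ⟨k, ⟨h1, h2⟩, ⟨h3, h4⟩, Or.inl h⟩
  · intro a b k h1 h2 h3 h4 h
    exact hf a b ⟨k, ⟨h1, h2.le⟩, ⟨h3, h4.le⟩, hxiR a b k h1 h2 h3 h4 h⟩

/-! Geometry of chains -/

lemma chainSet_cons (p q : Pt) (l : List Pt) :
    chainSet (p :: q :: l) = segment ℝ p q ∪ chainSet (q :: l) := by
  ext z
  simp [chainSet, chainSegs]

lemma chainSet_single (p : Pt) : chainSet [p] = ∅ := by
  simp [chainSet, chainSegs]

lemma segment_snd {p q z : Pt} (h : p.2 ≤ q.2) (hz : z ∈ segment ℝ p q) :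
    p.2 ≤ z.2 ∧ z.2 ≤ q.2 := by
  have := (Prod.segment_subset (𝕜 := ℝ) p q hz).2
  rwa [segment_eq_Icc h] at this

lemma chainSet_snd_ge : ∀ (l : List Pt) (p : Pt), ((p :: l).map Prod.snd).IsChain (· ≤ ·) →
    ∀ z ∈ chainSet (p :: l), p.2 ≤ z.2
  | [], p, _, z, hz => by simp [chainSet_single] at hz
  | q :: l, p, h, z, hz => by
    simp only [List.map_cons, List.isChain_cons_cons] at h
    rw [chainSet_cons] at hz
    rcases hz with hz | hz
    · exact (segment_snd h.1 hz).1
    · exact h.1.trans (chainSet_snd_ge l q (by simpa using h.2) z hz)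

lemma head_mem_chainSet (p q : Pt) (l : List Pt) : p ∈ chainSet (p :: q :: l) := by
  rw [chainSet_cons]; exact Or.inl (left_mem_segment ℝ p q)

lemma last_mem_chainSet : ∀ (l : List Pt) (p q : Pt), q ∈ chainSet (p :: (l ++ [q]))
  | [], p, q => by
    simp only [List.nil_append]; rw [chainSet_cons]; exact Or.inl (right_mem_segment ℝ p q)
  | a :: l, p, q => by
    simp only [List.cons_append]; rw [chainSet_cons]; exact Or.inr (last_mem_chainSet l a q)

lemma slice_segment (p q : Pt) (y : ℝ) : ({x | (x, y) ∈ segment ℝ p q} : Set ℝ).OrdConnected := by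
  apply Convex.ordConnected
  intro a ha b hb s t hs ht hst
  have := convex_segment (𝕜 := ℝ) p q ha hb hs ht hst
  simp only [mem_ofPred_eq]
  convert this using 1
  ext
  · simp
  · simp [← add_mul, hst]

lemma ordConnected_union {s t : Set ℝ} (hs : s.OrdConnected) (ht : t.OrdConnected) {x : ℝ}
    (h1 : x ∈ s) (h2 : x ∈ t) : (s ∪ t).OrdConnected := by
  refine ⟨?_⟩
  rintro a ha b hb z ⟨h3, h4⟩
  rcases ha with ha | ha <;> rcases hb with hb | hb
  · exact Or.inl (hs.out ha hb ⟨h3, h4⟩)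
  · rcases le_total z x with h | h
    · exact Or.inl (hs.out ha h1 ⟨h3, h⟩)
    · exact Or.inr (ht.out h2 hb ⟨h, h4⟩)
  · rcases le_total z x with h | h
    · exact Or.inr (ht.out ha h2 ⟨h3, h⟩)
    · exact Or.inl (hs.out h1 hb ⟨h, h4⟩)
  · exact Or.inr (ht.out ha hb ⟨h3, h4⟩)

lemma slice_ordConnected : ∀ (l : List Pt), (l.map Prod.snd).IsChain (· ≤ ·) → ∀ y : ℝ,
    ({x | (x, y) ∈ chainSet l} : Set ℝ).OrdConnected
  | [], _, y => by simp [chainSet, chainSegs, Set.ordConnected_empty]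
  | [p], _, y => by simp [chainSet_single, Set.ordConnected_empty]
  | [p, q], _, y => by
    rw [chainSet_cons, chainSet_single, Set.union_empty]; exact slice_segment p q y
  | p :: q :: r :: l, h, y => by
    have h' := h
    simp only [List.map_cons, List.isChain_cons_cons] at h
    have htail : ((q :: r :: l).map Prod.snd).IsChain (· ≤ ·) := by
      simpa using h.2
    have ih := slice_ordConnected (q :: r :: l) htail y
    rw [chainSet_cons]
    have hsplit : ({x | (x, y) ∈ segment ℝ p q ∪ chainSet (q :: r :: l)} : Set ℝ) =
      {x | (x, y) ∈ segment ℝ p q} ∪ {x | (x, y) ∈ chainSet (q :: r :: l)} := rfl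
    rw [hsplit]
    rcases lt_trichotomy y q.2 with hy | hy | hy
    · have : ({x | (x, y) ∈ chainSet (q :: r :: l)} : Set ℝ) = ∅ := by
        ext x
        simp only [mem_ofPred_eq, mem_empty_iff_false, iff_false]
        intro hx
        exact absurd (chainSet_snd_ge _ _ htail _ hx) (not_le.2 hy)
      rw [this, Set.union_empty]; exact slice_segment p q y
    · subst hy
      exact ordConnected_union (slice_segment p q _) ih (x := q.1)
        (right_mem_segment ℝ p q) (head_mem_chainSet q r l)
    · have : ({x | (x, y) ∈ segment ℝ p q} : Set ℝ) = ∅ := by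
        ext x
        simp only [mem_ofPred_eq, mem_empty_iff_false, iff_false]
        intro hx
        exact absurd (segment_snd h.1 hx).2 (not_le.2 hy)
      rw [this, Set.empty_union]; exact ih

lemma exists_crossing (k : ℝ) : ∀ (l : List Pt) (p : Pt), p.2 ≤ k → (∃ q ∈ l, k < q.2) →
    ∃ s ∈ chainSegs (p :: l), s.1.2 ≤ k ∧ k < s.2.2
  | [], p, _, ⟨q, hq, _⟩ => by simp at hq
  | r :: l, p, hp, ⟨q, hq, hk⟩ => by
    rcases lt_or_ge k r.2 with hr | hr
    · exact ⟨(p, r), by simp [chainSegs], hp, hr⟩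
    · have : ∃ q ∈ l, k < q.2 := by
        rcases List.mem_cons.1 hq with rfl | h
        · exact absurd hk (not_lt.2 hr)
        · exact ⟨q, h, hk⟩
      obtain ⟨s, hs, h⟩ := exists_crossing k l r hr this
      refine ⟨s, ?_, h⟩
      simp only [chainSegs, List.tail_cons, List.zip_cons_cons, List.mem_cons] at hs ⊢
      exact Or.inr hs

lemma mem_segment_vert {p q z : Pt} (h : p.1 = q.1) :
    z ∈ segment ℝ p q ↔ z.1 = p.1 ∧ z.2 ∈ Set.uIcc p.2 q.2 := by
  obtain ⟨a, b⟩ := p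
  obtain ⟨c, d⟩ := q
  obtain ⟨z, w⟩ := z
  simp only at h
  subst h
  rw [← Prod.image_mk_segment_right, segment_eq_uIcc]
  simp only [mem_image, Prod.mk.injEq, exists_eq_right_right]
  tauto

lemma mem_segment_hor {p q z : Pt} (h : p.2 = q.2) :
    z ∈ segment ℝ p q ↔ z.2 = p.2 ∧ z.1 ∈ Set.uIcc p.1 q.1 := by
  obtain ⟨a, b⟩ := p
  obtain ⟨c, d⟩ := q
  obtain ⟨z, w⟩ := z
  simp only at h
  subst h
  rw [← Prod.image_mk_segment_left, segment_eq_uIcc]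
  simp only [mem_image, Prod.mk.injEq]
  constructor
  · rintro ⟨x, hx, rfl, rfl⟩; exact ⟨rfl, hx⟩
  · rintro ⟨rfl, hx⟩; exact ⟨z, hx, rfl, rfl⟩

lemma isChain_bounds {a b : Pt} {l : List Pt}
    (h : ((a :: (l ++ [b])).map Prod.snd).IsChain (· ≤ ·)) :
    ∀ z ∈ a :: (l ++ [b]), a.2 ≤ z.2 ∧ z.2 ≤ b.2 := by
  rw [List.isChain_iff_pairwise, List.pairwise_map] at h
  rw [List.pairwise_cons, List.pairwise_append] at h
  obtain ⟨h1, h2, h3, h4⟩ := h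
  intro z hz
  rcases List.mem_cons.1 hz with rfl | hz
  · exact ⟨le_rfl, h1 b (by simp)⟩
  · refine ⟨h1 z hz, ?_⟩
    rcases List.mem_append.1 hz with hz | hz
    · exact h4 z hz b (by simp)
    · simp at hz; rw [hz]


section layout

variable {V : Type} {G : SimpleGraph V} {D : OrthDrawing G}

lemma mem_box (hflat : D.IsFlat) {y : V → ℤ} (hy : ∀ v, (D.box v).y1 = y v) (v : V) (z : Pt) :
    z ∈ (D.box v).pts ↔ ((D.box v).x1 ≤ z.1 ∧ z.1 ≤ (D.box v).x2) ∧ z.2 = y v := by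
  have h1 := hflat v
  have h2 := hy v
  simp only [Box.pts, Set.mem_prod, Set.mem_Icc]
  rw [← h1, h2]
  constructor
  · rintro ⟨h, h3, h4⟩; exact ⟨h, le_antisymm h4 h3⟩
  · rintro ⟨h, h3⟩; exact ⟨h, h3.ge, h3.le⟩

lemma end_mem (hpl : D.IsPlanar) {u v : V} (h : G.Adj u v) {p : Pt} :
    ((D.chain u v).head? = some p → p ∈ (D.box u).pts) ∧
    ((D.chain u v).getLast? = some p → p ∈ (D.box v).pts) := by
  obtain ⟨a, b, l, hc, ha, hb⟩ := hpl.2.2.1 u v h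
  rw [hc]
  constructor
  · intro hh
    simp only [List.head?_cons, Option.some.injEq] at hh
    exact hh ▸ ha
  · intro hh
    rw [← List.cons_append, List.getLast?_concat, Option.some.injEq] at hh
    exact hh ▸ hb

/-- a curve point on another vertex -/
lemma curve_box (hpl : D.IsPlanar) {u v w : V} (h : G.Adj u v) {p : Pt}
    (hp : p ∈ D.curve u v) (hw : p ∈ (D.box w).pts) : w = u ∨ w = v := by
  rcases hpl.2.2.2.1 u v w h ⟨hp, hw⟩ with h | h
  · exact Or.inl h.1
  · exact Or.inr h.1

lemma box_eq (hpl : D.IsPlanar) {u v : V} {p : Pt}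
    (hp : p ∈ (D.box u).pts) (hw : p ∈ (D.box v).pts) : u = v := by
  by_contra hne
  exact Set.disjoint_left.1 (hpl.1 u v hne) hp hw

lemma curve_curve (hpl : D.IsPlanar) {u v a b : V} (h : G.Adj u v) (h' : G.Adj a b)
    (hne : s(u, v) ≠ s(a, b)) {p : Pt}
    (hp : p ∈ D.curve u v) (hw : p ∈ D.curve a b) :
    ∃ w, (w = u ∨ w = v) ∧ (w = a ∨ w = b) ∧ p ∈ (D.box w).pts := by
  obtain ⟨h1, h2⟩ := hpl.2.2.2.2 u v a b h h' hne ⟨hp, hw⟩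
  have e1 : ∃ w, (w = u ∨ w = v) ∧ p ∈ (D.box w).pts := by
    rcases h1 with h1 | h1
    · exact ⟨u, Or.inl rfl, (end_mem hpl h).1 h1⟩
    · exact ⟨v, Or.inr rfl, (end_mem hpl h).2 h1⟩
  have e2 : ∃ w, (w = a ∨ w = b) ∧ p ∈ (D.box w).pts := by
    rcases h2 with h1 | h1
    · exact ⟨a, Or.inl rfl, (end_mem hpl h').1 h1⟩
    · exact ⟨b, Or.inr rfl, (end_mem hpl h').2 h1⟩
  obtain ⟨w, hw1, hw2⟩ := e1
  obtain ⟨w', hw1', hw2'⟩ := e2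
  have := box_eq hpl hw2 hw2'
  subst this
  exact ⟨w, hw1, hw1', hw2⟩

lemma row_ends (hpl : D.IsPlanar) (hflat : D.IsFlat) {y : V → ℤ} (hy : ∀ v, (D.box v).y1 = y v)
    {u v : V} (h : G.Adj u v) :
    (∃ x, (x, (y u : ℝ)) ∈ D.curve u v ∧ (D.box u).x1 ≤ x ∧ x ≤ (D.box u).x2) ∧
    (∃ x, (x, (y v : ℝ)) ∈ D.curve u v ∧ (D.box v).x1 ≤ x ∧ x ≤ (D.box v).x2) := by
  obtain ⟨a, b, l, hc, ha, hb⟩ := hpl.2.2.1 u v h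
  rw [mem_box hflat hy] at ha hb
  constructor
  · refine ⟨a.1, ?_, ha.1⟩
    rw [← ha.2, OrthDrawing.curve, hc]
    rcases l with _ | ⟨c, l⟩
    · exact head_mem_chainSet _ _ _
    · exact head_mem_chainSet _ _ _
  · refine ⟨b.1, ?_, hb.1⟩
    rw [← hb.2, OrthDrawing.curve, hc]
    exact last_mem_chainSet _ _ _

lemma isUp (hpl : D.IsPlanar) (hflat : D.IsFlat) (hmono : D.IsYMonotone)
    {y : V → ℤ} (hy : ∀ v, (D.box v).y1 = y v)
    {u v : V} (h : G.Adj u v) (huv : y u < y v) :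
    ((D.chain u v).map Prod.snd).IsChain (· ≤ ·) := by
  obtain ⟨a, b, l, hc, ha, hb⟩ := hpl.2.2.1 u v h
  rw [mem_box hflat hy] at ha hb
  rcases hmono u v h with hm | hm
  · exact hm
  · exfalso
    rw [hc] at hm
    have hm' : ((a :: (l ++ [b])).map Prod.snd).IsChain (fun a b => b ≤ a) := hm
    have : Trans (fun a b : ℝ => b ≤ a) (fun a b : ℝ => b ≤ a) (fun a b : ℝ => b ≤ a) :=
      ⟨fun h1 h2 => le_trans h2 h1⟩
    rw [List.isChain_iff_pairwise, List.pairwise_map, List.pairwise_cons] at hm'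
    have := hm'.1 b (by simp)
    rw [ha.2, hb.2] at this
    have : y v ≤ y u := by exact_mod_cast this
    omega

lemma chain_range (hpl : D.IsPlanar) (hflat : D.IsFlat) (hmono : D.IsYMonotone)
    {y : V → ℤ} (hy : ∀ v, (D.box v).y1 = y v)
    {u v : V} (h : G.Adj u v) {p : Pt} (hp : p ∈ D.chain u v) :
    min (y u : ℝ) (y v) ≤ p.2 ∧ p.2 ≤ max (y u : ℝ) (y v) := by
  have key : ∀ u v, G.Adj u v → p ∈ D.chain u v →
      ((D.chain u v).map Prod.snd).IsChain (· ≤ ·) → (y u : ℝ) ≤ p.2 ∧ p.2 ≤ y v := by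
    intro u v h hp hm
    obtain ⟨a, b, l, hc, ha, hb⟩ := hpl.2.2.1 u v h
    rw [mem_box hflat hy] at ha hb
    rw [hc] at hm hp
    have := isChain_bounds hm p hp
    rwa [ha.2, hb.2] at this
  rcases hmono u v h with hm | hm
  · have := key u v h hp hm
    exact ⟨min_le_of_left_le this.1, le_max_of_le_right this.2⟩
  · have := key v u h.symm (by rw [D.chain_symm u v]; simpa using hp) (by
      rw [D.chain_symm u v, List.map_reverse, List.isChain_reverse]
      exact hm)
    exact ⟨min_le_of_right_le this.1, le_max_of_le_left this.2⟩

lemma vert_part (hpl : D.IsPlanar) (hflat : D.IsFlat) (hint : D.IntCoords)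
    {y : V → ℤ} (hy : ∀ v, (D.box v).y1 = y v)
    {u v : V} (h : G.Adj u v) (k : ℤ) (h1 : y u ≤ k) (h2 : k < y v) :
    ∃ x : ℝ, ∀ t : ℝ, (k : ℝ) ≤ t → t ≤ k + 1 → (x, t) ∈ D.curve u v := by
  obtain ⟨a, b, l, hc, ha, hb⟩ := hpl.2.2.1 u v h
  rw [mem_box hflat hy] at ha hb
  obtain ⟨s, hs, hs1, hs2⟩ := exists_crossing (k : ℝ) (l ++ [b]) a
    (by rw [ha.2]; exact_mod_cast h1) ⟨b, by simp, by rw [hb.2]; exact_mod_cast h2⟩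
  rw [← hc] at hs
  have hmem : s.2 ∈ D.chain u v := by
    have := (List.of_mem_zip (a := s.1) (b := s.2) hs).2
    exact List.mem_of_mem_tail this
  have hi : IsIntPt s.2 := by
    apply hint
    refine Or.inr ?_
    simp only [Set.mem_iUnion]
    exact ⟨u, v, h, hmem⟩
  obtain ⟨_, n, hn⟩ := hi
  have hn' : (k : ℝ) + 1 ≤ s.2.2 := by
    rw [hn] at hs2 ⊢
    have : k < n := by exact_mod_cast hs2
    exact_mod_cast this
  have hv : s.1.1 = s.2.1 := by
    rcases (hpl.2.1 u v h).2.1 s hs with h | h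
    · exact h
    · linarith
  refine ⟨s.1.1, fun t ht1 ht2 => ?_⟩
  simp only [OrthDrawing.curve, chainSet, Set.mem_iUnion]
  refine ⟨s, hs, (mem_segment_vert hv).2 ⟨rfl, ?_⟩⟩
  exact Set.mem_uIcc.2 (Or.inl ⟨by simp only; linarith, by simp only; linarith⟩)

/-- Existence of a good layout. -/
lemma layout [Fintype V] (hpl : D.IsPlanar) (hflat : D.IsFlat)
    (hmono : D.IsYMonotone) (hint : D.IntCoords)
    (y : V → ℤ) (hy : ∀ v, (D.box v).y1 = y v) :
    ∃ (X1 X2 : V → ℤ) (g : V → V → ℤ),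
      (∀ v, X1 v ≤ X2 v) ∧
      (∀ u v, G.Adj u v → y u < y v →
        (X1 u ≤ g u v ∧ g u v ≤ X2 u) ∧ (X1 v ≤ g u v ∧ g u v ≤ X2 v)) ∧
      (∀ u v, y u = y v → (D.box u).x1 < (D.box v).x1 → X2 u < X1 v) ∧
      (∀ u v w, G.Adj u v → y u < y w → y w < y v → ∃ x : ℝ, (x, (y w : ℝ)) ∈ D.curve u v ∧
        (∀ w', y w' = y w → x < (D.box w').x1 → g u v < X1 w') ∧
        (∀ w', y w' = y w → (D.box w').x1 < x → X2 w' < g u v)) ∧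
      (∀ u v a b, G.Adj u v → G.Adj a b → y u < y v → y a < y b → (u, v) ≠ (a, b) →
        y u < y b → y a < y v → g u v ≠ g a b) := by
  classical
  let E := {p : V × V // G.Adj p.1 p.2 ∧ y p.1 < y p.2}
  have : Fintype E := Fintype.ofFinite _
  have hB := mem_box hflat hy
  have hex : ∀ (e : E) (k : ℤ), ∃ x : ℝ, y e.1.1 ≤ k → k < y e.1.2 →
      ∀ t : ℝ, (k : ℝ) ≤ t → t ≤ k + 1 → (x, t) ∈ D.curve e.1.1 e.1.2 := by
    intro e k
    by_cases h : y e.1.1 ≤ k ∧ k < y e.1.2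
    · obtain ⟨x, hx⟩ := vert_part hpl hflat hint hy e.2.1 k h.1 h.2
      exact ⟨x, fun _ _ => hx⟩
    · exact ⟨0, fun h1 h2 => absurd ⟨h1, h2⟩ h⟩
  choose xi hxi using hex
  let ends : E → V → Prop := fun e w => w = e.1.1 ∨ w = e.1.2
  let Ge : E → ℤ → Set ℝ := fun e k => {x | (x, (k : ℝ)) ∈ D.curve e.1.1 e.1.2 ∨
    ∃ w, ends e w ∧ (x, (k : ℝ)) ∈ (D.box w).pts}
  let re : E → ℤ → ℝ := fun e k => if y e.1.1 = k then (D.box e.1.1).x1 else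
    if y e.1.2 = k then (D.box e.1.2).x1 else xi e k
  have hre : ∀ e k w, ends e w → y w = k → re e k = (D.box w).x1 := by
    intro e k w hw hk
    have := e.2.2
    rcases hw with rfl | rfl
    · simp only [re]; rw [if_pos hk]
    · simp only [re]; rw [if_neg (by omega), if_pos hk]
  have hx1 : ∀ w, ((D.box w).x1, (y w : ℝ)) ∈ (D.box w).pts := fun w =>
    (hB w _).2 ⟨⟨le_rfl, (D.box w).hx⟩, rfl⟩
  have hrow : ∀ w x (k : ℤ), (x, (k : ℝ)) ∈ (D.box w).pts → y w = k := by
    intro w x k h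
    have : (k : ℝ) = y w := ((hB w _).1 h).2
    exact_mod_cast this.symm
  have hpair : ∀ e e' : E, e ≠ e' → s(e.1.1, e.1.2) ≠ s(e'.1.1, e'.1.2) := by
    intro e e' hne h
    rw [Sym2.eq_iff] at h
    have h1 := e.2.2
    have h2 := e'.2.2
    rcases h with ⟨h3, h4⟩ | ⟨h3, h4⟩
    · exact hne (Subtype.ext (Prod.ext h3 h4))
    · rw [h3, h4] at h1; omega
  -- two edge groups meet only at a common vertex
  have hM : ∀ e e' k x, x ∈ Ge e k → x ∈ Ge e' k → e = e' ∨ ∃ w, ends e w ∧ ends e' w ∧ y w = k := by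
    intro e e' k x h h'
    by_cases hne : e = e'
    · exact Or.inl hne
    right
    rcases h with h | ⟨w, hw, h⟩ <;> rcases h' with h' | ⟨w', hw', h'⟩
    · obtain ⟨w, h1, h2, h3⟩ := curve_curve hpl e.2.1 e'.2.1 (hpair e e' hne) h h'
      exact ⟨w, h1, h2, hrow _ _ _ h3⟩
    · exact ⟨w', curve_box hpl e.2.1 h h', hw', hrow _ _ _ h'⟩
    · exact ⟨w, hw, curve_box hpl e'.2.1 h' h, hrow _ _ _ h⟩
    · have := box_eq hpl h h'
      subst this
      exact ⟨w, hw, hw', hrow _ _ _ h⟩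
  have hMv : ∀ e w k x, x ∈ Ge e k → (x, (k : ℝ)) ∈ (D.box w).pts → ends e w := by
    intro e w k x h h'
    rcases h with h | ⟨w', hw, h⟩
    · exact curve_box hpl e.2.1 h h'
    · have := box_eq hpl h h'
      exact this ▸ hw
  have hboxord : ∀ w (k : ℤ), ({x | (x, (k : ℝ)) ∈ (D.box w).pts} : Set ℝ).OrdConnected := by
    intro w k
    refine ⟨?_⟩
    intro a ha b hb z hz
    have ha' := (hB w _).1 ha
    have hb' := (hB w _).1 hb
    exact (hB w _).2 ⟨⟨ha'.1.1.trans hz.1, hz.2.trans hb'.1.2⟩, ha'.2⟩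
  have hGord : ∀ e k, (Ge e k).OrdConnected := by
    intro e k
    have hs := slice_ordConnected _ (isUp hpl hflat hmono hy e.2.1 e.2.2) (k : ℝ)
    obtain ⟨⟨p, hp, hp'⟩, ⟨q, hq, hq'⟩⟩ := row_ends hpl hflat hy e.2.1
    by_cases h1 : y e.1.1 = k
    · subst h1
      have := ordConnected_union hs (hboxord e.1.1 (y e.1.1)) (x := p) hp ((hB _ _).2 ⟨hp', rfl⟩)
      convert this using 1
      ext x
      constructor
      · rintro (h | ⟨w, hw, h⟩)
        · exact Or.inl h
        · rcases hw with rfl | rfl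
          · exact Or.inr h
          · exact absurd (hrow _ _ _ h) (by have := e.2.2; omega)
      · rintro (h | h)
        · exact Or.inl h
        · exact Or.inr ⟨_, Or.inl rfl, h⟩
    by_cases h2 : y e.1.2 = k
    · subst h2
      have := ordConnected_union hs (hboxord e.1.2 (y e.1.2)) (x := q) hq ((hB _ _).2 ⟨hq', rfl⟩)
      convert this using 1
      ext x
      constructor
      · rintro (h | ⟨w, hw, h⟩)
        · exact Or.inl h
        · rcases hw with rfl | rfl
          · exact absurd (hrow _ _ _ h) (by have := e.2.2; omega)
          · exact Or.inr h
      · rintro (h | h)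
        · exact Or.inl h
        · exact Or.inr ⟨_, Or.inr rfl, h⟩
    · convert hs using 1
      ext x
      constructor
      · rintro (h | ⟨w, hw, h⟩)
        · exact h
        · rcases hw with rfl | rfl
          · exact absurd (hrow _ _ _ h) h1
          · exact absurd (hrow _ _ _ h) h2
      · exact fun h => Or.inl h
  have hreG : ∀ e k, y e.1.1 ≤ k → k ≤ y e.1.2 → re e k ∈ Ge e k := by
    intro e k h1 h2
    by_cases h : ∃ w, ends e w ∧ y w = k
    · obtain ⟨w, hw, hk⟩ := h
      rw [hre e k w hw hk]
      exact Or.inr ⟨w, hw, hk ▸ hx1 w⟩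
    · have h3 : ¬ y e.1.1 = k := fun h' => h ⟨_, Or.inl rfl, h'⟩
      have h4 : ¬ y e.1.2 = k := fun h' => h ⟨_, Or.inr rfl, h'⟩
      have : re e k = xi e k := by simp only [re]; rw [if_neg h3, if_neg h4]
      rw [this]
      exact Or.inl (hxi e k h1 (by omega) k le_rfl (by linarith))
  obtain ⟨f, hf1, hf2⟩ := core (A := V ⊕ E)
    (Sum.elim y (fun e => y e.1.1)) (Sum.elim y (fun e => y e.1.2))
    (Sum.elim (fun w k => {x | (x, (k : ℝ)) ∈ (D.box w).pts}) Ge)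
    (Sum.elim (fun w _ => (D.box w).x1) re) (Sum.elim (fun _ _ => 0) xi)
    (by
      rintro (w | e) k h1 h2
      · exact hboxord w k
      · exact hGord e k)
    (by
      rintro (w | e) k h1 h2
      · simp only [Sum.elim_inl] at h1 h2 ⊢
        have : y w = k := le_antisymm h1 h2
        exact this ▸ hx1 w
      · exact hreG e k h1 h2)
    (by
      rintro (w | e) (w' | e') k x h1 h2 h3 h4 hx hx'
      · have := box_eq hpl hx hx'
        subst this; rfl
      · exact (hre e' k w (hMv e' w k x hx' hx) (hrow _ _ _ hx)).symm
      · exact hre e k w' (hMv e w' k x hx hx') (hrow _ _ _ hx')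
      · rcases hM e e' k x hx hx' with rfl | ⟨w, hw, hw', hk⟩
        · rfl
        · exact (hre e k w hw hk).trans (hre e' k w hw' hk).symm)
    (by
      rintro (w | e) k h1 h2
      · simp only [Sum.elim_inl] at h1 h2
        omega
      · refine ⟨Or.inl (hxi e k h1 h2 _ le_rfl (by linarith)), Or.inl (hxi e k h1 h2 _ ?_ ?_)⟩
        · push_cast; linarith
        · push_cast; linarith)
    (by
      rintro (w | e) (w' | e') k h1 h2 h3 h4 hr
      · simp only [Sum.elim_inl] at h1 h2; omega
      · simp only [Sum.elim_inl] at h1 h2; omega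
      · simp only [Sum.elim_inl] at h3 h4; omega
      · simp only [Sum.elim_inr] at h1 h2 h3 h4 hr ⊢
        have m1 := hreG e k h1 h2.le
        have m2 := hreG e' k h3 h4.le
        rw [← hr] at m2
        rcases hM e e' k _ m1 m2 with rfl | ⟨w, hw, hw', hk⟩
        · exact Or.inl rfl
        · right
          constructor
          · rcases hw with rfl | rfl
            · exact hk
            · omega
          · rcases hw' with rfl | rfl
            · exact hk
            · omega)
  -- the elements attached to a vertex
  let At : V → Finset (V ⊕ E) := fun w => Finset.univ.filter
    (fun a => a = Sum.inl w ∨ ∃ e, a = Sum.inr e ∧ ends e w)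
  have hAt0 : ∀ w, Sum.inl w ∈ At w := fun w => by simp [At]
  have hne : ∀ w, (At w).Nonempty := fun w => ⟨_, hAt0 w⟩
  have hAtE : ∀ (e : E) w, ends e w → Sum.inr e ∈ At w := fun e w h => by
    simp only [At, Finset.mem_filter, Finset.mem_univ, true_and]
    exact Or.inr ⟨e, rfl, h⟩
  have hAtR : ∀ w a, a ∈ At w → (Sum.elim y (fun e => y e.1.1) a ≤ y w ∧
      y w ≤ Sum.elim y (fun e => y e.1.2) a ∧
      Sum.elim (fun w _ => (D.box w).x1) re a (y w) = (D.box w).x1) := by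
    intro w a ha
    simp only [At, Finset.mem_filter, Finset.mem_univ, true_and] at ha
    rcases ha with rfl | ⟨e, rfl, he⟩
    · simp
    · refine ⟨?_, ?_, hre e _ w he rfl⟩
      · have := e.2.2
        rcases he with rfl | rfl
        · exact le_rfl
        · exact this.le
      · have := e.2.2
        rcases he with rfl | rfl
        · exact this.le
        · exact le_rfl
  refine ⟨fun w => (At w).inf' (hne w) f, fun w => (At w).sup' (hne w) f,
    fun u v => if h : G.Adj u v ∧ y u < y v then f (Sum.inr ⟨(u, v), h⟩) else 0, ?_, ?_, ?_, ?_, ?_⟩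
  · intro v
    exact (Finset.inf'_le f (hAt0 v)).trans (Finset.le_sup' f (hAt0 v))
  · intro u v h1 h2
    simp only [dif_pos (And.intro h1 h2)]
    have m1 := hAtE ⟨(u, v), h1, h2⟩ u (Or.inl rfl)
    have m2 := hAtE ⟨(u, v), h1, h2⟩ v (Or.inr rfl)
    exact ⟨⟨Finset.inf'_le f m1, Finset.le_sup' f m1⟩, ⟨Finset.inf'_le f m2, Finset.le_sup' f m2⟩⟩
  · intro u v huv hlt
    simp only [Finset.sup'_lt_iff, Finset.lt_inf'_iff]
    intro b hb a ha
    obtain ⟨a1, a2, a3⟩ := hAtR u a ha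
    obtain ⟨b1, b2, b3⟩ := hAtR v b hb
    rw [← huv] at b1 b2 b3
    exact hf1 _ _ (y u) a1 a2 b1 b2 (by rw [a3, b3]; exact hlt)
  · intro u v w h1 h2 h3
    have h4 := h2.trans h3
    have hr : re ⟨(u, v), h1, h4⟩ (y w) = xi ⟨(u, v), h1, h4⟩ (y w) := by
      simp only [re]; rw [if_neg (by omega), if_neg (by omega)]
    simp only [dif_pos (And.intro h1 h4)]
    refine ⟨xi ⟨(u, v), h1, h4⟩ (y w), hxi ⟨(u, v), h1, h4⟩ (y w) h2.le h3 _ le_rfl (by linarith),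
      ?_, ?_⟩
    · intro w' hw' hx
      simp only [Finset.lt_inf'_iff]
      intro b hb
      obtain ⟨b1, b2, b3⟩ := hAtR w' b hb
      rw [hw'] at b1 b2 b3
      exact hf1 (Sum.inr _) b (y w) h2.le h3.le b1 b2 (by
        rw [b3, Sum.elim_inr, hr]; exact hx)
    · intro w' hw' hx
      simp only [Finset.sup'_lt_iff]
      intro b hb
      obtain ⟨b1, b2, b3⟩ := hAtR w' b hb
      rw [hw'] at b1 b2 b3
      exact hf1 b (Sum.inr _) (y w) b1 b2 h2.le h3.le (by
        rw [b3, Sum.elim_inr, hr]; exact hx)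
  · intro u v a b h1 h2 h3 h4 hne' h5 h6
    simp only [dif_pos (And.intro h1 h3), dif_pos (And.intro h2 h4)]
    set e : E := ⟨(u, v), h1, h3⟩ with he
    set e' : E := ⟨(a, b), h2, h4⟩ with he'
    have hne2 : e ≠ e' := fun h => hne' (congrArg Subtype.val h)
    have k1 : y u ≤ max (y u) (y a) := le_max_left _ _
    have k2 : y a ≤ max (y u) (y a) := le_max_right _ _
    have k3 : max (y u) (y a) < y v := max_lt h3 h6
    have k4 : max (y u) (y a) < y b := max_lt h5 h4
    generalize max (y u) (y a) = k at k1 k2 k3 k4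
    have hxne : xi e k ≠ xi e' k := by
      intro hx
      have c1 := hxi e k k1 k3 ((k : ℝ) + 1 / 2) (by linarith) (by linarith)
      have c2 := hxi e' k k2 k4 ((k : ℝ) + 1 / 2) (by linarith) (by linarith)
      rw [← hx] at c2
      obtain ⟨w, -, -, hw⟩ := curve_curve hpl h1 h2 (hpair e e' hne2) c1 c2
      have := ((hB w _).1 hw).2
      simp only at this
      have h2 : ((2 * k + 1 : ℤ) : ℝ) = ((2 * y w : ℤ) : ℝ) := by push_cast; linarith
      have h2' : 2 * k + 1 = 2 * y w := by exact_mod_cast h2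
      omega
    rcases lt_or_gt_of_ne hxne with h | h
    · exact (hf2 (Sum.inr e) (Sum.inr e') k k1 k3 k2 k4 h).ne
    · exact (hf2 (Sum.inr e') (Sum.inr e) k k2 k4 k1 k3 h).ne'

/-- Nothing lies strictly between the endpoints of a horizontal edge. -/
lemma hor_between (hpl : D.IsPlanar) (hflat : D.IsFlat)
    (hmono : D.IsYMonotone)
    (y : V → ℤ) (hy : ∀ v, (D.box v).y1 = y v) {u v : V} (h : G.Adj u v) (huv : y u = y v)
    {x : ℝ} (h1 : (D.box u).x1 ≤ x) (h2 : x ≤ (D.box v).x1) :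
    (x, (y u : ℝ)) ∈ (D.box u).pts ∨ (x, (y u : ℝ)) ∈ D.curve u v ∨
    (x, (y u : ℝ)) ∈ D.curve v u ∨ (x, (y u : ℝ)) ∈ (D.box v).pts := by
  have hB := mem_box hflat hy
  have key : ∀ S : Set ℝ, S.OrdConnected →
      (∃ p, p ∈ S ∧ (D.box u).x1 ≤ p ∧ p ≤ (D.box u).x2) →
      (∃ p, p ∈ S ∧ (D.box v).x1 ≤ p ∧ p ≤ (D.box v).x2) →
      (x, (y u : ℝ)) ∈ (D.box u).pts ∨ x ∈ S ∨ (x, (y u : ℝ)) ∈ (D.box v).pts := by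
    rintro S hS ⟨p, hp, hp1, hp2⟩ ⟨q, hq, hq1, hq2⟩
    by_cases hx : x ≤ (D.box u).x2
    · exact Or.inl ((hB _ _).2 ⟨⟨h1, hx⟩, rfl⟩)
    · push Not at hx
      exact Or.inr (Or.inl (hS.out hp hq ⟨by linarith, by linarith⟩))
  have e1 := row_ends hpl hflat hy h
  have e2 := row_ends hpl hflat hy h.symm
  rw [← huv] at e1 e2
  rcases hmono u v h with hm | hm
  · have := key _ (slice_ordConnected _ hm (y u : ℝ)) e1.1 e1.2
    rcases this with h | h | h
    · exact Or.inl h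
    · exact Or.inr (Or.inl h)
    · exact Or.inr (Or.inr (Or.inr h))
  · have hm' : ((D.chain v u).map Prod.snd).IsChain (· ≤ ·) := by
      rw [D.chain_symm u v, List.map_reverse, List.isChain_reverse]
      exact hm
    have := key _ (slice_ordConnected _ hm' (y u : ℝ)) e2.2 e2.1
    rcases this with h | h | h
    · exact Or.inl h
    · exact Or.inr (Or.inr (Or.inl h))
    · exact Or.inr (Or.inr (Or.inr h))

lemma hor_vertex (hpl : D.IsPlanar) (hflat : D.IsFlat)
    (hmono : D.IsYMonotone)
    (y : V → ℤ) (hy : ∀ v, (D.box v).y1 = y v) {u v w : V} (h : G.Adj u v) (huv : y u = y v)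
    (hw : y w = y u) (hu : w ≠ u) (hv : w ≠ v) :
    (D.box w).x1 < (D.box u).x1 ∨ (D.box v).x1 < (D.box w).x1 := by
  by_contra hc
  push Not at hc
  have hm : ((D.box w).x1, (y u : ℝ)) ∈ (D.box w).pts :=
    (mem_box hflat hy w _).2 ⟨⟨le_rfl, (D.box w).hx⟩, by rw [hw]⟩
  rcases hor_between hpl hflat hmono y hy h huv hc.1 hc.2 with h' | h' | h' | h'
  · exact hu (box_eq hpl hm h')
  · rcases curve_box hpl h h' hm with e | e
    · exact hu e
    · exact hv e
  · rcases curve_box hpl h.symm h' hm with e | e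
    · exact hv e
    · exact hu e
  · exact hv (box_eq hpl hm h')

lemma hor_edge (hpl : D.IsPlanar) (hflat : D.IsFlat)
    (hmono : D.IsYMonotone)
    (y : V → ℤ) (hy : ∀ v, (D.box v).y1 = y v) {u v a b : V} (h : G.Adj u v) (huv : y u = y v)
    (hab : G.Adj a b) (h1 : y a < y u) (h2 : y u < y b) {x : ℝ}
    (hx : (x, (y u : ℝ)) ∈ D.curve a b) :
    x < (D.box u).x1 ∨ (D.box v).x1 < x := by
  by_contra hc
  push Not at hc
  have hB := mem_box hflat hy
  have hbox : ∀ w, (x, (y u : ℝ)) ∈ (D.box w).pts → y w = y u := by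
    intro w hw
    have : (y u : ℝ) = y w := ((hB w _).1 hw).2
    exact_mod_cast this.symm
  have hno : ∀ w, (w = a ∨ w = b) → (x, (y u : ℝ)) ∉ (D.box w).pts := by
    rintro w (rfl | rfl) hw <;> have := hbox _ hw <;> omega
  have hne : s(a, b) ≠ s(u, v) := by
    intro h
    rw [Sym2.eq_iff] at h
    rcases h with ⟨rfl, rfl⟩ | ⟨rfl, rfl⟩ <;> omega
  have hne' : s(a, b) ≠ s(v, u) := by
    rwa [Sym2.eq_swap (a := v)]
  rcases hor_between hpl hflat hmono y hy h huv hc.1 hc.2 with h' | h' | h' | h'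
  · exact hno u (curve_box hpl hab hx h') h'
  · obtain ⟨w, w1, -, w3⟩ := curve_curve hpl hab h hne hx h'
    exact hno w w1 w3
  · obtain ⟨w, w1, -, w3⟩ := curve_curve hpl hab h.symm hne' hx h'
    exact hno w w1 w3
  · exact hno v (curve_box hpl hab hx h') h'

end layout

section assemble

variable {V : Type} (G : SimpleGraph V) (y : V → ℤ) (x : V → ℝ) (X1 X2 : V → ℤ) (g : V → V → ℤ)

open Classical in
/-- x-coordinate of the attachment point at `u` of the edge `uv`. -/
noncomputable def ax (u v : V) : ℤ :=
  if y u < y v then g u v else if y v < y u then g v u else if x u < x v then X2 u else X1 u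

/-- The visibility representation. -/
noncomputable def newD (h0 : ∀ v, X1 v ≤ X2 v) : OrthDrawing G where
  box v := ⟨X1 v, X2 v, y v, y v, by exact_mod_cast h0 v, le_rfl⟩
  chain u v := [((ax y x X1 X2 g u v : ℝ), (y u : ℝ)), ((ax y x X1 X2 g v u : ℝ), (y v : ℝ))]
  chain_symm u v := rfl

lemma mem_newbox (h0 : ∀ v, X1 v ≤ X2 v) (w : V) (z : Pt) :
    z ∈ ((newD G y x X1 X2 g h0).box w).pts ↔
      ((X1 w : ℝ) ≤ z.1 ∧ z.1 ≤ X2 w) ∧ z.2 = y w := by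
  simp only [newD, Box.pts, Set.mem_prod, Set.mem_Icc]
  constructor
  · rintro ⟨h, h3, h4⟩; exact ⟨h, le_antisymm h4 h3⟩
  · rintro ⟨h, h3⟩; exact ⟨h, h3.ge, h3.le⟩

lemma newcurve (h0 : ∀ v, X1 v ≤ X2 v) (u v : V) :
    (newD G y x X1 X2 g h0).curve u v = segment ℝ
      ((ax y x X1 X2 g u v : ℝ), (y u : ℝ)) ((ax y x X1 X2 g v u : ℝ), (y v : ℝ)) := by
  simp only [OrthDrawing.curve, newD]
  rw [chainSet_cons, chainSet_single, Set.union_empty]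

lemma newcurve_symm (h0 : ∀ v, X1 v ≤ X2 v) (u v : V) :
    (newD G y x X1 X2 g h0).curve u v = (newD G y x X1 X2 g h0).curve v u := by
  rw [newcurve, newcurve, segment_symm]

lemma ax_up {u v : V} (h : y u < y v) : ax y x X1 X2 g u v = g u v ∧ ax y x X1 X2 g v u = g u v := by
  constructor
  · rw [ax, if_pos h]
  · rw [ax, if_neg (by omega), if_pos h]

lemma ax_right {u v : V} (h : y u = y v) (hx : x u < x v) :
    ax y x X1 X2 g u v = X2 u ∧ ax y x X1 X2 g v u = X1 v := by
  constructor
  · rw [ax, if_neg (by omega), if_neg (by omega), if_pos hx]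
  · rw [ax, if_neg (by omega), if_neg (by omega), if_neg hx.not_gt]

lemma curve_up (h0 : ∀ v, X1 v ≤ X2 v) {u v : V} (h : y u < y v) (z : Pt) :
    z ∈ (newD G y x X1 X2 g h0).curve u v ↔ z.1 = g u v ∧ (y u : ℝ) ≤ z.2 ∧ z.2 ≤ y v := by
  have hr : (y u : ℝ) ≤ y v := by exact_mod_cast h.le
  rw [newcurve, (ax_up y x X1 X2 g h).1, (ax_up y x X1 X2 g h).2, mem_segment_vert (by simp),
    Set.uIcc_of_le hr]
  rfl

lemma curve_right (h0 : ∀ v, X1 v ≤ X2 v) {u v : V} (h : y u = y v) (hx : x u < x v)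
    (hX : X2 u < X1 v) (z : Pt) :
    z ∈ (newD G y x X1 X2 g h0).curve u v ↔ z.2 = y u ∧ (X2 u : ℝ) ≤ z.1 ∧ z.1 ≤ X1 v := by
  have hr : (X2 u : ℝ) ≤ X1 v := by exact_mod_cast hX.le
  rw [newcurve, (ax_right y x X1 X2 g h hx).1, (ax_right y x X1 X2 g h hx).2,
    mem_segment_hor (by simp [h]), Set.uIcc_of_le hr]
  rfl

lemma assemble (h0 : ∀ v, X1 v ≤ X2 v)
    (h1 : ∀ u v, G.Adj u v → y u < y v →
        (X1 u ≤ g u v ∧ g u v ≤ X2 u) ∧ (X1 v ≤ g u v ∧ g u v ≤ X2 v))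
    (h2 : ∀ u v, y u = y v → x u < x v → X2 u < X1 v)
    (hx : ∀ u v, y u = y v → u ≠ v → x u ≠ x v)
    (h3 : ∀ u v w, G.Adj u v → y u < y w → y w < y v → g u v < X1 w ∨ X2 w < g u v)
    (h4 : ∀ u v a b, G.Adj u v → G.Adj a b → y u < y v → y a < y b → (u, v) ≠ (a, b) →
        y u < y b → y a < y v → g u v ≠ g a b)
    (h5 : ∀ u v w, G.Adj u v → y u = y v → y w = y u → x u < x v → w ≠ u → w ≠ v →
        x w < x u ∨ x v < x w)
    (h6 : ∀ u v a b, G.Adj u v → y u = y v → x u < x v → G.Adj a b → y a < y u → y u < y b →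
        g a b < X1 u ∨ X2 v < g a b) :
    (newD G y x X1 X2 g h0).IsPlanar := by
  set N := newD G y x X1 X2 g h0 with hN
  set P : V → V → Pt := fun u v => ((ax y x X1 X2 g u v : ℝ), (y u : ℝ)) with hP
  have hB : ∀ w z, z ∈ (N.box w).pts ↔ _ := mem_newbox G y x X1 X2 g h0
  have hor : ∀ u v, G.Adj u v → (y u < y v ∨ (y u = y v ∧ x u < x v)) ∨
      (y v < y u ∨ (y v = y u ∧ x v < x u)) := by
    intro u v h
    rcases lt_trichotomy (y u) (y v) with h' | h' | h'
    · exact Or.inl (Or.inl h')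
    · rcases lt_or_gt_of_ne (hx u v h' h.ne) with h'' | h''
      · exact Or.inl (Or.inr ⟨h', h''⟩)
      · exact Or.inr (Or.inr ⟨h'.symm, h''⟩)
    · exact Or.inr (Or.inl h')
  have hdisj : ∀ u v z, z ∈ (N.box u).pts → z ∈ (N.box v).pts → u = v := by
    intro u v z hu hv
    rw [hB] at hu hv
    by_contra hne
    have hy : y u = y v := by
      have := hu.2.symm.trans hv.2
      exact_mod_cast this
    rcases lt_or_gt_of_ne (hx u v hy hne) with h | h
    · have := h2 u v hy h
      have : (X2 u : ℝ) < X1 v := by exact_mod_cast this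
      linarith [hu.1.2, hv.1.1]
    · have := h2 v u hy.symm h
      have : (X2 v : ℝ) < X1 u := by exact_mod_cast this
      linarith [hv.1.2, hu.1.1]
  -- attachment points
  have hatt' : ∀ u v, G.Adj u v → (y u < y v ∨ (y u = y v ∧ x u < x v)) →
      P u v ∈ (N.box u).pts ∧ P v u ∈ (N.box v).pts := by
    intro u v h ho
    rw [hB, hB]
    simp only [hP]
    rcases ho with ho | ⟨ho, hxx⟩
    · rw [(ax_up y x X1 X2 g ho).1, (ax_up y x X1 X2 g ho).2]
      obtain ⟨⟨a, b⟩, c, d⟩ := h1 u v h ho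
      exact ⟨⟨⟨by exact_mod_cast a, by exact_mod_cast b⟩, trivial⟩,
        ⟨⟨by exact_mod_cast c, by exact_mod_cast d⟩, trivial⟩⟩
    · rw [(ax_right y x X1 X2 g ho hxx).1, (ax_right y x X1 X2 g ho hxx).2]
      exact ⟨⟨⟨by exact_mod_cast h0 u, le_rfl⟩, trivial⟩, ⟨⟨le_rfl, by exact_mod_cast h0 v⟩, trivial⟩⟩
  have hatt : ∀ u v, G.Adj u v → P u v ∈ (N.box u).pts := by
    intro u v h
    rcases hor u v h with ho | ho
    · exact (hatt' u v h ho).1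
    · exact (hatt' v u h.symm ho).2
  -- edges against boxes
  have hEB' : ∀ u v w z, G.Adj u v → (y u < y v ∨ (y u = y v ∧ x u < x v)) →
      z ∈ N.curve u v → z ∈ (N.box w).pts → (w = u ∧ z = P u v) ∨ (w = v ∧ z = P v u) := by
    intro u v w z h ho hz hw
    have hw' := (hB w z).1 hw
    rcases ho with ho | ⟨ho, hxx⟩
    · have hz' := (curve_up G y x X1 X2 g h0 ho z).1 hz
      have e1 : y u ≤ y w := by have := hw'.2 ▸ hz'.2.1; exact_mod_cast this
      have e2 : y w ≤ y v := by have := hw'.2 ▸ hz'.2.2; exact_mod_cast this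
      obtain ⟨c1, c2⟩ := ax_up y x X1 X2 g ho
      rcases e1.eq_or_lt with e1 | e1
      · have hzP : z = P u v := Prod.ext (by simp only [hP]; rw [c1, hz'.1])
          (by simp only [hP]; rw [hw'.2, e1])
        exact Or.inl ⟨hdisj _ _ z hw (hzP ▸ hatt u v h), hzP⟩
      rcases e2.eq_or_lt with e2 | e2
      · have hzP : z = P v u := Prod.ext (by simp only [hP]; rw [c2, hz'.1])
          (by simp only [hP]; rw [hw'.2, e2])
        exact Or.inr ⟨hdisj _ _ z hw (hzP ▸ hatt v u h.symm), hzP⟩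
      · exfalso
        have q := hw'.1
        rw [hz'.1] at q
        have q1 : X1 w ≤ g u v := by exact_mod_cast q.1
        have q2 : g u v ≤ X2 w := by exact_mod_cast q.2
        rcases h3 u v w h e1 e2 with h | h <;> omega
    · have hz' := (curve_right G y x X1 X2 g h0 ho hxx (h2 u v ho hxx) z).1 hz
      have e1 : y w = y u := by have := hw'.2.symm.trans hz'.1; exact_mod_cast this
      obtain ⟨c1, c2⟩ := ax_right y x X1 X2 g ho hxx
      by_cases wu : w = u
      · subst wu
        exact Or.inl ⟨rfl, Prod.ext (by simp only [hP]; rw [c1]; exact le_antisymm hw'.1.2 hz'.2.1)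
          (by simp only [hP]; rw [hw'.2])⟩
      by_cases wv : w = v
      · subst wv
        exact Or.inr ⟨rfl, Prod.ext (by simp only [hP]; rw [c2]; exact le_antisymm hz'.2.2 hw'.1.1)
          (by simp only [hP]; rw [hw'.2])⟩
      exfalso
      have r0 : (X1 u : ℝ) ≤ X2 u := by exact_mod_cast h0 u
      have r1 : (X1 v : ℝ) ≤ X2 v := by exact_mod_cast h0 v
      rcases h5 u v w h ho e1 hxx wu wv with h' | h'
      · have : (X2 w : ℝ) < X1 u := by exact_mod_cast h2 w u e1 h'
        linarith [hw'.1.2, hz'.2.1]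
      · have : (X2 v : ℝ) < X1 w := by exact_mod_cast h2 v w (by omega) h'
        linarith [hw'.1.1, hz'.2.2]
  have hEB : ∀ u v w z, G.Adj u v →
      z ∈ N.curve u v → z ∈ (N.box w).pts → (w = u ∧ z = P u v) ∨ (w = v ∧ z = P v u) := by
    intro u v w z h hz hw
    rcases hor u v h with ho | ho
    · exact hEB' u v w z h ho hz hw
    · have := hEB' v u w z h.symm ho (by rwa [hN, newcurve_symm, ← hN]) hw
      tauto
  -- a point of an up edge on the row of an end is an attachment point
  have hVend : ∀ a b z, y a < y b → z ∈ N.curve a b →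
      ((z.2 = y a → z = P a b) ∧ (z.2 = y b → z = P b a)) := by
    intro a b z hab hz
    obtain ⟨c1, c2⟩ := ax_up y x X1 X2 g hab
    have hz' := (curve_up G y x X1 X2 g h0 hab z).1 hz
    exact ⟨fun e => Prod.ext (by simp only [hP]; rw [c1, hz'.1]) e,
      fun e => Prod.ext (by simp only [hP]; rw [c2, hz'.1]) e⟩
  -- up edge against horizontal edge
  have hVH : ∀ u v a b z, G.Adj u v → G.Adj a b → (y u = y v ∧ x u < x v) → y a < y b →
      z ∈ N.curve u v → z ∈ N.curve a b →
      (z = P u v ∨ z = P v u) ∧ (z = P a b ∨ z = P b a) := by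
    intro u v a b z h h' ho ho' hz hz'
    have q := (curve_right G y x X1 X2 g h0 ho.1 ho.2 (h2 u v ho.1 ho.2) z).1 hz
    have q' := (curve_up G y x X1 X2 g h0 ho' z).1 hz'
    have e1 : y a ≤ y u := by have := q.1 ▸ q'.2.1; exact_mod_cast this
    have e2 : y u ≤ y b := by have := q.1 ▸ q'.2.2; exact_mod_cast this
    rcases e1.eq_or_lt with e1 | e1
    · have hzP := (hVend a b z ho' hz').1 (by rw [q.1, e1])
      have := hEB u v a z h hz (hzP ▸ hatt a b h')
      tauto
    rcases e2.eq_or_lt with e2 | e2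
    · have hzP := (hVend a b z ho' hz').2 (by rw [q.1, e2])
      have := hEB u v b z h hz (hzP ▸ hatt b a h'.symm)
      tauto
    exfalso
    obtain ⟨_, q1, q2⟩ := q
    rw [q'.1] at q1 q2
    have q1 : X2 u ≤ g a b := by exact_mod_cast q1
    have q2 : g a b ≤ X1 v := by exact_mod_cast q2
    have := h0 u
    have := h0 v
    rcases h6 u v a b h ho.1 ho.2 h' e1 e2 with h | h <;> omega
  have hHH : ∀ u v a b z, G.Adj u v → G.Adj a b → (y u = y v ∧ x u < x v) →
      (y a = y b ∧ x a < x b) → (u, v) ≠ (a, b) → x u ≤ x a →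
      z ∈ N.curve u v → z ∈ N.curve a b →
      (z = P u v ∨ z = P v u) ∧ (z = P a b ∨ z = P b a) := by
    intro u v a b z h h' ho ho' hne hxa hz hz'
    have q := (curve_right G y x X1 X2 g h0 ho.1 ho.2 (h2 u v ho.1 ho.2) z).1 hz
    have q' := (curve_right G y x X1 X2 g h0 ho'.1 ho'.2 (h2 a b ho'.1 ho'.2) z).1 hz'
    have e : y u = y a := by have := q.1.symm.trans q'.1; exact_mod_cast this
    by_cases hua : a = u
    · subst hua
      have hvb : v ≠ b := fun hh => hne (by rw [hh])
      exfalso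
      rcases h5 a v b h ho.1 ho'.1.symm ho.2 h'.ne' hvb.symm with hh | hh
      · linarith [ho'.2]
      · rcases h5 a b v h' ho'.1 ho.1.symm ho'.2 h.ne' hvb with hh' | hh'
        · linarith [ho.2]
        · linarith
    by_cases hva : a = v
    · subst hva
      have r : (X1 a : ℝ) ≤ X2 a := by exact_mod_cast h0 a
      have hm : z ∈ (N.box a).pts := (hB a z).2
        ⟨⟨by linarith [q'.2.1], by linarith [q.2.2]⟩, q'.1⟩
      have t1 := hEB u a a z h hz hm
      have t2 := hEB a b a z h' hz' hm
      tauto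
    exfalso
    rcases h5 u v a h ho.1 e.symm ho.2 hua hva with hh | hh
    · linarith
    · have r : (X1 v : ℝ) ≤ X2 v := by exact_mod_cast h0 v
      have r' : (X1 a : ℝ) ≤ X2 a := by exact_mod_cast h0 a
      have : (X2 v : ℝ) < X1 a := by exact_mod_cast h2 v a (by omega) hh
      linarith [q.2.2, q'.2.1]
  have hVV : ∀ u v a b z, G.Adj u v → G.Adj a b → y u < y v → y a < y b → (u, v) ≠ (a, b) →
      z ∈ N.curve u v → z ∈ N.curve a b →
      (z = P u v ∨ z = P v u) ∧ (z = P a b ∨ z = P b a) := by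
    intro u v a b z h h' ho ho' hne hz hz'
    have q := (curve_up G y x X1 X2 g h0 ho z).1 hz
    have q' := (curve_up G y x X1 X2 g h0 ho' z).1 hz'
    have e : g u v = g a b := by have := q.1.symm.trans q'.1; exact_mod_cast this
    have e1 : y u ≤ y b := by have := q.2.1.trans q'.2.2; exact_mod_cast this
    have e2 : y a ≤ y v := by have := q'.2.1.trans q.2.2; exact_mod_cast this
    have v1 := hVend u v z ho hz
    have v2 := hVend a b z ho' hz'
    rcases e1.eq_or_lt with e1 | e1
    · have hz2 : z.2 = y u := le_antisymm (by rw [e1]; exact q'.2.2) q.2.1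
      exact ⟨Or.inl (v1.1 hz2), Or.inr (v2.2 (by rw [hz2, e1]))⟩
    rcases e2.eq_or_lt with e2 | e2
    · have hz2 : z.2 = y a := le_antisymm (by rw [e2]; exact q.2.2) q'.2.1
      exact ⟨Or.inr (v1.2 (by rw [hz2, e2])), Or.inl (v2.1 hz2)⟩
    exact absurd e (h4 u v a b h h' ho ho' hne e1 e2)
  have hEE' : ∀ u v a b z, G.Adj u v → G.Adj a b → (y u < y v ∨ (y u = y v ∧ x u < x v)) →
      (y a < y b ∨ (y a = y b ∧ x a < x b)) → (u, v) ≠ (a, b) →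
      z ∈ N.curve u v → z ∈ N.curve a b →
      (z = P u v ∨ z = P v u) ∧ (z = P a b ∨ z = P b a) := by
    intro u v a b z h h' ho ho' hne hz hz'
    rcases ho with ho | ho <;> rcases ho' with ho' | ho'
    · exact hVV u v a b z h h' ho ho' hne hz hz'
    · exact (hVH a b u v z h' h ho' ho hz' hz).symm
    · exact hVH u v a b z h h' ho ho' hz hz'
    · rcases le_total (x u) (x a) with hh | hh
      · exact hHH u v a b z h h' ho ho' hne hh hz hz'
      · exact (hHH a b u v z h' h ho' ho hne.symm hh hz' hz).symm
  have hsym : ∀ u v, N.curve u v = N.curve v u := newcurve_symm G y x X1 X2 g h0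
  have hEE : ∀ u v a b z, G.Adj u v → G.Adj a b → s(u, v) ≠ s(a, b) →
      z ∈ N.curve u v → z ∈ N.curve a b →
      (z = P u v ∨ z = P v u) ∧ (z = P a b ∨ z = P b a) := by
    intro u v a b z h h' hne hz hz'
    have n1 : (u, v) ≠ (a, b) := fun e => hne (by simp only [Prod.mk.injEq] at e; rw [e.1, e.2])
    have n2 : (v, u) ≠ (a, b) := fun e => hne (by
      simp only [Prod.mk.injEq] at e; rw [e.1, e.2, Sym2.eq_swap])
    have n3 : (u, v) ≠ (b, a) := fun e => hne (by
      simp only [Prod.mk.injEq] at e; rw [e.1, e.2, Sym2.eq_swap])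
    have n4 : (v, u) ≠ (b, a) := fun e => hne (by simp only [Prod.mk.injEq] at e; rw [e.1, e.2])
    rcases hor u v h with ho | ho <;> rcases hor a b h' with ho' | ho'
    · exact hEE' u v a b z h h' ho ho' n1 hz hz'
    · have := hEE' u v b a z h h'.symm ho ho' n3 hz (hsym a b ▸ hz')
      tauto
    · have := hEE' v u a b z h.symm h' ho ho' n2 (hsym u v ▸ hz) hz'
      tauto
    · have := hEE' v u b a z h.symm h'.symm ho ho' n4 (hsym u v ▸ hz) (hsym a b ▸ hz')
      tauto
  have hch : ∀ u v, N.chain u v = [P u v, P v u] := fun _ _ => rfl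
  have hneP : ∀ u v, G.Adj u v → P u v ≠ P v u := by
    intro u v h he
    exact h.ne (hdisj u v _ (hatt u v h) (he ▸ hatt v u h.symm))
  have hortho : ∀ u v, G.Adj u v → (P u v).1 = (P v u).1 ∨ (P u v).2 = (P v u).2 := by
    intro u v h
    simp only [hP]
    rcases lt_trichotomy (y u) (y v) with h' | h' | h'
    · left; rw [(ax_up y x X1 X2 g h').1, (ax_up y x X1 X2 g h').2]
    · right; rw [h']
    · left; rw [(ax_up y x X1 X2 g h').1, (ax_up y x X1 X2 g h').2]
  refine ⟨?_, ?_, ?_, ?_, ?_⟩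
  · intro u v huv
    rw [Set.disjoint_left]
    intro z hu hv
    exact huv (hdisj u v z hu hv)
  · intro u v h
    rw [hch]
    refine ⟨⟨by simp, by simpa using hneP u v h, ?_⟩, ?_, ?_⟩
    · intro i j hij hi hj
      simp [chainSegs] at hi hj
      omega
    · intro s hs
      simp only [chainSegs, List.tail_cons, List.zip_cons_cons, List.zip_nil_right,
        List.mem_singleton] at hs
      rw [hs]
      exact hortho u v h
    · intro i hi
      simp at hi
  · intro u v h
    exact ⟨P u v, P v u, [], rfl, hatt u v h, hatt v u h.symm⟩
  · intro u v w h z hz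
    have := hEB u v w z h hz.1 hz.2
    simp only [hch, Set.mem_ofPred_eq, List.head?_cons, Option.some.injEq,
      List.getLast?_cons_cons, List.getLast?_singleton]
    rcases this with ⟨h1, h2⟩ | ⟨h1, h2⟩
    · exact Or.inl ⟨h1, h2.symm⟩
    · exact Or.inr ⟨h1, h2.symm⟩
  · intro u v a b h h' hne z hz
    have := hEE u v a b z h h' hne hz.1 hz.2
    simp only [hch, Set.mem_ofPred_eq, List.head?_cons, Option.some.injEq,
      List.getLast?_cons_cons, List.getLast?_singleton]
    exact ⟨this.1.imp Eq.symm Eq.symm, this.2.imp Eq.symm Eq.symm⟩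

end assemble

end FlatVR

open FlatVR

/-- Any planar flat y-monotone orthogonal drawing `D` of a finite
simple graph `G` can be transformed into a planar flat visibility representation `D'`
of `G` with the same y-coordinates and the same left-to-right order in each row;
in particular `D'` has the same height. -/
theorem flatYMonotoneOrth_to_flatVR {V : Type} [Fintype V] (G : SimpleGraph V)
    (D : OrthDrawing G) (hpl : D.IsPlanar) (hflat : D.IsFlat)
    (hmono : D.IsYMonotone) (hint : D.IntCoords) :
    ∃ D' : OrthDrawing G, D'.IsPlanar ∧ D'.IsFlat ∧ D'.IsVR ∧ D'.IntCoords ∧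
      (∀ v, (D'.box v).y1 = (D.box v).y1) ∧
      (∀ v w : V, (D.box v).y1 = (D.box w).y1 → (D.box v).x2 < (D.box w).x1 →
        (D'.box v).x2 < (D'.box w).x1) ∧
      (∀ h : ℕ, D.InHeight h ↔ D'.InHeight h) := by
  have hyex : ∀ v, ∃ k : ℤ, (D.box v).y1 = k := by
    intro v
    have : IsIntPt ((D.box v).x1, (D.box v).y1) := by
      apply hint
      refine Or.inl ?_
      simp only [Set.mem_iUnion]
      exact ⟨v, Or.inl rfl⟩
    exact this.2
  choose y hy using hyex
  obtain ⟨X1, X2, g, h0, h1, h2, h3, h4⟩ := layout hpl hflat hmono hint y hy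
  have hB := mem_box hflat hy
  have hx1 : ∀ w, ((D.box w).x1, (y w : ℝ)) ∈ (D.box w).pts := fun w =>
    (hB w _).2 ⟨⟨le_rfl, (D.box w).hx⟩, rfl⟩
  refine ⟨newD G y (fun v => (D.box v).x1) X1 X2 g h0, ?_, ?_, ?_, ?_, ?_, ?_, ?_⟩
  · apply assemble G y _ X1 X2 g h0 h1 h2
    · intro u v huv hne he
      apply hne
      have a := hx1 u
      have b := hx1 v
      rw [← he, ← huv] at b
      exact box_eq hpl a b
    · intro u v w h hu hv
      obtain ⟨x, hx, hl, hr⟩ := h3 u v w h hu hv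
      rcases lt_trichotomy x (D.box w).x1 with h' | h' | h'
      · exact Or.inl (hl w rfl h')
      · exfalso
        rw [h'] at hx
        rcases curve_box hpl h hx (hx1 w) with rfl | rfl <;> omega
      · exact Or.inr (hr w rfl h')
    · exact h4
    · intro u v w h huv hw _ hu hv
      exact hor_vertex hpl hflat hmono y hy h huv hw hu hv
    · intro u v a b h huv hlt hab ha hb
      obtain ⟨x, hx, hl, hr⟩ := h3 a b u hab ha hb
      rcases hor_edge hpl hflat hmono y hy h huv hab ha hb hx with h' | h'
      · exact Or.inl (hl u rfl h')
      · exact Or.inr (hr v huv.symm h')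
  · intro v; rfl
  · intro u v _; rfl
  · intro p hp
    rcases hp with hp | hp
    · simp only [Set.mem_iUnion] at hp
      obtain ⟨v, hp⟩ := hp
      rcases hp with rfl | rfl | rfl | rfl
      · exact ⟨⟨X1 v, rfl⟩, ⟨y v, rfl⟩⟩
      · exact ⟨⟨X1 v, rfl⟩, ⟨y v, rfl⟩⟩
      · exact ⟨⟨X2 v, rfl⟩, ⟨y v, rfl⟩⟩
      · exact ⟨⟨X2 v, rfl⟩, ⟨y v, rfl⟩⟩
    · simp only [Set.mem_iUnion] at hp
      obtain ⟨u, v, h, hp⟩ := hp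
      simp only [newD, Set.mem_ofPred_eq, List.mem_cons, List.not_mem_nil, or_false] at hp
      rcases hp with rfl | rfl
      · exact ⟨⟨_, rfl⟩, ⟨_, rfl⟩⟩
      · exact ⟨⟨_, rfl⟩, ⟨_, rfl⟩⟩
  · intro v; exact (hy v).symm
  · intro v w hvw hlt
    have e : y v = y w := by
      rw [hy, hy] at hvw
      exact_mod_cast hvw
    have := h2 v w e (lt_of_le_of_lt (D.box v).hx hlt)
    show (X2 v : ℝ) < X1 w
    exact_mod_cast this
  · intro n
    have e1 : D.InHeight n ↔ ∃ y0 : ℤ, ∀ v, (y0 : ℝ) ≤ y v ∧ (y v : ℝ) ≤ (y0 : ℝ) + (n : ℝ) - 1 := by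
      refine exists_congr fun y0 => ⟨fun h v => ?_, fun h p hp => ?_⟩
      · have := h ((D.box v).x1, (D.box v).y1) (by
          refine Or.inl ?_
          simp only [Set.mem_iUnion]
          exact ⟨v, Or.inl rfl⟩)
        rwa [hy] at this
      · rcases hp with hp | hp
        · simp only [Set.mem_iUnion] at hp
          obtain ⟨v, hp⟩ := hp
          have e := hflat v
          rcases hp with rfl | rfl | rfl | rfl
          · simp only [hy]; exact h v
          · simp only [← e, hy]; exact h v
          · simp only [hy]; exact h v
          · simp only [← e, hy]; exact h v
        · simp only [Set.mem_iUnion] at hp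
          obtain ⟨u, v, hadj, hp⟩ := hp
          have := chain_range hpl hflat hmono hy hadj hp
          exact ⟨(le_min (h u).1 (h v).1).trans this.1, this.2.trans (max_le (h u).2 (h v).2)⟩
    have e2 : (newD G y (fun v => (D.box v).x1) X1 X2 g h0).InHeight n ↔
        ∃ y0 : ℤ, ∀ v, (y0 : ℝ) ≤ y v ∧ (y v : ℝ) ≤ (y0 : ℝ) + (n : ℝ) - 1 := by
      refine exists_congr fun y0 => ⟨fun h v => ?_, fun h p hp => ?_⟩
      · exact h ((X1 v : ℝ), (y v : ℝ)) (by
          refine Or.inl ?_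
          simp only [Set.mem_iUnion]
          exact ⟨v, Or.inl rfl⟩)
      · rcases hp with hp | hp
        · simp only [Set.mem_iUnion] at hp
          obtain ⟨v, hp⟩ := hp
          rcases hp with rfl | rfl | rfl | rfl <;> exact h v
        · simp only [Set.mem_iUnion] at hp
          obtain ⟨u, v, hadj, hp⟩ := hp
          simp only [newD, Set.mem_ofPred_eq, List.mem_cons, List.not_mem_nil, or_false] at hp
          rcases hp with rfl | rfl
          · exact h u
          · exact h v
    rw [e1, e2]
end

section
/- Let Γ be a poly-line drawing of a finite simple planar graph G. Then there exists a flat orthogonal drawing Γ' of G with the same y-coordinates as Γ and the same left-to-right order in each row; moreover, if Γ is y-monotone then Γ' is y-monotone. In particular, Γ' has the same height as Γ. -/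
open Set

/-! ### Part 1: polygonal chains, recursively -/

/-- Trace of a chain. -/
def tr : List Pt → Set Pt
  | [] => ∅
  | [a] => {a}
  | a :: b :: l => segment ℝ a b ∪ tr (b :: l)

/-- Recursive simplicity of a chain. -/
def Smp : List Pt → Prop
  | [] => True
  | [_] => True
  | a :: b :: l => a ≠ b ∧ segment ℝ a b ∩ tr (b :: l) ⊆ {b} ∧ Smp (b :: l)

theorem mem_tr_head (q : Pt) (l : List Pt) : q ∈ tr (q :: l) := by
  cases l with
  | nil => simp [tr]
  | cons b l => exact Or.inl (left_mem_segment ℝ q b)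

theorem tr_cons_subset (q : Pt) (l : List Pt) : tr l ⊆ tr (q :: l) := by
  cases l with
  | nil => simp [tr]
  | cons b l => exact subset_union_right

theorem mem_tr_of_mem {l : List Pt} {x : Pt} (h : x ∈ l) : x ∈ tr l := by
  induction l with
  | nil => simp at h
  | cons a l ih =>
    rcases List.mem_cons.1 h with rfl | h
    · exact mem_tr_head _ _
    · exact tr_cons_subset _ _ (ih h)

theorem tr_join (m : List Pt) (q : Pt) (l : List Pt) :
    tr (m ++ q :: l) = tr (m ++ [q]) ∪ tr (q :: l) := by
  induction m with
  | nil =>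
    have := mem_tr_head q l
    simp [tr, this]
  | cons a m ih =>
    cases m with
    | nil =>
      have := mem_tr_head q l
      simp only [List.cons_append, List.nil_append, tr, union_assoc]
      rw [singleton_union, insert_eq_of_mem this]
    | cons b m =>
      simp only [List.cons_append, tr] at ih ⊢
      rw [ih, union_assoc]

theorem smp_join (m : List Pt) (q : Pt) (l : List Pt) (h1 : Smp (m ++ [q])) (h2 : Smp (q :: l))
    (h : tr (m ++ [q]) ∩ tr (q :: l) ⊆ {q}) : Smp (m ++ q :: l) := by
  induction m with
  | nil => exact h2
  | cons a m ih =>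
    cases m with
    | nil =>
      simp only [List.cons_append, List.nil_append, Smp, tr] at h1 h ⊢
      refine ⟨h1.1, ?_, h2⟩
      exact fun z hz => h ⟨Or.inl hz.1, hz.2⟩
    | cons b m =>
      have e := tr_join (b :: m) q l
      simp only [List.cons_append, Smp, tr] at h1 h ih e ⊢
      have ih' := ih h1.2.2 (fun z hz => h ⟨Or.inr hz.1, hz.2⟩)
      refine ⟨h1.1, ?_, ih'⟩
      rintro z ⟨hz1, hz2⟩
      rw [e] at hz2
      rcases hz2 with hz2 | hz2
      · exact h1.2.1 ⟨hz1, hz2⟩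
      · have hq : z = q := h ⟨Or.inl hz1, hz2⟩
        refine h1.2.1 ⟨hz1, ?_⟩
        rw [hq]
        exact mem_tr_of_mem (by simp)

theorem tr_reverse (l : List Pt) : tr l.reverse = tr l := by
  induction l with
  | nil => rfl
  | cons a l ih =>
    cases l with
    | nil => rfl
    | cons b l =>
      have : (a :: b :: l).reverse = l.reverse ++ b :: [a] := by simp
      rw [this, tr_join]
      have e2 : l.reverse ++ [b] = (b :: l).reverse := by simp
      rw [e2, ih]
      have hb := mem_tr_head b l
      simp only [tr, segment_symm ℝ b a]
      ext z
      constructor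
      · rintro (h | h | h)
        · exact Or.inr h
        · exact Or.inl h
        · rw [mem_singleton_iff.1 h]; exact Or.inl (left_mem_segment ℝ a b)
      · rintro (h | h)
        · exact Or.inr (Or.inl h)
        · exact Or.inl h

theorem smp_reverse (l : List Pt) (h : Smp l) : Smp l.reverse := by
  induction l with
  | nil => trivial
  | cons a l ih =>
    cases l with
    | nil => trivial
    | cons b l =>
      have e1 : (a :: b :: l).reverse = l.reverse ++ b :: [a] := by simp
      have e2 : l.reverse ++ [b] = (b :: l).reverse := by simp
      rw [e1]
      apply smp_join
      · rw [e2]; exact ih h.2.2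
      · refine ⟨h.1.symm, ?_, trivial⟩
        simp [tr]
      · rw [e2, tr_reverse]
        rintro z ⟨h1, h2⟩
        simp only [tr, segment_symm ℝ b a] at h2
        rcases h2 with h2 | h2
        · exact h.2.1 ⟨h2, h1⟩
        · rw [mem_singleton_iff.1 h2] at h1 ⊢
          exact h.2.1 ⟨left_mem_segment ℝ a b, h1⟩

theorem chainSegs_cons (a b : Pt) (l : List Pt) :
    chainSegs (a :: b :: l) = (a, b) :: chainSegs (b :: l) := rfl

theorem chainSet_eq_tr (l : List Pt) (h : 2 ≤ l.length) : chainSet l = tr l := by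
  induction l with
  | nil => simp at h
  | cons a l ih =>
    cases l with
    | nil => simp at h
    | cons b l =>
      have : chainSet (a :: b :: l) = segment ℝ a b ∪ chainSet (b :: l) := by
        simp [chainSet, chainSegs_cons]
      rw [this]
      cases l with
      | nil =>
        simp only [chainSet, chainSegs, tr]
        simp [right_mem_segment]
      | cons c l => rw [ih (by simp)]; rfl

theorem seg_subset_tr {l : List Pt} {s : Pt × Pt} (h : s ∈ chainSegs l) :
    segment ℝ s.1 s.2 ⊆ tr l := by
  induction l with
  | nil => simp [chainSegs] at h
  | cons a l ih =>
    cases l with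
    | nil => simp [chainSegs] at h
    | cons b l =>
      rw [chainSegs_cons] at h
      rcases List.mem_cons.1 h with rfl | h
      · exact subset_union_left
      · exact (ih h).trans subset_union_right

theorem smp_nodup (l : List Pt) (h : Smp l) : l.Nodup := by
  induction l with
  | nil => simp
  | cons a l ih =>
    cases l with
    | nil => simp
    | cons b l =>
      refine List.nodup_cons.2 ⟨fun hm => h.1 ?_, ih h.2.2⟩
      exact h.2.1 ⟨left_mem_segment ℝ a b, mem_tr_of_mem hm⟩

theorem smp_simple (l : List Pt) (h : Smp l) (h2 : 2 ≤ l.length) : IsSimpleChain l := by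
  refine ⟨h2, smp_nodup l h, ?_⟩
  clear h2
  induction l with
  | nil => intro i j _ hi; simp [chainSegs] at hi
  | cons a l ih =>
    cases l with
    | nil => intro i j _ hi; simp [chainSegs] at hi
    | cons b l =>
      intro i j hij hi hj
      obtain ⟨j, rfl⟩ : ∃ j', j = j' + 1 := ⟨j - 1, by omega⟩
      have hj' : j < (chainSegs (b :: l)).length := by
        simpa [chainSegs_cons] using hj
      cases i with
      | succ i =>
        have := ih h.2.2 i j (by omega) (by omega) hj'
        simpa [chainSegs_cons] using this
      | zero =>
        have key : segment ℝ a b ∩ segment ℝ ((chainSegs (b :: l)).get ⟨j, hj'⟩).1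
            ((chainSegs (b :: l)).get ⟨j, hj'⟩).2 ⊆
            if j + 1 = 0 + 1 then {((chainSegs (b :: l)).get ⟨j, hj'⟩).1} else ∅ := by
          rintro z ⟨hz1, hz2⟩
          have hzt := seg_subset_tr (List.get_mem (chainSegs (b :: l)) ⟨j, hj'⟩) hz2
          have hzb : z = b := h.2.1 ⟨hz1, hzt⟩
          cases l with
          | nil => simp [chainSegs] at hj'
          | cons c l =>
            cases j with
            | zero => simpa [chainSegs_cons] using hzb
            | succ j =>
              exfalso
              have hj'' : j < (chainSegs (c :: l)).length := by
                simpa [chainSegs_cons] using hj'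
              have hz3 : z ∈ segment ℝ ((chainSegs (c :: l)).get ⟨j, hj''⟩).1
                ((chainSegs (c :: l)).get ⟨j, hj''⟩).2 := by
                simpa [chainSegs_cons] using hz2
              have hzt := seg_subset_tr (List.get_mem (chainSegs (c :: l)) ⟨j, hj''⟩) hz3
              rw [hzb] at hzt
              exact h.2.2.1 (h.2.2.2.1 ⟨left_mem_segment ℝ b c, hzt⟩)
        simpa [chainSegs_cons] using key

/-- Axis-parallel relation. -/
def AxP (a b : Pt) : Prop := a.1 = b.1 ∨ a.2 = b.2

theorem AxP.symm {a b : Pt} (h : AxP a b) : AxP b a := h.imp Eq.symm Eq.symm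

/-- Simple orthogonal chain with integer corners from `p` to `q`. -/
structure PL (p q : Pt) (l : List Pt) : Prop where
  head : l.head? = some p
  last : l.getLast? = some q
  smp : Smp l
  orth : l.IsChain AxP
  int : ∀ x ∈ l, IsIntPt x

def YUp (l : List Pt) : Prop := l.IsChain (fun a b => a.2 ≤ b.2)
def YDn (l : List Pt) : Prop := l.IsChain (fun a b => b.2 ≤ a.2)

/-- Existence of an orthogonal path with given trace. -/
def Pth (p q : Pt) (T : Set Pt) (u d : Prop) : Prop :=
  ∃ l, PL p q l ∧ tr l = T ∧ (u → YUp l) ∧ (d → YDn l)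

theorem Pth.weaken {p q : Pt} {T : Set Pt} {u d u' d' : Prop} (h : Pth p q T u d)
    (hu : u' → u) (hd : d' → d) : Pth p q T u' d' := by
  obtain ⟨l, h1, h2, h3, h4⟩ := h
  exact ⟨l, h1, h2, h3 ∘ hu, h4 ∘ hd⟩

theorem Pth.join {p q r : Pt} {T T' : Set Pt} {u d : Prop} (h : Pth p q T u d)
    (h' : Pth q r T' u d) (hT : T ∩ T' ⊆ {q}) : Pth p r (T ∪ T') u d := by
  obtain ⟨l, h1, rfl, h3, h4⟩ := h
  obtain ⟨l', h1', rfl, h3', h4'⟩ := h'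
  obtain ⟨m, rfl⟩ := List.getLast?_eq_some_iff.1 h1.last
  obtain ⟨m', rfl⟩ := List.head?_eq_some_iff.1 h1'.head
  refine ⟨m ++ q :: m', ⟨?_, ?_, ?_, ?_, ?_⟩, tr_join _ _ _, ?_, ?_⟩
  · have := h1.head
    cases m <;> simpa using this
  · have := h1'.last
    simpa [List.getLast?_append] using this
  · exact smp_join _ _ _ h1.smp h1'.smp hT
  · exact List.isChain_split.2 ⟨h1.orth, h1'.orth⟩
  · intro x hx
    rcases List.mem_append.1 hx with hx | hx
    · exact h1.int x (List.mem_append_left _ hx)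
    · exact h1'.int x hx
  · exact fun hu => List.isChain_split.2 ⟨h3 hu, h3' hu⟩
  · exact fun hu => List.isChain_split.2 ⟨h4 hu, h4' hu⟩

theorem PL.reverse {p q : Pt} {l : List Pt} (h : PL p q l) : PL q p l.reverse := by
  refine ⟨?_, ?_, smp_reverse _ h.smp, ?_, ?_⟩
  · rw [List.head?_reverse, h.last]
  · rw [List.getLast?_reverse, h.head]
  · rw [List.isChain_reverse]
    exact h.orth.imp (fun _ _ => AxP.symm)
  · intro x hx; exact h.int x (List.mem_reverse.1 hx)

theorem Pth.reverse {p q : Pt} {T : Set Pt} {u d : Prop} (h : Pth p q T u d) :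
    Pth q p T d u := by
  obtain ⟨l, h1, rfl, h3, h4⟩ := h
  refine ⟨l.reverse, h1.reverse, tr_reverse l, fun hd => ?_, fun hu => ?_⟩
  · unfold YUp; rw [List.isChain_reverse]; exact h4 hd
  · unfold YDn; rw [List.isChain_reverse]; exact h3 hu

theorem pth_seg {p q : Pt} (hp : IsIntPt p) (hq : IsIntPt q) (h : AxP p q) :
    Pth p q (segment ℝ p q) (p.2 ≤ q.2) (q.2 ≤ p.2) := by
  by_cases e : p = q
  · subst e
    refine ⟨[p], ⟨rfl, rfl, trivial, by simp, by simpa using hp⟩, by simp [tr], ?_, ?_⟩ <;>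
      simp [YUp, YDn]
  · refine ⟨[p, q], ⟨rfl, rfl, ⟨e, by simp [tr], trivial⟩, by simpa using h,
      by simp [hp, hq]⟩, ?_, ?_, ?_⟩
    · simp [tr, right_mem_segment]
    · simp [YUp]
    · simp [YDn]

theorem mem_hseg {y x x' : ℝ} {z : Pt} :
    z ∈ segment ℝ ((x, y) : Pt) (x', y) ↔ z.2 = y ∧ z.1 ∈ Set.uIcc x x' := by
  rw [← Prod.image_mk_segment_left, segment_eq_uIcc]
  constructor
  · rintro ⟨w, hw, rfl⟩; exact ⟨rfl, hw⟩
  · rintro ⟨h1, h2⟩; exact ⟨z.1, h2, by rw [← h1]⟩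

theorem mem_vseg {x y y' : ℝ} {z : Pt} :
    z ∈ segment ℝ ((x, y) : Pt) (x, y') ↔ z.1 = x ∧ z.2 ∈ Set.uIcc y y' := by
  rw [← Prod.image_mk_segment_right, segment_eq_uIcc]
  constructor
  · rintro ⟨w, hw, rfl⟩; exact ⟨rfl, hw⟩
  · rintro ⟨h1, h2⟩; exact ⟨z.2, h2, by rw [← h1]⟩


/-! ### Part 2: assigning integer columns layer by layer -/

/-- The order constraints on layers below `N`. -/
def LGood {α κ : Type} [LinearOrder κ] (T : Finset α) (L : α → ℤ) (key : α → κ)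
    (b t : α → ℝ) (top : α → Prop) (N : ℤ) (X : α → ℤ) : Prop :=
  (∀ a ∈ T, ∀ a' ∈ T, L a < N → L a = L a' → key a < key a' → X a < X a') ∧
  (∀ a ∈ T, ∀ a' ∈ T, L a' < N → L a' = L a + 1 → top a →
    (t a < b a' → X a < X a') ∧ (b a' < t a → X a' < X a))

theorem layer_step {α κ : Type} [LinearOrder κ] (T : Finset α) (L : α → ℤ) (key : α → κ)
    (b t : α → ℝ) (top : α → Prop)
    (hb : ∀ a ∈ T, ∀ a' ∈ T, L a = L a' → key a ≤ key a' → b a ≤ b a')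
    (ht : ∀ a ∈ T, ∀ a' ∈ T, L a = L a' → top a → top a' → key a ≤ key a' → t a ≤ t a')
    (N : ℤ) (X : α → ℤ) (hX : LGood T L key b t top N X) :
    ∃ X', LGood T L key b t top (N + 1) X' := by
  classical
  obtain ⟨M, hM⟩ : ∃ M : ℤ, ∀ a ∈ T, M < X a := by
    obtain ⟨M, hM⟩ := (T.image X).bddBelow
    exact ⟨M - 1, fun a ha => by
      have := hM (Finset.mem_coe.2 (Finset.mem_image_of_mem X ha)); omega⟩
  let A : ℝ → Finset ℤ := fun y =>
    insert M ((T.filter (fun a => L a + 1 = N ∧ top a ∧ t a < y)).image X)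
  have hA : ∀ y, (A y).Nonempty := fun y => ⟨M, Finset.mem_insert_self _ _⟩
  let g : ℝ → ℤ := fun y => (A y).max' (hA y)
  have gmono : ∀ y y', y ≤ y' → g y ≤ g y' := by
    intro y y' h
    apply Finset.max'_le
    intro z hz
    apply Finset.le_max'
    rcases Finset.mem_insert.1 hz with rfl | hz
    · exact Finset.mem_insert_self _ _
    · apply Finset.mem_insert_of_mem
      obtain ⟨a, ha, rfl⟩ := Finset.mem_image.1 hz
      apply Finset.mem_image_of_mem
      simp only [Finset.mem_filter] at ha ⊢
      exact ⟨ha.1, ha.2.1, ha.2.2.1, ha.2.2.2.trans_le h⟩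
  have g1 : ∀ a ∈ T, L a + 1 = N → top a → ∀ y, t a < y → X a ≤ g y := by
    intro a ha hl hta y hy
    apply Finset.le_max'
    apply Finset.mem_insert_of_mem
    apply Finset.mem_image_of_mem
    simp only [Finset.mem_filter]
    exact ⟨ha, hl, hta, hy⟩
  have g2 : ∀ a ∈ T, L a + 1 = N → top a → ∀ y, y < t a → g y < X a := by
    intro a ha hl hta y hy
    rw [Finset.max'_lt_iff]
    intro z hz
    rcases Finset.mem_insert.1 hz with rfl | hz
    · exact hM a ha
    · obtain ⟨c, hc, rfl⟩ := Finset.mem_image.1 hz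
      simp only [Finset.mem_filter] at hc
      refine hX.1 c hc.1 a ha (by omega) (by omega) ?_
      by_contra hk
      have := ht a ha c hc.1 (by omega) hta hc.2.2.1 (not_lt.1 hk)
      linarith [hc.2.2.2]
  let r : α → ℤ := fun a => ((T.filter (fun c => L c = N ∧ key c < key a)).card : ℤ) + 1
  let W : ℤ := (T.card : ℤ) + 2
  have r0 : ∀ a, 0 < r a := fun a => by simp only [r]; positivity
  have r1 : ∀ a, r a < W := fun a => by
    simp only [r, W]
    have := Finset.card_filter_le T (fun c => L c = N ∧ key c < key a)
    omega
  have r2 : ∀ a ∈ T, ∀ a' ∈ T, L a = N → key a < key a' → r a < r a' := by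
    intro a ha a' ha' hl hk
    simp only [r]
    have : (T.filter (fun c => L c = N ∧ key c < key a)).card <
        (T.filter (fun c => L c = N ∧ key c < key a')).card := by
      apply Finset.card_lt_card
      rw [Finset.ssubset_iff_of_subset]
      · refine ⟨a, ?_, ?_⟩
        · simp [ha, hl, hk]
        · simp
      · intro c hc
        simp only [Finset.mem_filter] at hc ⊢
        exact ⟨hc.1, hc.2.1, hc.2.2.trans hk⟩
    omega
  have W0 : 0 < W := by simp only [W]; positivity
  refine ⟨fun a => if L a < N then W * X a else W * g (b a) + r a, ?_, ?_⟩
  · intro a ha a' ha' hl he hk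
    by_cases h : L a < N
    · have h' : L a' < N := by omega
      simp only [h, h', if_true]
      exact mul_lt_mul_of_pos_left (hX.1 a ha a' ha' h he hk) W0
    · have h' : ¬ L a' < N := by omega
      simp only [h, h', if_false]
      have e1 := gmono _ _ (hb a ha a' ha' he hk.le)
      have e2 := r2 a ha a' ha' (by omega) hk
      nlinarith
  · intro a ha a' ha' hl he hta
    have h : L a < N := by omega
    by_cases h' : L a' < N
    · simp only [h, h', if_true]
      have := hX.2 a ha a' ha' h' he hta
      exact ⟨fun q => mul_lt_mul_of_pos_left (this.1 q) W0,
        fun q => mul_lt_mul_of_pos_left (this.2 q) W0⟩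
    · simp only [h, h', if_true, if_false]
      refine ⟨fun q => ?_, fun q => ?_⟩
      · have e1 := g1 a ha (by omega) hta _ q
        have := r0 a'
        nlinarith
      · have e1 : g (b a') + 1 ≤ X a := g2 a ha (by omega) hta _ q
        have := r1 a'
        nlinarith

theorem layer_exists {α κ : Type} [LinearOrder κ] (T : Finset α) (L : α → ℤ) (key : α → κ)
    (b t : α → ℝ) (top : α → Prop)
    (hb : ∀ a ∈ T, ∀ a' ∈ T, L a = L a' → key a ≤ key a' → b a ≤ b a')
    (ht : ∀ a ∈ T, ∀ a' ∈ T, L a = L a' → top a → top a' → key a ≤ key a' → t a ≤ t a') :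
    ∃ X : α → ℤ,
      (∀ a ∈ T, ∀ a' ∈ T, L a = L a' → key a < key a' → X a < X a') ∧
      (∀ a ∈ T, ∀ a' ∈ T, L a' = L a + 1 → top a →
        (t a < b a' → X a < X a') ∧ (b a' < t a → X a' < X a)) := by
  classical
  obtain ⟨m, hm⟩ := (T.image L).bddBelow
  obtain ⟨M, hM⟩ := (T.image L).bddAbove
  have hm' : ∀ a ∈ T, m ≤ L a := fun a ha => hm (Finset.mem_coe.2 (Finset.mem_image_of_mem L ha))
  have hM' : ∀ a ∈ T, L a ≤ M := fun a ha => hM (Finset.mem_coe.2 (Finset.mem_image_of_mem L ha))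
  have key' : ∀ n : ℕ, ∃ X, LGood T L key b t top (m + n) X := by
    intro n
    induction n with
    | zero =>
      refine ⟨fun _ => 0, ?_, ?_⟩
      · intro a ha a' ha' h; have := hm' a ha; simp at h; omega
      · intro a ha a' ha' h; have := hm' a' ha'; simp at h; omega
    | succ n ih =>
      obtain ⟨X, hX⟩ := ih
      obtain ⟨X', hX'⟩ := layer_step T L key b t top hb ht _ X hX
      exact ⟨X', by push_cast; rw [← add_assoc]; exact hX'⟩
  obtain ⟨X, hX⟩ := key' (M - m + 1).toNat
  have hN : M < m + ((M - m + 1).toNat : ℤ) := by omega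
  refine ⟨X, fun a ha a' ha' => hX.1 a ha a' ha' ?_, fun a ha a' ha' => hX.2 a ha a' ha' ?_⟩
  · exact (hM' a ha).trans_lt hN
  · exact (hM' a' ha').trans_lt hN


/-! ### Part 3: columns for a straight-line system -/

/-- x-coordinate of the line through `a`, `c` at height `y`. -/
noncomputable def xAt (a c : Pt) (y : ℝ) : ℝ := a.1 + (y - a.2) / (c.2 - a.2) * (c.1 - a.1)

theorem xAt_self (a : Pt) (y : ℝ) : xAt a a y = a.1 := by simp [xAt]

theorem xAt_left (a c : Pt) : xAt a c a.2 = a.1 := by simp [xAt]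

theorem xAt_right (a c : Pt) (h : a.2 < c.2) : xAt a c c.2 = c.1 := by
  have : c.2 - a.2 ≠ 0 := by linarith
  simp [xAt, div_self this]

theorem xAt_affine (a c : Pt) (k r : ℝ) :
    xAt a c (k + r) = (1 - r) * xAt a c k + r * xAt a c (k + 1) := by
  unfold xAt; ring

theorem xAt_mem (a c : Pt) (y : ℝ) (h : a.2 < c.2) (h1 : a.2 ≤ y) (h2 : y ≤ c.2) :
    ((xAt a c y, y) : Pt) ∈ segment ℝ a c := by
  have hpos : 0 < c.2 - a.2 := by linarith
  rw [segment_eq_image]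
  refine ⟨(y - a.2) / (c.2 - a.2), ⟨by apply div_nonneg <;> linarith, ?_⟩, ?_⟩
  · rw [div_le_one hpos]; linarith
  · ext
    · simp [xAt]; ring
    · simp; field_simp; ring

/-- A finite planar straight-line system with integer points. -/
structure SL (P : Set Pt) (S : Pt → Pt → Prop) : Prop where
  fin : P.Finite
  int : ∀ p ∈ P, IsIntPt p
  symm : ∀ a c, S a c → S c a
  ne : ∀ a c, S a c → a ≠ c
  mem : ∀ a c, S a c → a ∈ P
  I1 : ∀ a c w, S a c → w ∈ P → w ∈ segment ℝ a c → w = a ∨ w = c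
  I2 : ∀ a c a' c' z, S a c → S a' c' → z ∈ segment ℝ a c → z ∈ segment ℝ a' c' →
    (a = a' ∧ c = c') ∨ (a = c' ∧ c = a') ∨ ((z = a ∨ z = c) ∧ (z = a' ∨ z = c'))

theorem SL.mem' {P : Set Pt} {S : Pt → Pt → Prop} (h : SL P S) {a c : Pt} (hs : S a c) : c ∈ P :=
  h.mem _ _ (h.symm _ _ hs)

/-- No common point strictly between two rows. -/
theorem SL.strip {P : Set Pt} {S : Pt → Pt → Prop} (h : SL P S) {a c a' c' z : Pt} (hs : S a c)
    (hs' : S a' c') (k : ℤ) (hk : (k : ℝ) < z.2) (hk' : z.2 < k + 1)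
    (hz : z ∈ segment ℝ a c) (hz' : z ∈ segment ℝ a' c') :
    (a = a' ∧ c = c') ∨ (a = c' ∧ c = a') := by
  rcases h.I2 _ _ _ _ z hs hs' hz hz' with h1 | h1 | ⟨h1, -⟩
  · exact Or.inl h1
  · exact Or.inr h1
  · exfalso
    have : z ∈ P := by
      rcases h1 with rfl | rfl
      · exact h.mem _ _ hs
      · exact h.mem' hs
    obtain ⟨-, n, hn⟩ := h.int z this
    rw [hn] at hk hk'
    have h1 : k < n := by exact_mod_cast hk
    have h2 : n < k + 1 := by exact_mod_cast hk'
    omega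

theorem SL.noncross {P : Set Pt} {S : Pt → Pt → Prop} (h : SL P S) {a c a' c' : Pt} (hs : S a c)
    (hs' : S a' c') (k : ℤ) (h1 : a.2 ≤ k) (h2 : (k : ℝ) + 1 ≤ c.2) (h1' : a'.2 ≤ k)
    (h2' : (k : ℝ) + 1 ≤ c'.2) (hb : xAt a c k < xAt a' c' k) :
    xAt a c (k + 1) ≤ xAt a' c' (k + 1) := by
  by_contra ht
  push Not at ht
  set b := xAt a c k
  set b' := xAt a' c' k
  set t := xAt a c (k + 1)
  set t' := xAt a' c' (k + 1)
  have hd : 0 < (b' - b) + (t - t') := by linarith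
  set r := (b' - b) / ((b' - b) + (t - t')) with hr
  have hr0 : 0 < r := div_pos (by linarith) hd
  have hr1 : r < 1 := by rw [hr, div_lt_one hd]; linarith
  have he : xAt a c (k + r) = xAt a' c' (k + r) := by
    rw [xAt_affine a c k r, xAt_affine a' c' k r]
    have : r * ((b' - b) + (t - t')) = b' - b := by rw [hr]; field_simp
    change (1 - r) * b + r * t = (1 - r) * b' + r * t'
    linarith
  have m1 := xAt_mem a c (k + r) (by linarith) (by linarith) (by linarith)
  have m2 := xAt_mem a' c' (k + r) (by linarith) (by linarith) (by linarith)
  rw [← he] at m2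
  rcases h.strip hs hs' k (by simpa using hr0) (by simpa using hr1) m1 m2 with ⟨rfl, rfl⟩ | ⟨rfl, rfl⟩
  · exact lt_irrefl _ hb
  · linarith

/-- Column `ξ` belongs to position `x` in row `k`. -/
def RMem (P : Set Pt) (S : Pt → Pt → Prop) (X : Pt → Pt → ℤ → ℤ) (k : ℤ) (x : ℝ) (ξ : ℤ) : Prop :=
  (∃ p ∈ P, p.2 = k ∧ p.1 = x ∧ ξ = X p p k) ∨
  (∃ a c, S a c ∧ a.2 ≤ k ∧ (k : ℝ) + 1 ≤ c.2 ∧ xAt a c k = x ∧ ξ = X a c k) ∨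
  (∃ a c, S a c ∧ a.2 + 1 ≤ k ∧ (k : ℝ) ≤ c.2 ∧ xAt a c k = x ∧ ξ = X a c (k - 1))

/-- The items to be placed. -/
def Item (P : Set Pt) (S : Pt → Pt → Prop) (i : Pt × Pt × ℤ) : Prop :=
  (i.1 = i.2.1 ∧ i.1 ∈ P ∧ i.1.2 = i.2.2) ∨
    (S i.1 i.2.1 ∧ i.1.2 ≤ i.2.2 ∧ (i.2.2 : ℝ) + 1 ≤ i.2.1.2)

theorem item_finite {P : Set Pt} {S : Pt → Pt → Prop} (h : SL P S) : {i | Item P S i}.Finite := by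
  obtain ⟨lo, hlo⟩ := (h.fin.image Prod.snd).bddBelow
  obtain ⟨hi, hhi⟩ := (h.fin.image Prod.snd).bddAbove
  refine (h.fin.prod (h.fin.prod (Set.finite_Icc ⌊lo⌋ ⌈hi⌉))).subset ?_
  rintro ⟨a, c, k⟩ hi'
  have hl : ∀ p ∈ P, lo ≤ p.2 := fun p hp => hlo ⟨p, hp, rfl⟩
  have hh : ∀ p ∈ P, p.2 ≤ hi := fun p hp => hhi ⟨p, hp, rfl⟩
  have hfl := Int.floor_le lo
  have hce := Int.le_ceil hi
  rcases hi' with ⟨h1, h2, h3⟩ | ⟨h1, h2, h3⟩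
  · simp only at h1 h2 h3
    subst h1
    refine ⟨h2, h2, ?_, ?_⟩
    · have := hl _ h2; have h4 : (⌊lo⌋ : ℝ) ≤ k := by linarith
      exact_mod_cast h4
    · have := hh _ h2; have h4 : (k : ℝ) ≤ ⌈hi⌉ := by linarith
      exact_mod_cast h4
  · simp only at h1 h2 h3
    refine ⟨h.mem _ _ h1, h.mem' h1, ?_, ?_⟩
    · have := hl _ (h.mem _ _ h1); have h4 : (⌊lo⌋ : ℝ) ≤ k := by linarith
      exact_mod_cast h4
    · have := hh _ (h.mem' h1); have h4 : (k : ℝ) ≤ ⌈hi⌉ := by linarith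
      exact_mod_cast h4

theorem columns_exist {P : Set Pt} {S : Pt → Pt → Prop} (h : SL P S) :
    ∃ X : Pt → Pt → ℤ → ℤ,
      {ξ | ∃ k x, RMem P S X k x ξ}.Finite ∧
      (∀ k x x' ξ ξ', RMem P S X k x ξ → RMem P S X k x' ξ' → x < x' → ξ < ξ') ∧
      (∀ a c a' c' (k : ℤ), S a c → S a' c' → a.2 ≤ k → (k : ℝ) + 1 ≤ c.2 →
        a'.2 ≤ k → (k : ℝ) + 1 ≤ c'.2 → X a c k = X a' c' k → a = a' ∧ c = c') := by
  classical
  have hf := item_finite h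
  let T := hf.toFinset
  have hT : ∀ i, i ∈ T ↔ Item P S i := fun i => by simp [T]
  let L : Pt × Pt × ℤ → ℤ := fun i => i.2.2
  let b : Pt × Pt × ℤ → ℝ := fun i => xAt i.1 i.2.1 i.2.2
  let t : Pt × Pt × ℤ → ℝ := fun i => xAt i.1 i.2.1 (i.2.2 + 1)
  let top : Pt × Pt × ℤ → Prop := fun i => i.1 ≠ i.2.1
  let key : Pt × Pt × ℤ → Lex (ℝ × WithBot ℝ) :=
    fun i => toLex (b i, if i.1 = i.2.1 then ⊥ else (t i : WithBot ℝ))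
  have keyb : ∀ i i', b i < b i' → key i < key i' := fun i i' hb => by
    rw [Prod.Lex.toLex_lt_toLex]; exact Or.inl hb
  have topS : ∀ i ∈ T, top i → S i.1 i.2.1 ∧ i.1.2 ≤ i.2.2 ∧ (i.2.2 : ℝ) + 1 ≤ i.2.1.2 := by
    intro i hi ht
    rcases (hT i).1 hi with h1 | h1
    · exact absurd h1.1 ht
    · exact h1
  have ht : ∀ a ∈ T, ∀ a' ∈ T, L a = L a' → top a → top a' → key a ≤ key a' → t a ≤ t a' := by
    intro i hi i' hi' hl hti hti' hk
    obtain ⟨s1, s2, s3⟩ := topS i hi hti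
    obtain ⟨s1', s2', s3'⟩ := topS i' hi' hti'
    have hl' : i.2.2 = i'.2.2 := hl
    rw [Prod.Lex.toLex_le_toLex] at hk
    rcases hk with hk | ⟨-, hk⟩
    · simp only [b, t, ← hl'] at hk ⊢
      rw [← hl'] at s2' s3'
      exact h.noncross s1 s1' _ s2 s3 s2' s3' hk
    · simp only [top] at hti hti'
      simp only [hti, hti', if_false] at hk
      exact_mod_cast hk
  obtain ⟨X, hX1, hX2⟩ := layer_exists T L key b t top
    (by
      intro i hi i' hi' hl hk
      rw [Prod.Lex.toLex_le_toLex] at hk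
      rcases hk with hk | hk
      · exact hk.le
      · exact hk.1.le) ht
  have up : ∀ {k : ℤ} {a c : Pt}, S a c → a.2 ≤ k → (k : ℝ) + 1 ≤ c.2 → (a, c, k) ∈ T :=
    fun h1 h2 h3 => (hT _).2 (Or.inr ⟨h1, h2, h3⟩)
  have stub : ∀ {k : ℤ} {p : Pt}, p ∈ P → p.2 = k → (p, p, k) ∈ T :=
    fun h1 h2 => (hT _).2 (Or.inl ⟨rfl, h1, h2⟩)
  -- canonical form of row membership
  have canon : ∀ k x ξ, RMem P S (fun a c k => X (a, c, k)) k x ξ →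
      ∃ i ∈ T, ξ = X i ∧ ((L i = k ∧ b i = x) ∨ (L i + 1 = k ∧ top i ∧ t i = x)) := by
    rintro k x ξ (⟨p, h1, h2, h3, h4⟩ | ⟨a, c, h1, h2, h3, h4, h5⟩ | ⟨a, c, h1, h2, h3, h4, h5⟩)
    · exact ⟨(p, p, k), stub h1 h2, h4, Or.inl ⟨rfl, by simp only [b, xAt_self, h3]⟩⟩
    · exact ⟨(a, c, k), up h1 h2 h3, h5, Or.inl ⟨rfl, h4⟩⟩
    · refine ⟨(a, c, k - 1), up h1 (by push_cast; linarith) (by push_cast; linarith), h5,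
        Or.inr ⟨by simp [L], h.ne _ _ h1, ?_⟩⟩
      simp only [t]
      rw [← h4]
      congr 1
      push_cast; ring
  refine ⟨fun a c k => X (a, c, k), ?_, ?_, ?_⟩
  · refine (T.finite_toSet.image X).subset ?_
    rintro ξ ⟨k, x, hm⟩
    obtain ⟨i, hi, h1, -⟩ := canon k x ξ hm
    exact ⟨i, hi, h1.symm⟩
  · intro k x x' ξ ξ' hm hm' hlt
    obtain ⟨i, hi, rfl, hc⟩ := canon k x ξ hm
    obtain ⟨i', hi', rfl, hc'⟩ := canon k x' ξ' hm'
    rcases hc with ⟨l1, rfl⟩ | ⟨l1, l2, rfl⟩ <;> rcases hc' with ⟨l1', rfl⟩ | ⟨l1', l2', rfl⟩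
    · exact hX1 i hi i' hi' (by omega) (keyb _ _ hlt)
    · exact (hX2 i' hi' i hi (by omega) l2').2 hlt
    · exact (hX2 i hi i' hi' (by omega) l2).1 hlt
    · refine hX1 i hi i' hi' (by omega) ?_
      by_contra hk
      exact absurd (ht i' hi' i hi (by omega) l2' l2 (not_lt.1 hk)) (not_le.2 hlt)
  · intro a c a' c' k s s' h1 h2 h1' h2' he
    have hk : key (a, c, k) = key (a', c', k) := by
      rcases lt_trichotomy (key (a, c, k)) (key (a', c', k)) with hk | hk | hk
      · exact absurd he (hX1 _ (up s h1 h2) _ (up s' h1' h2') rfl hk).ne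
      · exact hk
      · exact absurd he (hX1 _ (up s' h1' h2') _ (up s h1 h2) rfl hk).ne'
    have hk' := toLex.injective hk
    simp only [Prod.mk.injEq, h.ne _ _ s, h.ne _ _ s', if_false, b, t] at hk'
    obtain ⟨e1, e2⟩ := hk'
    have e2' : xAt a c (k + 1) = xAt a' c' (k + 1) := by exact_mod_cast e2
    have e3 : xAt a c (k + 1 / 2) = xAt a' c' (k + 1 / 2) := by
      rw [xAt_affine a c k (1 / 2), xAt_affine a' c' k (1 / 2), e1, e2']
    have m1 := xAt_mem a c (k + 1 / 2) (by linarith) (by linarith) (by linarith)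
    have m2 := xAt_mem a' c' (k + 1 / 2) (by linarith) (by linarith) (by linarith)
    rw [← e3] at m2
    rcases h.strip s s' k (by simp) (by simp; norm_num) m1 m2 with q | ⟨rfl, rfl⟩
    · exact q
    · linarith


/-! ### Part 4: drawing the segments of a straight-line system -/

theorem isInt_mk (m n : ℤ) : IsIntPt ((m : ℝ), (n : ℝ)) := ⟨⟨m, rfl⟩, ⟨n, rfl⟩⟩

theorem stair (f : ℤ → ℤ) (k0 : ℤ) (n : ℕ) :
    ∃ T, Pth ((f k0 : ℤ), (k0 : ℤ)) ((f (k0 + n) : ℤ), ((k0 + n + 1 : ℤ) : ℝ)) T True False ∧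
      ∀ z ∈ T, (k0 : ℝ) ≤ z.2 ∧ z.2 ≤ ((k0 + n + 1 : ℤ) : ℝ) ∧
        (∀ k : ℤ, (k : ℝ) < z.2 → z.2 < k + 1 → z.1 = f k) ∧
        (∀ k : ℤ, z.2 = k → k0 < k → k ≤ k0 + n →
          z.1 ∈ Set.uIcc (f (k - 1) : ℝ) (f k)) ∧
        (z.2 = k0 → z.1 = f k0) ∧
        (z.2 = ((k0 + n + 1 : ℤ) : ℝ) → z.1 = f (k0 + n)) := by
  -- one vertical step
  have vstep : ∀ k : ℤ, Pth ((f k : ℤ), (k : ℤ)) ((f k : ℤ), ((k + 1 : ℤ) : ℝ))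
      (segment ℝ ((f k : ℝ), (k : ℝ)) ((f k : ℝ), ((k + 1 : ℤ) : ℝ))) True False := by
    intro k
    refine (pth_seg (isInt_mk (f k) k) (isInt_mk (f k) (k + 1)) (Or.inl rfl)).weaken
      (fun _ => ?_) False.elim
    simp
  have vmem : ∀ (k : ℤ) (z : Pt), z ∈ segment ℝ ((f k : ℝ), (k : ℝ)) ((f k : ℝ), ((k + 1 : ℤ) : ℝ)) →
      z.1 = f k ∧ (k : ℝ) ≤ z.2 ∧ z.2 ≤ k + 1 := by
    intro k z hz
    obtain ⟨h1, h2⟩ := mem_vseg.1 hz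
    push_cast at h2
    rw [Set.uIcc_of_le (by linarith)] at h2
    exact ⟨h1, h2.1, h2.2⟩
  have strip : ∀ (k j : ℤ) (y : ℝ), (k : ℝ) ≤ y → y ≤ k + 1 → (j : ℝ) < y → y < j + 1 → j = k := by
    intro k j y h1 h2 h3 h4
    have a1 : (k : ℝ) < j + 1 := by linarith
    have a2 : (j : ℝ) < k + 1 := by linarith
    have a1' : k < j + 1 := by exact_mod_cast a1
    have a2' : j < k + 1 := by exact_mod_cast a2
    omega
  induction n with
  | zero =>
    refine ⟨_, by simpa using vstep k0, ?_⟩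
    intro z hz
    have hz' : z ∈ segment ℝ ((f k0 : ℝ), (k0 : ℝ)) ((f k0 : ℝ), ((k0 + 1 : ℤ) : ℝ)) := by
      simpa using hz
    obtain ⟨h1, h2, h3⟩ := vmem k0 z hz'
    refine ⟨h2, by simpa using h3, ?_, ?_, fun _ => h1, fun _ => by simpa using h1⟩
    · intro k a1 a2
      rw [strip k0 k _ h2 h3 a1 a2]; exact h1
    · intro k _ a1 a2
      simp at a2; omega
  | succ n ih =>
    obtain ⟨T, hT, hz⟩ := ih
    set r : ℤ := k0 + n + 1 with hr
    have er : k0 + ((n + 1 : ℕ) : ℤ) = r := by push_cast; omega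
    have er' : k0 + (n : ℤ) = r - 1 := by omega
    rw [er]
    have hor : Pth ((f (k0 + n) : ℤ), (r : ℤ)) ((f r : ℤ), (r : ℤ))
        (segment ℝ ((f (k0 + n) : ℝ), (r : ℝ)) ((f r : ℝ), (r : ℝ))) True False :=
      (pth_seg (isInt_mk (f (k0 + n)) r) (isInt_mk (f r) r) (Or.inr rfl)).weaken
        (fun _ => le_rfl) False.elim
    have j1 := hT.join hor (by
      rintro z ⟨h1, h2⟩
      obtain ⟨e1, -⟩ := mem_hseg.1 h2
      have := (hz z h1).2.2.2.2.2 e1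
      exact Prod.ext this e1)
    have j2 := j1.join (vstep r) (by
      rintro z ⟨h1, h2⟩
      obtain ⟨b1, b2, b3⟩ := vmem r z h2
      refine Prod.ext b1 (le_antisymm ?_ b2)
      rcases h1 with h1 | h1
      · exact (hz z h1).2.1
      · exact (mem_hseg.1 h1).1.le)
    refine ⟨_, j2, ?_⟩
    have hr0 : (k0 : ℝ) < r := by
      have : k0 < r := by omega
      exact_mod_cast this
    rintro z ((h | h) | h)
    · obtain ⟨c1, c2, c3, c4, c5, c6⟩ := hz z h
      refine ⟨c1, by push_cast; linarith, c3, ?_, c5, ?_⟩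
      · intro k e1 e2 e3
        by_cases hk : k ≤ k0 + n
        · exact c4 k e1 e2 hk
        · have : k = r := by omega
          subst this
          rw [c6 e1, er']
          exact Set.left_mem_uIcc
      · intro e; exfalso; push_cast at e; linarith
    · obtain ⟨e1, e2⟩ := mem_hseg.1 h
      refine ⟨by linarith, by push_cast; linarith, ?_, ?_, ?_, ?_⟩
      · intro k a1 a2
        exfalso
        rw [e1] at a1 a2
        have a1' : k < r := by exact_mod_cast a1
        have a2' : r < k + 1 := by exact_mod_cast a2
        omega
      · intro k a1 a2 a3
        have : r = k := by rw [e1] at a1; exact_mod_cast a1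
        subst this
        rwa [er'] at e2
      · intro e; exfalso; linarith
      · intro e; exfalso; push_cast at e; linarith
    · obtain ⟨b1, b2, b3⟩ := vmem r z h
      refine ⟨by linarith, by push_cast; linarith, ?_, ?_, ?_, fun _ => b1⟩
      · intro k a1 a2
        rw [strip r k _ b2 b3 a1 a2]; exact b1
      · intro k a1 a2 a3
        have : r ≤ k := by rw [a1] at b2; exact_mod_cast b2
        have : r = k := by omega
        subst this
        rw [b1]; exact Set.right_mem_uIcc
      · intro e; exfalso; linarith

/-- The flat box of a point. -/
def FB (Lf Rf : Pt → ℤ) (p : Pt) : Set Pt :=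
  {z | z.2 = p.2 ∧ (Lf p : ℝ) ≤ z.1 ∧ z.1 ≤ Rf p}

/-- What is needed about a drawn straight-line system. -/
structure Drawn (P : Set Pt) (S : Pt → Pt → Prop) (Lf Rf : Pt → ℤ) (Q : Pt → Pt → Set Pt) :
    Prop where
  le : ∀ p ∈ P, Lf p ≤ Rf p
  lt : ∀ p ∈ P, ∀ q ∈ P, p.2 = q.2 → p.1 < q.1 → Rf p < Lf q
  path : ∀ a c, S a c → ∃ p q, p ∈ FB Lf Rf a ∧ q ∈ FB Lf Rf c ∧
    Pth p q (Q a c) (a.2 ≤ c.2) (c.2 ≤ a.2) ∧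
    Q a c ∩ FB Lf Rf a ⊆ {p} ∧ Q a c ∩ FB Lf Rf c ⊆ {q}
  other : ∀ a c w z, S a c → w ∈ P → w ≠ a → w ≠ c → z ∈ Q a c → z ∉ FB Lf Rf w
  cross : ∀ a c a' c' z, S a c → S a' c' → ¬ (a = a' ∧ c = c') → ¬ (a = c' ∧ c = a') →
    z ∈ Q a c → z ∈ Q a' c' → ∃ w, (w = a ∨ w = c) ∧ (w = a' ∨ w = c') ∧ z ∈ FB Lf Rf w
  range : ∀ a c z, S a c → z ∈ Q a c → min a.2 c.2 ≤ z.2 ∧ z.2 ≤ max a.2 c.2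

/-- Row description of a point `z` on the drawing of segment `ac`. -/
def RowU (P : Set Pt) (S : Pt → Pt → Prop) (X : Pt → Pt → ℤ → ℤ) (a c z : Pt) (k : ℤ) : Prop :=
  ∃ x ξ x' ξ', x ≤ x' ∧ ((x, (k : ℝ)) : Pt) ∈ segment ℝ a c ∧ ((x', (k : ℝ)) : Pt) ∈ segment ℝ a c ∧
    RMem P S X k x ξ ∧ RMem P S X k x' ξ' ∧ (ξ : ℝ) ≤ z.1 ∧ z.1 ≤ ξ'

/-- Strip description. -/
def StripU (X : Pt → Pt → ℤ → ℤ) (a c z : Pt) (k : ℤ) : Prop :=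
  (a.2 ≤ k ∧ (k : ℝ) + 1 ≤ c.2 ∧ z.1 = X a c k) ∨ (c.2 ≤ k ∧ (k : ℝ) + 1 ≤ a.2 ∧ z.1 = X c a k)

theorem int_strip {m k : ℤ} {y : ℝ} (h1 : (m : ℝ) ≤ y) (h2 : y < k + 1) : m ≤ k := by
  have : (m : ℝ) < k + 1 := by linarith
  have : m < k + 1 := by exact_mod_cast this
  omega

theorem int_strip' {m k : ℤ} {y : ℝ} (h1 : y ≤ (m : ℝ)) (h2 : (k : ℝ) < y) : k + 1 ≤ m := by
  have : (k : ℝ) < m := by linarith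
  have : k < m := by exact_mod_cast this
  omega

theorem drawn_exists {P : Set Pt} {S : Pt → Pt → Prop} (h : SL P S) :
    ∃ Lf Rf Q, Drawn P S Lf Rf Q := by
  classical
  obtain ⟨X, hfin, hrow, hstrip⟩ := columns_exist h
  have hLR : ∀ p : Pt, ∃ lr : ℤ × ℤ, p ∈ P → ∀ k : ℤ, p.2 = k →
      RMem P S X k p.1 lr.1 ∧ RMem P S X k p.1 lr.2 ∧
      ∀ ξ, RMem P S X k p.1 ξ → lr.1 ≤ ξ ∧ ξ ≤ lr.2 := by
    intro p
    by_cases hp : p ∈ P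
    · obtain ⟨-, k, hk⟩ := h.int p hp
      have hA : {ξ | RMem P S X k p.1 ξ}.Finite := hfin.subset (fun ξ hξ => ⟨k, p.1, hξ⟩)
      have hne : {ξ | RMem P S X k p.1 ξ}.Nonempty := ⟨X p p k, Or.inl ⟨p, hp, hk, rfl, rfl⟩⟩
      obtain ⟨l, hl, hl'⟩ := Set.exists_min_image _ id hA hne
      obtain ⟨r, hr, hr'⟩ := Set.exists_max_image _ id hA hne
      refine ⟨(l, r), fun _ k' hk' => ?_⟩
      have : k = k' := by rw [hk] at hk'; exact_mod_cast hk'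
      subst this
      exact ⟨hl, hr, fun ξ hξ => ⟨hl' ξ hξ, hr' ξ hξ⟩⟩
    · exact ⟨(0, 0), fun hp' => absurd hp' hp⟩
  choose lr hlr using hLR
  let Lf : Pt → ℤ := fun p => (lr p).1
  let Rf : Pt → ℤ := fun p => (lr p).2
  have hL : ∀ p ∈ P, ∀ k : ℤ, p.2 = k → RMem P S X k p.1 (Lf p) := fun p hp k hk => (hlr p hp k hk).1
  have hR : ∀ p ∈ P, ∀ k : ℤ, p.2 = k → RMem P S X k p.1 (Rf p) := fun p hp k hk => (hlr p hp k hk).2.1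
  have hM : ∀ p ∈ P, ∀ k : ℤ, p.2 = k → ∀ ξ, RMem P S X k p.1 ξ → Lf p ≤ ξ ∧ ξ ≤ Rf p :=
    fun p hp k hk => (hlr p hp k hk).2.2
  have hle : ∀ p ∈ P, Lf p ≤ Rf p := by
    intro p hp
    obtain ⟨-, k, hk⟩ := h.int p hp
    exact (hM p hp k hk _ (hR p hp k hk)).1
  have hlt : ∀ p ∈ P, ∀ q ∈ P, p.2 = q.2 → p.1 < q.1 → Rf p < Lf q := by
    intro p hp q hq e hpq
    obtain ⟨-, k, hk⟩ := h.int p hp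
    exact hrow k _ _ _ _ (hR p hp k hk) (hL q hq k (e ▸ hk)) hpq
  -- existence of drawings of oriented segments
  have hor : ∀ a c, S a c → (a.2 < c.2 ∨ (a.2 = c.2 ∧ a.1 < c.1)) → ∃ T p q,
      p ∈ FB Lf Rf a ∧ q ∈ FB Lf Rf c ∧ Pth p q T (a.2 ≤ c.2) (c.2 ≤ a.2) ∧
      ∀ z ∈ T, (min a.2 c.2 ≤ z.2 ∧ z.2 ≤ max a.2 c.2) ∧
        (∀ k : ℤ, (k : ℝ) < z.2 → z.2 < k + 1 → StripU X a c z k) ∧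
        (∀ k : ℤ, z.2 = k → RowU P S X a c z k) ∧
        (z ∈ FB Lf Rf a → z = p) ∧ (z ∈ FB Lf Rf c → z = q) := by
    intro a c hs ho
    have ha := h.mem _ _ hs
    have hc := h.mem' hs
    obtain ⟨-, k0, hk0⟩ := h.int a ha
    obtain ⟨-, k1, hk1⟩ := h.int c hc
    rcases ho with ho | ⟨ho, ho'⟩
    · have hk : k0 < k1 := by rw [hk0, hk1] at ho; exact_mod_cast ho
      obtain ⟨T, hT, hz⟩ := stair (fun k => X a c k) k0 (k1 - k0 - 1).toNat
      have e1 : k0 + ((k1 - k0 - 1).toNat : ℤ) = k1 - 1 := by omega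
      rw [e1] at hT hz
      have e2 : k1 - 1 + 1 = k1 := by ring
      rw [e2] at hT hz
      have hk' : (k0 : ℝ) + 1 ≤ k1 := by exact_mod_cast hk
      -- membership of row columns
      have mup : ∀ k : ℤ, k0 ≤ k → k + 1 ≤ k1 → RMem P S X k (xAt a c k) (X a c k) := by
        intro k h1 h2
        refine Or.inr (Or.inl ⟨a, c, hs, ?_, ?_, rfl, rfl⟩)
        · rw [hk0]; exact_mod_cast h1
        · rw [hk1]; exact_mod_cast h2
      have mdn : ∀ k : ℤ, k0 + 1 ≤ k → k ≤ k1 → RMem P S X k (xAt a c k) (X a c (k - 1)) := by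
        intro k h1 h2
        refine Or.inr (Or.inr ⟨a, c, hs, ?_, ?_, rfl, rfl⟩)
        · rw [hk0]; exact_mod_cast h1
        · rw [hk1]; exact_mod_cast h2
      have xa : xAt a c k0 = a.1 := by rw [← hk0, xAt_left]
      have xc : xAt a c k1 = c.1 := by rw [← hk1, xAt_right _ _ ho]
      refine ⟨T, _, _, ?_, ?_, hT.weaken (fun _ => trivial) (fun q => absurd q (not_le.2 ho)), ?_⟩
      · have := hM a ha k0 hk0 _ (xa ▸ mup k0 le_rfl (by omega))
        exact ⟨hk0.symm, Int.cast_le.2 this.1, Int.cast_le.2 this.2⟩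
      · have := hM c hc k1 hk1 _ (xc ▸ mdn k1 (by omega) le_rfl)
        exact ⟨hk1.symm, Int.cast_le.2 this.1, Int.cast_le.2 this.2⟩
      · intro z hzT
        obtain ⟨c1, c2, c3, c4, c5, c6⟩ := hz z hzT
        rw [min_eq_left ho.le, max_eq_right ho.le]
        refine ⟨⟨by linarith, by linarith⟩, ?_, ?_, ?_, ?_⟩
        · intro k b1 b2
          have i1 := int_strip c1 b2
          have i2 := int_strip' c2 b1
          refine Or.inl ⟨?_, ?_, c3 k b1 b2⟩
          · rw [hk0]; exact_mod_cast i1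
          · rw [hk1]; exact_mod_cast i2
        · intro k hzk
          have i1 : k0 ≤ k := by rw [hzk] at c1; exact_mod_cast c1
          have i2 : k ≤ k1 := by rw [hzk] at c2; exact_mod_cast c2
          have hmem := xAt_mem a c k ho (by rw [hk0]; exact_mod_cast i1)
            (by rw [hk1]; exact_mod_cast i2)
          have fin : ∀ ξ ξ', RMem P S X k (xAt a c k) ξ → RMem P S X k (xAt a c k) ξ' →
              (ξ : ℝ) ≤ z.1 → z.1 ≤ ξ' → RowU P S X a c z k :=
            fun ξ ξ' q1 q2 q3 q4 => ⟨_, ξ, _, ξ', le_rfl, hmem, hmem, q1, q2, q3, q4⟩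
          rcases eq_or_lt_of_le i1 with e | i1'
          · subst e
            have q := mup k0 le_rfl (by omega)
            exact fin _ _ q q (c5 hzk).ge (c5 hzk).le
          · rcases eq_or_lt_of_le i2 with e | i2'
            · subst e
              have q := mdn k (by omega) le_rfl
              exact fin _ _ q q (c6 hzk).ge (c6 hzk).le
            · have q1 := mup k (by omega) (by omega)
              have q2 := mdn k (by omega) (by omega)
              have := c4 k hzk i1' (by omega)
              rcases Set.mem_uIcc.1 this with w | w
              · exact fin _ _ q2 q1 w.1 w.2
              · exact fin _ _ q1 q2 w.1 w.2
        · intro hzb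
          have : z.2 = k0 := hzb.1.trans hk0
          exact Prod.ext (c5 this) this
        · intro hzb
          have : z.2 = k1 := hzb.1.trans hk1
          exact Prod.ext (c6 this) this
    · have hk : k0 = k1 := by rw [hk0, hk1] at ho; exact_mod_cast ho
      subst hk
      have hlt' := hlt a ha c hc ho ho'
      have hlt'' : (Rf a : ℝ) < Lf c := by exact_mod_cast hlt'
      have la : (Lf a : ℝ) ≤ Rf a := by exact_mod_cast hle a ha
      have lc : (Lf c : ℝ) ≤ Rf c := by exact_mod_cast hle c hc
      refine ⟨_, ((Rf a : ℝ), (k0 : ℝ)), ((Lf c : ℝ), (k0 : ℝ)), ?_, ?_,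
        (pth_seg (isInt_mk (Rf a) k0) (isInt_mk (Lf c) k0) (Or.inr rfl)).weaken
          (fun _ => le_rfl) (fun _ => le_rfl), ?_⟩
      · exact ⟨hk0.symm, la, le_rfl⟩
      · exact ⟨hk1.symm, le_rfl, lc⟩
      · intro z hz
        obtain ⟨e1, e2⟩ := mem_hseg.1 hz
        rw [Set.uIcc_of_le hlt''.le] at e2
        refine ⟨⟨?_, ?_⟩, ?_, ?_, ?_, ?_⟩
        · rw [hk0, hk1, e1]; simp
        · rw [hk0, hk1, e1]; simp
        · intro k b1 b2
          exfalso
          have i1 := int_strip e1.ge b2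
          have i2 := int_strip' e1.le b1
          omega
        · intro k hzk
          have : k0 = k := by rw [e1] at hzk; exact_mod_cast hzk
          subst this
          refine ⟨a.1, Rf a, c.1, Lf c, ho'.le, ?_, ?_, hR a ha k0 hk0, hL c hc k0 hk1, e2.1, e2.2⟩
          · rw [← hk0]; exact left_mem_segment ℝ a c
          · rw [← hk1]; exact right_mem_segment ℝ a c
        · intro hzb
          exact Prod.ext (le_antisymm hzb.2.2 e2.1) e1
        · intro hzb
          exact Prod.ext (le_antisymm e2.2 hzb.2.1) e1
  have hall : ∀ a c, ∃ T, S a c → ∃ p q,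
      p ∈ FB Lf Rf a ∧ q ∈ FB Lf Rf c ∧ Pth p q T (a.2 ≤ c.2) (c.2 ≤ a.2) ∧
      ∀ z ∈ T, (min a.2 c.2 ≤ z.2 ∧ z.2 ≤ max a.2 c.2) ∧
        (∀ k : ℤ, (k : ℝ) < z.2 → z.2 < k + 1 → StripU X a c z k) ∧
        (∀ k : ℤ, z.2 = k → RowU P S X a c z k) ∧
        (z ∈ FB Lf Rf a → z = p) ∧ (z ∈ FB Lf Rf c → z = q) := by
    intro a c
    by_cases hs : S a c
    · by_cases ho : a.2 < c.2 ∨ (a.2 = c.2 ∧ a.1 < c.1)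
      · obtain ⟨T, hT⟩ := hor a c hs ho
        exact ⟨T, fun _ => hT⟩
      · have ho' : c.2 < a.2 ∨ (c.2 = a.2 ∧ c.1 < a.1) := by
          push Not at ho
          rcases lt_or_eq_of_le ho.1 with q | q
          · exact Or.inl q
          · refine Or.inr ⟨q, lt_of_le_of_ne (ho.2 q.symm) fun e => h.ne _ _ hs ?_⟩
            exact Prod.ext e.symm q.symm
        obtain ⟨T, p, q, t1, t2, t3, t4⟩ := hor c a (h.symm _ _ hs) ho'
        refine ⟨T, fun _ => ⟨q, p, t2, t1, t3.reverse, fun z hz => ?_⟩⟩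
        obtain ⟨s1, s2, s3, s4, s5⟩ := t4 z hz
        refine ⟨by rwa [min_comm, max_comm], fun k b1 b2 => (s2 k b1 b2).symm, ?_, s5, s4⟩
        intro k hk
        obtain ⟨x, ξ, x', ξ', r⟩ := s3 k hk
        rw [segment_symm ℝ c a] at r
        exact ⟨x, ξ, x', ξ', r⟩
    · exact ⟨∅, fun hs' => absurd hs' hs⟩
  choose Q hQ using hall
  refine ⟨Lf, Rf, Q, ⟨hle, hlt, ?_, ?_, ?_, ?_⟩⟩
  · intro a c hs
    obtain ⟨p, q, t1, t2, t3, t4⟩ := hQ a c hs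
    exact ⟨p, q, t1, t2, t3, fun z hz => (t4 z hz.1).2.2.2.1 hz.2,
      fun z hz => (t4 z hz.1).2.2.2.2 hz.2⟩
  · intro a c w z hs hw hwa hwc hz hzw
    obtain ⟨p, q, t1, t2, t3, t4⟩ := hQ a c hs
    obtain ⟨-, k, hk⟩ := h.int w hw
    obtain ⟨x, ξ, x', ξ', h1, h2, h3, h4, h5, h6, h7⟩ := (t4 z hz).2.2.1 k (hzw.1.trans hk)
    have n1 : ¬ x' < w.1 := fun hx => by
      have := hrow k _ _ _ _ h5 (hL w hw k hk) hx
      have : (ξ' : ℝ) < Lf w := by exact_mod_cast this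
      linarith [hzw.2.1]
    have n2 : ¬ w.1 < x := fun hx => by
      have := hrow k _ _ _ _ (hR w hw k hk) h4 hx
      have : (Rf w : ℝ) < ξ := by exact_mod_cast this
      linarith [hzw.2.2]
    have hws : w ∈ segment ℝ a c := by
      apply (convex_segment a c).segment_subset h2 h3
      rw [mem_hseg, Set.uIcc_of_le h1]
      exact ⟨hk, not_lt.1 n2, not_lt.1 n1⟩
    rcases h.I1 a c w hs hw hws with e | e
    · exact hwa e
    · exact hwc e
  · intro a c a' c' z hs hs' d1 d2 hz hz'
    obtain ⟨_, _, _, _, _, t4⟩ := hQ a c hs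
    obtain ⟨_, _, _, _, _, t4'⟩ := hQ a' c' hs'
    obtain ⟨-, u2, u3, -, -⟩ := t4 z hz
    obtain ⟨-, u2', u3', -, -⟩ := t4' z hz'
    rcases eq_or_lt_of_le (Int.floor_le z.2) with hk | hk
    · set k := ⌊z.2⌋
      obtain ⟨x, ξ, x', ξ', h1, h2, h3, h4, h5, h6, h7⟩ := u3 k hk.symm
      obtain ⟨y, η, y', η', g1, g2, g3, g4, g5, g6, g7⟩ := u3' k hk.symm
      have n1 : y ≤ x' := by
        by_contra hx
        have := hrow k _ _ _ _ h5 g4 (not_le.1 hx)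
        have : (ξ' : ℝ) < η := by exact_mod_cast this
        linarith
      have n2 : x ≤ y' := by
        by_contra hx
        have := hrow k _ _ _ _ g5 h4 (not_le.1 hx)
        have : (η' : ℝ) < ξ := by exact_mod_cast this
        linarith
      have com : ∀ v : ℝ, x ≤ v → v ≤ x' → y ≤ v → v ≤ y' →
          ((v, (k : ℝ)) = a ∨ (v, (k : ℝ)) = c) ∧ ((v, (k : ℝ)) = a' ∨ (v, (k : ℝ)) = c') := by
        intro v v1 v2 v3 v4
        have m1 : ((v, (k : ℝ)) : Pt) ∈ segment ℝ a c := by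
          apply (convex_segment a c).segment_subset h2 h3
          rw [mem_hseg, Set.uIcc_of_le h1]
          exact ⟨rfl, v1, v2⟩
        have m2 : ((v, (k : ℝ)) : Pt) ∈ segment ℝ a' c' := by
          apply (convex_segment a' c').segment_subset g2 g3
          rw [mem_hseg, Set.uIcc_of_le g1]
          exact ⟨rfl, v3, v4⟩
        rcases h.I2 _ _ _ _ _ hs hs' m1 m2 with e | e | e
        · exact absurd e d1
        · exact absurd e d2
        · exact e
      have q1 := com (max x y) (le_max_left _ _) (max_le h1 n1) (le_max_right _ _) (max_le n2 g1)
      have q2 := com (min x' y') (le_min h1 n2) (min_le_left _ _) (le_min n1 g1) (min_le_right _ _)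
      have e : max x y = min x' y' := by
        by_contra hne
        have hne' : ((max x y, (k : ℝ)) : Pt) ≠ (min x' y', (k : ℝ)) := fun e =>
          hne (congrArg Prod.fst e)
        grind
      set w : Pt := (max x y, (k : ℝ)) with hw
      have hwP : w ∈ P := by
        rcases q1.1 with e | e
        · rw [e]; exact h.mem _ _ hs
        · rw [e]; exact h.mem' hs
      have hwk : w.2 = k := rfl
      refine ⟨w, q1.1, q1.2, hk.symm, ?_, ?_⟩
      · rcases le_total x y with o | o
        · have e1 : w.1 = y := max_eq_right o
          have := (hM w hwP k hwk η (e1 ▸ g4)).1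
          have : (Lf w : ℝ) ≤ η := by exact_mod_cast this
          linarith
        · have e1 : w.1 = x := max_eq_left o
          have := (hM w hwP k hwk ξ (e1 ▸ h4)).1
          have : (Lf w : ℝ) ≤ ξ := by exact_mod_cast this
          linarith
      · rcases le_total x' y' with o | o
        · have e1 : w.1 = x' := e.trans (min_eq_left o)
          have := (hM w hwP k hwk ξ' (e1 ▸ h5)).2
          have : (ξ' : ℝ) ≤ Rf w := by exact_mod_cast this
          linarith
        · have e1 : w.1 = y' := e.trans (min_eq_right o)
          have := (hM w hwP k hwk η' (e1 ▸ g5)).2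
          have : (η' : ℝ) ≤ Rf w := by exact_mod_cast this
          linarith
    · exfalso
      have hk' := Int.lt_floor_add_one z.2
      set k := ⌊z.2⌋
      have s := u2 k hk hk'
      have s' := u2' k hk hk'
      rcases s with ⟨s1, s2, s3⟩ | ⟨s1, s2, s3⟩ <;> rcases s' with ⟨s1', s2', s3'⟩ | ⟨s1', s2', s3'⟩ <;>
        rw [s3] at s3'
      · exact d1 (hstrip _ _ _ _ k hs hs' s1 s2 s1' s2' (by exact_mod_cast s3'))
      · exact d2 (hstrip _ _ _ _ k hs (h.symm _ _ hs') s1 s2 s1' s2' (by exact_mod_cast s3'))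
      · have := hstrip _ _ _ _ k (h.symm _ _ hs) hs' s1 s2 s1' s2' (by exact_mod_cast s3')
        exact d2 ⟨this.2, this.1⟩
      · have := hstrip _ _ _ _ k (h.symm _ _ hs) (h.symm _ _ hs') s1 s2 s1' s2' (by exact_mod_cast s3')
        exact d1 ⟨this.2, this.1⟩
  · intro a c z hs hz
    obtain ⟨_, _, _, _, _, t4⟩ := hQ a c hs
    exact (t4 z hz).1


/-! ### Part 5: assembling chains -/

theorem Pth.int {p q : Pt} {T : Set Pt} {u d : Prop} (h : Pth p q T u d) :
    IsIntPt p ∧ IsIntPt q ∧ p ∈ T ∧ q ∈ T := by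
  obtain ⟨l, h1, rfl, -, -⟩ := h
  have a := List.mem_of_head? h1.head
  have b := List.mem_of_getLast? h1.last
  exact ⟨h1.int _ a, h1.int _ b, mem_tr_of_mem a, mem_tr_of_mem b⟩

theorem Drawn.disj {P : Set Pt} {S : Pt → Pt → Prop} {Lf Rf : Pt → ℤ} {Q : Pt → Pt → Set Pt}
    (h : Drawn P S Lf Rf Q) {w w' z : Pt} (hw : w ∈ P) (hw' : w' ∈ P) (hz : z ∈ FB Lf Rf w)
    (hz' : z ∈ FB Lf Rf w') : w = w' := by
  have e : w.2 = w'.2 := hz.1.symm.trans hz'.1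
  rcases lt_trichotomy w.1 w'.1 with o | o | o
  · have := h.lt w hw w' hw' e o
    have : (Rf w : ℝ) < Lf w' := by exact_mod_cast this
    linarith [hz.2.2, hz'.2.1]
  · exact Prod.ext o e
  · have := h.lt w' hw' w hw e.symm o
    have : (Rf w' : ℝ) < Lf w := by exact_mod_cast this
    linarith [hz'.2.2, hz.2.1]

/-- Region available to a chain. -/
def RG (Lf Rf : Pt → ℤ) (Q : Pt → Pt → Set Pt) (l : List Pt) : Set Pt :=
  {z | (∃ c ∈ l, z ∈ FB Lf Rf c) ∨ ∃ s ∈ chainSegs l, z ∈ Q s.1 s.2}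

theorem chainSegs_mem {l : List Pt} {s : Pt × Pt} (h : s ∈ chainSegs l) : s.1 ∈ l ∧ s.2 ∈ l := by
  obtain ⟨a, b⟩ := s
  obtain ⟨h1, h2⟩ := List.of_mem_zip h
  exact ⟨h1, List.mem_of_mem_tail h2⟩

theorem chainSegs_rel {R : Pt → Pt → Prop} {l : List Pt} (hl : l.IsChain R) {s : Pt × Pt}
    (h : s ∈ chainSegs l) : R s.1 s.2 := by
  induction l with
  | nil => simp [chainSegs] at h
  | cons a l ih =>
    cases l with
    | nil => simp [chainSegs] at h
    | cons b l =>
      rw [chainSegs_cons, List.mem_cons] at h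
      rw [List.isChain_cons_cons] at hl
      rcases h with rfl | h
      · exact hl.1
      · exact ih hl.2 h

theorem isChain_of_chainSegs {R : Pt → Pt → Prop} {l : List Pt}
    (h : ∀ s ∈ chainSegs l, R s.1 s.2) : l.IsChain R := by
  induction l with
  | nil => exact List.isChain_nil
  | cons a l ih =>
    cases l with
    | nil => exact List.isChain_singleton _
    | cons b l =>
      rw [chainSegs_cons] at h
      rw [List.isChain_cons_cons]
      exact ⟨h (a, b) (by simp), ih fun s hs => h s (by simp [hs])⟩

theorem assemble {P : Set Pt} {S : Pt → Pt → Prop} (h : SL P S) {Lf Rf : Pt → ℤ}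
    {Q : Pt → Pt → Set Pt} (hD : Drawn P S Lf Rf Q) (l : List Pt) :
    ∀ (a b e : Pt), (a :: b :: l).Nodup → (a :: b :: l).IsChain S →
      (a :: b :: l).getLast? = some e →
      ∃ p q T, p ∈ FB Lf Rf a ∧ q ∈ FB Lf Rf e ∧
        Pth p q T (YUp (a :: b :: l)) (YDn (a :: b :: l)) ∧
        T ⊆ RG Lf Rf Q (a :: b :: l) ∧ T ∩ FB Lf Rf a ⊆ {p} ∧ T ∩ FB Lf Rf e ⊆ {q} ∧
        ∀ c ∈ a :: b :: l, ∃ z ∈ T, z.2 = c.2 := by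
  induction l with
  | nil =>
    intro a b e hn hc he
    simp at he
    subst he
    have hs : S a b := by simpa using hc
    obtain ⟨p, q, h1, h2, h3, h4, h5⟩ := hD.path a b hs
    refine ⟨p, q, _, h1, h2, h3.weaken ?_ ?_, ?_, h4, h5, ?_⟩
    · simp [YUp]
    · simp [YDn]
    · intro z hz
      exact Or.inr ⟨(a, b), by simp [chainSegs], hz⟩
    · have := h3.int
      intro c hc
      simp at hc
      rcases hc with rfl | rfl
      · exact ⟨p, this.2.2.1, h1.1⟩
      · exact ⟨q, this.2.2.2, h2.1⟩
  | cons c l ih =>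
    intro a b e hn hc he
    have hn' := List.nodup_cons.1 hn
    have hc' := List.isChain_cons_cons.1 hc
    obtain ⟨p', q', T', h1', h2', h3', h4', h5', h6', h7'⟩ := ih b c e hn'.2 hc'.2 (by simpa using he)
    obtain ⟨p, q, h1, h2, h3, h4, h5⟩ := hD.path a b hc'.1
    have ha := h.mem _ _ hc'.1
    have hb := h.mem' hc'.1
    have hP : ∀ w ∈ b :: c :: l, w ∈ P := by
      have : ∀ (l : List Pt) (b : Pt), b ∈ P → (b :: l).IsChain S → ∀ w ∈ b :: l, w ∈ P := by
        intro l
        induction l with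
        | nil => intro b hb _ w hw; simp at hw; rwa [hw]
        | cons c l ih =>
          intro b hb hch w hw
          rw [List.isChain_cons_cons] at hch
          rw [List.mem_cons] at hw
          rcases hw with rfl | hw
          · exact hb
          · exact ih c (h.mem' hch.1) hch.2 w hw
      exact this _ b hb hc'.2
    have heM : e ∈ c :: l := by
      apply List.mem_of_getLast?
      simpa using he
    have hne : e ≠ b := fun q => (List.nodup_cons.1 hn'.2).1 (q ▸ heM)
    have hne' : e ≠ a := fun q => hn'.1 (q ▸ List.mem_cons_of_mem _ heM)
    have hab : a ≠ b := h.ne _ _ hc'.1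
    -- the middle segment
    have hseg : segment ℝ q p' ⊆ FB Lf Rf b := by
      intro z hz
      have eq1 : q = (q.1, b.2) := Prod.ext rfl h2.1
      have ep1 : p' = (p'.1, b.2) := Prod.ext rfl h1'.1
      rw [eq1, ep1, mem_hseg] at hz
      refine ⟨hz.1, ?_⟩
      have : Set.uIcc q.1 p'.1 ⊆ Set.Icc (Lf b : ℝ) (Rf b) :=
        Set.uIcc_subset_Icc h2.2 h1'.2
      exact this hz.2
    have hy : q.2 = p'.2 := h2.1.trans h1'.1.symm
    have hmid := pth_seg h3.int.2.1 h3'.int.1 (Or.inr hy)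
    have uU : YUp (a :: b :: c :: l) → a.2 ≤ b.2 ∧ YUp (b :: c :: l) := fun w =>
      List.isChain_cons_cons.1 w
    have uD : YDn (a :: b :: c :: l) → b.2 ≤ a.2 ∧ YDn (b :: c :: l) := fun w =>
      List.isChain_cons_cons.1 w
    have j1 := (h3.weaken (fun w => (uU w).1) (fun w => (uD w).1)).join
      (hmid.weaken (fun _ => hy.le) (fun _ => hy.ge))
      (fun z hz => h5 ⟨hz.1, hseg hz.2⟩)
    have j2 := j1.join (h3'.weaken (fun w => (uU w).2) (fun w => (uD w).2)) (by
      rintro z ⟨hz | hz, hz'⟩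
      · apply h5' ⟨hz', ?_⟩
        rcases h4' hz' with ⟨w, hw, hzw⟩ | ⟨s, hs, hzs⟩
        · by_cases hwb : w = b
          · exact hwb ▸ hzw
          · exact absurd hzw (hD.other a b w z hc'.1 (hP w hw) (fun q => hn'.1 (q ▸ hw)) hwb hz)
        · have m := chainSegs_mem hs
          obtain ⟨w, w1, w2, w3⟩ := hD.cross a b s.1 s.2 z hc'.1 (chainSegs_rel hc'.2 hs)
            (fun q => hn'.1 (q.1 ▸ m.1)) (fun q => hn'.1 (q.1 ▸ m.2)) hz hzs
          rcases w1 with rfl | rfl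
          · rcases w2 with rfl | rfl
            · exact absurd m.1 hn'.1
            · exact absurd m.2 hn'.1
          · exact w3
      · exact h5' ⟨hz', hseg hz⟩)
    refine ⟨p, q', _, h1, h2', j2, ?_, ?_, ?_, ?_⟩
    · rintro z ((hz | hz) | hz)
      · exact Or.inr ⟨(a, b), by simp [chainSegs_cons], hz⟩
      · exact Or.inl ⟨b, by simp, hseg hz⟩
      · rcases h4' hz with ⟨w, hw, hzw⟩ | ⟨s, hs, hzs⟩
        · exact Or.inl ⟨w, List.mem_cons_of_mem _ hw, hzw⟩
        · exact Or.inr ⟨s, by rw [chainSegs_cons]; exact List.mem_cons_of_mem _ hs, hzs⟩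
    · rintro z ⟨(hz | hz) | hz, hza⟩
      · exact h4 ⟨hz, hza⟩
      · exact absurd (hD.disj ha hb hza (hseg hz)) hab
      · exfalso
        rcases h4' hz with ⟨w, hw, hzw⟩ | ⟨s, hs, hzs⟩
        · exact hn'.1 (hD.disj ha (hP w hw) hza hzw ▸ hw)
        · have m := chainSegs_mem hs
          exact hD.other s.1 s.2 a z (chainSegs_rel hc'.2 hs) ha (fun q => hn'.1 (q ▸ m.1))
            (fun q => hn'.1 (q ▸ m.2)) hzs hza
    · have heP := hP e (List.mem_cons_of_mem _ heM)
      rintro z ⟨(hz | hz) | hz, hza⟩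
      · exact absurd hza (hD.other a b e z hc'.1 heP hne' hne hz)
      · exact absurd (hD.disj heP hb hza (hseg hz)) hne
      · exact h6' ⟨hz, hza⟩
    · intro w hw
      rw [List.mem_cons] at hw
      rcases hw with rfl | hw
      · exact ⟨p, Or.inl (Or.inl h3.int.2.2.1), h1.1⟩
      · obtain ⟨z, hz, hz'⟩ := h7' w hw
        exact ⟨z, Or.inr hz, hz'⟩

theorem RG_range {P : Set Pt} {S : Pt → Pt → Prop} {Lf Rf : Pt → ℤ}
    {Q : Pt → Pt → Set Pt} (hD : Drawn P S Lf Rf Q) {l : List Pt} (hl : l.IsChain S) {z : Pt}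
    (hz : z ∈ RG Lf Rf Q l) {lo hi : ℝ} (hr : ∀ c ∈ l, lo ≤ c.2 ∧ c.2 ≤ hi) :
    lo ≤ z.2 ∧ z.2 ≤ hi := by
  rcases hz with ⟨w, hw, hzw⟩ | ⟨s, hs, hzs⟩
  · rw [hzw.1]; exact hr w hw
  · have m := chainSegs_mem hs
    obtain ⟨r1, r2⟩ := hD.range _ _ z (chainSegs_rel hl hs) hzs
    have a1 := hr _ m.1
    have a2 := hr _ m.2
    exact ⟨(le_min a1.1 a2.1).trans r1, r2.trans (max_le a1.2 a2.2)⟩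

/-! ### Part 6: removing superfluous corners -/

theorem smp_split (m : List Pt) (q : Pt) (l : List Pt) (h : Smp (m ++ q :: l)) :
    Smp (m ++ [q]) ∧ Smp (q :: l) ∧ tr (m ++ [q]) ∩ tr (q :: l) ⊆ {q} := by
  induction m with
  | nil =>
    refine ⟨trivial, h, ?_⟩
    intro z hz
    exact hz.1
  | cons a m ih =>
    cases m with
    | nil =>
      obtain ⟨h1, h2, h3⟩ : a ≠ q ∧ segment ℝ a q ∩ tr (q :: l) ⊆ {q} ∧ Smp (q :: l) := h
      refine ⟨⟨h1, ?_, trivial⟩, h3, ?_⟩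
      · intro z hz; exact hz.2
      · rintro z ⟨hz | hz, hz'⟩
        · exact h2 ⟨hz, hz'⟩
        · exact hz
    | cons b m =>
      obtain ⟨h1, h2, h3⟩ : a ≠ b ∧ segment ℝ a b ∩ tr (b :: (m ++ q :: l)) ⊆ {b} ∧
        Smp (b :: (m ++ q :: l)) := h
      obtain ⟨i1, i2, i3⟩ := ih h3
      have e : tr (b :: (m ++ q :: l)) = tr (b :: (m ++ [q])) ∪ tr (q :: l) :=
        tr_join (b :: m) q l
      rw [e] at h2
      refine ⟨⟨h1, ?_, i1⟩, i2, ?_⟩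
      · rintro z ⟨hz, hz'⟩
        exact h2 ⟨hz, Or.inl hz'⟩
      · rintro z ⟨hz | hz, hz'⟩
        · have hzb : z = b := h2 ⟨hz, Or.inr hz'⟩
          apply i3 ⟨?_, hz'⟩
          rw [hzb]
          exact mem_tr_head _ _
        · exact i3 ⟨hz, hz'⟩

/-- Axis collinearity. -/
def ACol (a b c : Pt) : Prop := (a.1 = b.1 ∧ b.1 = c.1) ∨ (a.2 = b.2 ∧ b.2 = c.2)

theorem ACol.cases {a b c : Pt} (h : ACol a b c) :
    a ∈ segment ℝ b c ∨ c ∈ segment ℝ a b ∨ segment ℝ a c = segment ℝ a b ∪ segment ℝ b c := by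
  obtain ⟨a1, a2⟩ := a
  obtain ⟨b1, b2⟩ := b
  obtain ⟨c1, c2⟩ := c
  have key : ∀ x y z : ℝ, x ∈ Set.uIcc y z ∨ z ∈ Set.uIcc x y ∨
      Set.uIcc x z = Set.uIcc x y ∪ Set.uIcc y z := by
    intro x y z
    by_cases hy : y ∈ Set.uIcc x z
    · right; right
      ext t
      simp only [Set.mem_union, Set.mem_uIcc] at *
      constructor
      · intro ht
        rcases le_total t y with o | o <;> rcases hy with hy | hy <;> rcases ht with ht | ht <;>
          grind
      · intro ht
        grind
    · simp only [Set.mem_uIcc] at *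
      grind
  rcases h with ⟨h1, h2⟩ | ⟨h1, h2⟩ <;> simp only at h1 h2 <;> subst h1 <;> subst h2
  · rcases key a2 b2 c2 with k | k | k
    · exact Or.inl (mem_vseg.2 ⟨rfl, k⟩)
    · exact Or.inr (Or.inl (mem_vseg.2 ⟨rfl, k⟩))
    · refine Or.inr (Or.inr ?_)
      ext z
      rw [Set.mem_union, mem_vseg, mem_vseg, mem_vseg, k, Set.mem_union]
      tauto
  · rcases key a1 b1 c1 with k | k | k
    · exact Or.inl (mem_hseg.2 ⟨rfl, k⟩)
    · exact Or.inr (Or.inl (mem_hseg.2 ⟨rfl, k⟩))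
    · refine Or.inr (Or.inr ?_)
      ext z
      rw [Set.mem_union, mem_hseg, mem_hseg, mem_hseg, k, Set.mem_union]
      tauto

/-- No superfluous corners. -/
def NoCol (l : List Pt) : Prop :=
  ∀ l1 a b c l2, l = l1 ++ a :: b :: c :: l2 → ¬ ACol a b c

theorem compress (n : ℕ) : ∀ (l : List Pt) (p q : Pt), l.length = n → PL p q l →
    ∃ l', PL p q l' ∧ tr l' = tr l ∧ l'.Sublist l ∧ NoCol l' := by
  induction n using Nat.strong_induction_on with
  | _ n ih =>
    intro l p q hl h
    by_cases hN : NoCol l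
    · exact ⟨l, h, rfl, List.Sublist.refl l, hN⟩
    · unfold NoCol at hN
      push Not at hN
      obtain ⟨l1, a, b, c, l2, e, hcol⟩ := hN
      subst e
      obtain ⟨s1, s2, s3⟩ := smp_split l1 a _ h.smp
      obtain ⟨t1, t2, t3, t4, t5⟩ : a ≠ b ∧ segment ℝ a b ∩ tr (b :: c :: l2) ⊆ {b} ∧ b ≠ c ∧
        segment ℝ b c ∩ tr (c :: l2) ⊆ {c} ∧ Smp (c :: l2) := s2
      have hseg : segment ℝ a c = segment ℝ a b ∪ segment ℝ b c := by
        rcases hcol.cases with k | k | k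
        · exact absurd (t2 ⟨left_mem_segment ℝ a b, Or.inl k⟩) t1
        · exact absurd (t2 ⟨k, Or.inl (right_mem_segment ℝ b c)⟩) t3.symm
        · exact k
      have hac : a ≠ c := by
        rintro rfl
        exact t1 (t2 ⟨left_mem_segment ℝ a b, Or.inl (right_mem_segment ℝ b a)⟩)
      have htr : tr (a :: c :: l2) = tr (a :: b :: c :: l2) := by
        show segment ℝ a c ∪ tr (c :: l2) = segment ℝ a b ∪ (segment ℝ b c ∪ tr (c :: l2))
        rw [hseg, Set.union_assoc]
      have hsub : (l1 ++ a :: c :: l2).Sublist (l1 ++ a :: b :: c :: l2) := by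
        apply List.Sublist.append_left
        apply List.Sublist.cons_cons
        exact List.sublist_cons_self _ _
      have hPL : PL p q (l1 ++ a :: c :: l2) := by
        refine ⟨?_, ?_, ?_, ?_, ?_⟩
        · have := h.head
          cases l1 <;> simpa using this
        · have := h.last
          simpa [List.getLast?_append, List.getLast?_cons_cons] using this
        · apply smp_join _ _ _ s1
          · refine ⟨hac, ?_, t5⟩
            rw [hseg]
            rintro z ⟨hz | hz, hz'⟩
            · have : z = b := t2 ⟨hz, Or.inr hz'⟩
              subst this
              exact t4 ⟨left_mem_segment ℝ z c, hz'⟩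
            · exact t4 ⟨hz, hz'⟩
          · rw [htr]; exact s3
        · have := h.orth
          rw [List.isChain_append_cons_cons, List.isChain_cons_cons] at this
          rw [List.isChain_append_cons_cons]
          refine ⟨this.1, ?_, this.2.2.2⟩
          rcases hcol with k | k
          · exact Or.inl (k.1.trans k.2)
          · exact Or.inr (k.1.trans k.2)
        · intro x hx
          exact h.int x (hsub.subset hx)
      obtain ⟨l', r1, r2, r3, r4⟩ := ih _ (by rw [← hl]; simp) (l1 ++ a :: c :: l2) p q rfl hPL
      refine ⟨l', r1, ?_, r3.trans hsub, r4⟩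
      rw [r2, tr_join, tr_join l1 a (b :: c :: l2), htr]

theorem YUp.sublist {l l' : List Pt} (h : YUp l) (hs : l'.Sublist l) : YUp l' := by
  unfold YUp at *
  have : Trans (fun a b : Pt => a.2 ≤ b.2) (fun a b : Pt => a.2 ≤ b.2) (fun a b : Pt => a.2 ≤ b.2) :=
    ⟨fun h1 h2 => le_trans h1 h2⟩
  exact (List.isChain_iff_pairwise.1 h).sublist hs |>.isChain

theorem YDn.sublist {l l' : List Pt} (h : YDn l) (hs : l'.Sublist l) : YDn l' := by
  unfold YDn at *
  have : Trans (fun a b : Pt => b.2 ≤ a.2) (fun a b : Pt => b.2 ≤ a.2) (fun a b : Pt => b.2 ≤ a.2) :=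
    ⟨fun h1 h2 => le_trans h2 h1⟩
  exact (List.isChain_iff_pairwise.1 h).sublist hs |>.isChain

theorem noCol_reverse {l : List Pt} (h : NoCol l) : NoCol l.reverse := by
  intro l1 a b c l2 e hc
  have : l = l2.reverse ++ c :: b :: a :: l1.reverse := by
    have := congrArg List.reverse e
    simpa using this
  refine h _ _ _ _ _ this ?_
  rcases hc with k | k
  · exact Or.inl ⟨k.2.symm, k.1.symm⟩
  · exact Or.inr ⟨k.2.symm, k.1.symm⟩

theorem collinear_cross {a b c : Pt} (h : Collinear ℝ ({a, b, c} : Set Pt)) :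
    (b.1 - a.1) * (c.2 - b.2) = (b.2 - a.2) * (c.1 - b.1) := by
  rw [collinear_iff_of_mem (p₀ := a) (by simp)] at h
  obtain ⟨v, hv⟩ := h
  obtain ⟨r, hr⟩ := hv b (by simp)
  obtain ⟨s, hs⟩ := hv c (by simp)
  have r1 : b.1 = r * v.1 + a.1 := by rw [hr]; simp
  have r2 : b.2 = r * v.2 + a.2 := by rw [hr]; simp
  have s1 : c.1 = s * v.1 + a.1 := by rw [hs]; simp
  have s2 : c.2 = s * v.2 + a.2 := by rw [hs]; simp
  rw [r1, r2, s1, s2]; ring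

theorem noCol_genuine {l : List Pt} (h : NoCol l) (ho : l.IsChain AxP) (hn : l.Nodup) :
    GenuineBends l := by
  intro i hi hcol
  have e : l = l.take i ++ l[i] :: l[i + 1] :: l[i + 2] :: l.drop (i + 3) := by
    conv_lhs => rw [← List.take_append_drop i l]
    rw [List.drop_eq_getElem_cons (by omega), List.drop_eq_getElem_cons (by omega),
      List.drop_eq_getElem_cons (by omega)]
  have hcr := collinear_cross hcol
  simp only [List.get_eq_getElem] at hcr
  have n1 : l[i] ≠ l[i+1] := fun q => by
    have := (hn.getElem_inj_iff).1 q
    omega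
  have n2 : l[i+1] ≠ l[i+2] := fun q => by
    have := (hn.getElem_inj_iff).1 q
    omega
  have o1 : AxP l[i] l[i+1] := List.isChain_iff_getElem.1 ho i (by omega)
  have o2 : AxP l[i+1] l[i+2] := List.isChain_iff_getElem.1 ho (i+1) (by omega)
  refine h _ _ _ _ _ e ?_
  generalize l[i] = a at *
  generalize l[i+1] = b at *
  generalize l[i+2] = c at *
  rcases o1 with o1 | o1 <;> rcases o2 with o2 | o2
  · exact Or.inl ⟨o1, o2⟩
  · exfalso
    rw [o1, o2, sub_self, sub_self, zero_mul] at hcr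
    rcases mul_eq_zero.1 hcr.symm with k | k
    · exact n1 (Prod.ext o1 (by rw [o2]; linarith))
    · exact n2 (Prod.ext (by linarith) o2)
  · exfalso
    rw [o1, o2, sub_self, sub_self, zero_mul] at hcr
    rcases mul_eq_zero.1 hcr with k | k
    · exact n1 (Prod.ext (by rw [o2]; linarith) o1)
    · exact n2 (Prod.ext o2 (by linarith))
  · exact Or.inr ⟨o1, o2⟩

theorem monoChain_iff (l : List Pt) : IsMonoChain l ↔ YUp l ∨ YDn l := by
  unfold IsMonoChain YUp YDn
  exact or_congr (List.isChain_map _) (List.isChain_map _)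

theorem orthoChain_of {l : List Pt} (h : l.IsChain AxP) : IsOrthoChain l :=
  fun _ hs => chainSegs_rel h hs

/-! ### Part 7: the straight-line system of a poly-line drawing -/

theorem simple_smp (l : List Pt) (h : IsSimpleChain l) : Smp l := by
  induction l with
  | nil => trivial
  | cons a l ih =>
    cases l with
    | nil => trivial
    | cons b l =>
      obtain ⟨-, hn, hs⟩ := h
      refine ⟨?_, ?_, ?_⟩
      · rintro rfl
        simp at hn
      · cases l with
        | nil => intro z hz; exact hz.2
        | cons c l =>
          rintro z ⟨hz, hz'⟩
          rw [← chainSet_eq_tr _ (by simp)] at hz'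
          simp only [chainSet, Set.mem_iUnion] at hz'
          obtain ⟨s, hs', hzs⟩ := hz'
          obtain ⟨j, hj, rfl⟩ := List.getElem_of_mem hs'
          have := hs 0 (j + 1) (by omega) (by simp [chainSegs_cons])
            (by rw [chainSegs_cons]; simpa using hj)
          have hz2 := this ⟨by simpa [chainSegs_cons] using hz, by
            simp only [chainSegs_cons a, List.get_eq_getElem, List.getElem_cons_succ]
            exact hzs⟩
          by_cases h0 : j = 0
          · subst h0
            simpa [chainSegs_cons] using hz2
          · rw [if_neg (by omega)] at hz2
            exact absurd hz2 (Set.notMem_empty z)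
      · cases l with
        | nil => trivial
        | cons c l =>
          apply ih
          refine ⟨by simp, (List.nodup_cons.1 hn).2, ?_⟩
          intro i j hij hi hj
          have := hs (i + 1) (j + 1) (by omega) (by rw [chainSegs_cons]; simpa using hi)
            (by rw [chainSegs_cons]; simpa using hj)
          simp only [chainSegs_cons a, List.get_eq_getElem, List.getElem_cons_succ] at this
          simp only [List.get_eq_getElem]
          refine this.trans ?_
          by_cases e : j = i + 1
          · rw [if_pos (by omega), if_pos e]
          · rw [if_neg (by omega), if_neg e]

theorem corner_seg {l : List Pt} (h : Smp l) {s : Pt × Pt} (hs : s ∈ chainSegs l) {w : Pt}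
    (hw : w ∈ l) (hws : w ∈ segment ℝ s.1 s.2) : w = s.1 ∨ w = s.2 := by
  induction l with
  | nil => simp at hw
  | cons a l ih =>
    cases l with
    | nil => simp [chainSegs] at hs
    | cons b l =>
      obtain ⟨h1, h2, h3⟩ := h
      rw [chainSegs_cons, List.mem_cons] at hs
      rw [List.mem_cons] at hw
      rcases hs with rfl | hs
      · rcases hw with rfl | hw
        · exact Or.inl rfl
        · exact Or.inr (h2 ⟨hws, mem_tr_of_mem hw⟩)
      · rcases hw with rfl | hw
        · exact absurd (h2 ⟨left_mem_segment ℝ w b, seg_subset_tr hs hws⟩) h1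
        · exact ih h3 hs hw

theorem seg_seg {l : List Pt} (h : Smp l) {s t : Pt × Pt} (hs : s ∈ chainSegs l)
    (ht : t ∈ chainSegs l) {z : Pt} (hzs : z ∈ segment ℝ s.1 s.2) (hzt : z ∈ segment ℝ t.1 t.2) :
    s = t ∨ ((z = s.1 ∨ z = s.2) ∧ (z = t.1 ∨ z = t.2)) := by
  induction l with
  | nil => simp [chainSegs] at hs
  | cons a l ih =>
    cases l with
    | nil => simp [chainSegs] at hs
    | cons b l =>
      obtain ⟨h1, h2, h3⟩ := h
      rw [chainSegs_cons, List.mem_cons] at hs ht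
      rcases hs with rfl | hs <;> rcases ht with rfl | ht
      · exact Or.inl rfl
      · have e : z = b := h2 ⟨hzs, seg_subset_tr ht hzt⟩
        exact Or.inr ⟨Or.inr e, corner_seg h3 ht (by simp [e]) hzt⟩
      · have e : z = b := h2 ⟨hzt, seg_subset_tr hs hzs⟩
        exact Or.inr ⟨corner_seg h3 hs (by simp [e]) hzs, Or.inr e⟩
      · exact ih h3 hs ht

theorem chainSegs_infix {l : List Pt} {a c : Pt} (h : (a, c) ∈ chainSegs l) :
    ∃ l1 l2, l = l1 ++ a :: c :: l2 := by
  induction l with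
  | nil => simp [chainSegs] at h
  | cons x l ih =>
    cases l with
    | nil => simp [chainSegs] at h
    | cons b l =>
      rw [chainSegs_cons, List.mem_cons] at h
      rcases h with h | h
      · simp only [Prod.mk.injEq] at h
        obtain ⟨rfl, rfl⟩ := h
        exact ⟨[], l, rfl⟩
      · obtain ⟨l1, l2, e⟩ := ih h
        exact ⟨x :: l1, l2, by rw [e]; rfl⟩

theorem mem_chainSegs (l1 : List Pt) (a c : Pt) (l2 : List Pt) :
    (a, c) ∈ chainSegs (l1 ++ a :: c :: l2) := by
  induction l1 with
  | nil => simp [chainSegs_cons]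
  | cons x l ih =>
    cases l with
    | nil => simp [chainSegs_cons]
    | cons b l =>
      simp only [List.cons_append] at *
      rw [chainSegs_cons]
      exact List.mem_cons_of_mem _ ih

theorem chainSegs_reverse {l : List Pt} {a c : Pt} (h : (a, c) ∈ chainSegs l) :
    (c, a) ∈ chainSegs l.reverse := by
  obtain ⟨l1, l2, rfl⟩ := chainSegs_infix h
  have := mem_chainSegs l2.reverse c a l1.reverse
  simpa using this

section FromD
variable {V : Type} {G : SimpleGraph V} {D : PolylineDrawing G}

theorem pd_chain_symm (D : PolylineDrawing G) (u v : V) : D.chain v u = (D.chain u v).reverse := by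
  simp [PolylineDrawing.chain, D.bends_symm u v]

theorem pd_left_mem (D : PolylineDrawing G) (u v : V) : D.pos u ∈ D.chain u v := by
  simp [PolylineDrawing.chain]

theorem pd_right_mem (D : PolylineDrawing G) (u v : V) : D.pos v ∈ D.chain u v := by
  simp [PolylineDrawing.chain]

theorem pd_curve (D : PolylineDrawing G) (u v : V) : D.curve u v = tr (D.chain u v) :=
  chainSet_eq_tr _ (by simp [PolylineDrawing.chain])

theorem pd_smp (h : D.IsPlanar) {u v : V} (ha : G.Adj u v) : Smp (D.chain u v) :=
  simple_smp _ (h.2.1 u v ha).1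

theorem pd_mem_points (D : PolylineDrawing G) {u v : V} (ha : G.Adj u v) {w : Pt}
    (hw : w ∈ D.chain u v) : w ∈ D.points := by
  simp only [PolylineDrawing.chain, List.mem_cons, List.mem_append] at hw
  rcases hw with rfl | hw | hw
  · exact Or.inl ⟨u, rfl⟩
  · right
    simp only [Set.mem_iUnion]
    exact ⟨u, v, ha, hw⟩
  · simp at hw
    exact Or.inl ⟨v, hw.symm⟩

/-- Two distinct edge curves meet only at common vertices. -/
theorem pd_common (h : D.IsPlanar) {u v x y : V} (ha : G.Adj u v) (hb : G.Adj x y)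
    (hne : s(u, v) ≠ s(x, y)) {z : Pt} (hz : z ∈ tr (D.chain u v)) (hz' : z ∈ tr (D.chain x y)) :
    ∃ t, (t = u ∨ t = v) ∧ (t = x ∨ t = y) ∧ z = D.pos t := by
  rw [← pd_curve] at hz hz'
  obtain ⟨t, ht, e⟩ := h.2.2.2 u v x y ha hb hne ⟨hz, hz'⟩
  exact ⟨t, by simpa using ht.1, by simpa using ht.2, e.symm⟩

theorem pd_pos_mem (D : PolylineDrawing G) {u v t : V} (h : t = u ∨ t = v) :
    D.pos t ∈ D.chain u v := by
  rcases h with rfl | rfl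
  · exact pd_left_mem _ _ _
  · exact pd_right_mem _ _ _

/-- Segments of the drawing. -/
def DS (D : PolylineDrawing G) (a c : Pt) : Prop :=
  ∃ u v, G.Adj u v ∧ (a, c) ∈ chainSegs (D.chain u v)

theorem pd_SL [Fintype V] (h : D.IsPlanar) (hint : D.IntCoords) : SL D.points (DS D) := by
  refine ⟨?_, hint, ?_, ?_, ?_, ?_, ?_⟩
  · refine (Set.finite_range _).union (Set.finite_iUnion fun u => Set.finite_iUnion fun v =>
      Set.finite_iUnion fun _ => List.finite_toSet _)
  · rintro a c ⟨u, v, ha, hs⟩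
    exact ⟨v, u, ha.symm, by rw [pd_chain_symm]; exact chainSegs_reverse hs⟩
  · rintro a c ⟨u, v, ha, hs⟩
    have : (D.chain u v).IsChain (· ≠ ·) := List.Pairwise.isChain (smp_nodup _ (pd_smp h ha))
    exact chainSegs_rel this hs
  · rintro a c ⟨u, v, ha, hs⟩
    exact pd_mem_points D ha (chainSegs_mem hs).1
  · rintro a c w ⟨u, v, ha, hs⟩ hw hws
    have hwt := seg_subset_tr hs hws
    suffices hwc : w ∈ D.chain u v from corner_seg (pd_smp h ha) hs hwc hws
    rcases hw with ⟨x, rfl⟩ | hw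
    · by_contra hc
      have h1 : x ≠ u := fun e => hc (pd_pos_mem D (Or.inl e))
      have h2 : x ≠ v := fun e => hc (pd_pos_mem D (Or.inr e))
      exact h.2.2.1 u v x ha h1 h2 (by rw [pd_curve]; exact hwt)
    · simp only [Set.mem_iUnion] at hw
      obtain ⟨x, y, hxy, hw⟩ := hw
      have hw' : w ∈ D.chain x y := by
        simp only [PolylineDrawing.chain, List.mem_cons, List.mem_append]
        exact Or.inr (Or.inl hw)
      by_cases e : s(u, v) = s(x, y)
      · rcases Sym2.eq_iff.1 e with ⟨rfl, rfl⟩ | ⟨rfl, rfl⟩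
        · exact hw'
        · rw [pd_chain_symm] at hw'
          simpa using hw'
      · obtain ⟨t, t1, -, rfl⟩ := pd_common h ha hxy e hwt (mem_tr_of_mem hw')
        exact pd_pos_mem D t1
  · rintro a c a' c' z ⟨u, v, ha, hs⟩ ⟨x, y, hb, hs'⟩ hz hz'
    by_cases e : s(u, v) = s(x, y)
    · rcases Sym2.eq_iff.1 e with ⟨rfl, rfl⟩ | ⟨rfl, rfl⟩
      · rcases seg_seg (pd_smp h ha) hs hs' hz hz' with q | q
        · simp only [Prod.mk.injEq] at q
          exact Or.inl q
        · exact Or.inr (Or.inr q)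
      · have hs2 := chainSegs_reverse hs'
        rw [← pd_chain_symm] at hs2
        rw [segment_symm] at hz'
        rcases seg_seg (pd_smp h ha) hs hs2 hz hz' with q | q
        · simp only [Prod.mk.injEq] at q
          exact Or.inr (Or.inl q)
        · exact Or.inr (Or.inr ⟨q.1, q.2.symm⟩)
    · obtain ⟨t, t1, t2, rfl⟩ := pd_common h ha hb e (seg_subset_tr hs hz) (seg_subset_tr hs' hz')
      exact Or.inr (Or.inr ⟨corner_seg (pd_smp h ha) hs (pd_pos_mem D t1) hz,
        corner_seg (pd_smp h hb) hs' (pd_pos_mem D t2) hz'⟩)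

end FromD

/-! ### Part 8: the orthogonal drawing -/

section Final
variable {V : Type} {G : SimpleGraph V} {D : PolylineDrawing G}

/-- Region of an edge. -/
def ER (D : PolylineDrawing G) (Lf Rf : Pt → ℤ) (Q : Pt → Pt → Set Pt) (u v : V) : Set Pt :=
  {z | (∃ c ∈ D.chain u v, z ∈ FB Lf Rf c) ∨
    ∃ a c, z ∈ Q a c ∧ ((a, c) ∈ chainSegs (D.chain u v) ∨ (c, a) ∈ chainSegs (D.chain u v))}

/-- Correct drawing of an edge. -/
structure EdgeOK (D : PolylineDrawing G) (Lf Rf : Pt → ℤ) (Q : Pt → Pt → Set Pt) (u v : V)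
    (l : List Pt) (p q : Pt) : Prop where
  pl : PL p q l
  nc : NoCol l
  hp : p ∈ FB Lf Rf (D.pos u)
  hq : q ∈ FB Lf Rf (D.pos v)
  reg : tr l ⊆ ER D Lf Rf Q u v
  fp : tr l ∩ FB Lf Rf (D.pos u) ⊆ {p}
  fq : tr l ∩ FB Lf Rf (D.pos v) ⊆ {q}
  vis : ∀ c ∈ D.chain u v, ∃ z ∈ tr l, z.2 = c.2
  mono : IsMonoChain (D.chain u v) → IsMonoChain l

theorem mono_reverse {l : List Pt} (h : IsMonoChain l) : IsMonoChain l.reverse := by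
  rw [monoChain_iff] at *
  rcases h with h | h
  · right; exact List.isChain_reverse.2 h
  · left; exact List.isChain_reverse.2 h

theorem EdgeOK.symm {Lf Rf : Pt → ℤ} {Q : Pt → Pt → Set Pt} {u v : V}
    {l : List Pt} {p q : Pt} (h : EdgeOK D Lf Rf Q u v l p q) :
    EdgeOK D Lf Rf Q v u l.reverse q p := by
  refine ⟨h.pl.reverse, noCol_reverse h.nc, h.hq, h.hp, ?_, ?_, ?_, ?_, ?_⟩
  · rw [tr_reverse]
    intro z hz
    rcases h.reg hz with ⟨c, hc, hz⟩ | ⟨a, c, hz, hs⟩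
    · exact Or.inl ⟨c, by rw [pd_chain_symm]; simpa using hc, hz⟩
    · refine Or.inr ⟨a, c, hz, ?_⟩
      rw [pd_chain_symm]
      exact hs.symm.imp chainSegs_reverse chainSegs_reverse
  · rw [tr_reverse]; exact h.fq
  · rw [tr_reverse]; exact h.fp
  · rw [tr_reverse, pd_chain_symm]
    intro c hc
    exact h.vis c (by simpa using hc)
  · rw [pd_chain_symm]
    intro hm
    exact mono_reverse (h.mono (by simpa using mono_reverse hm))

variable {Lf Rf : Pt → ℤ} {Q : Pt → Pt → Set Pt}

theorem edge_exists [Fintype V] (h : D.IsPlanar) (hint : D.IntCoords)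
    (hD : Drawn D.points (DS D) Lf Rf Q) {u v : V} (ha : G.Adj u v) :
    ∃ l p q, EdgeOK D Lf Rf Q u v l p q := by
  have hSL := pd_SL h hint
  obtain ⟨b, l, e⟩ : ∃ b l, D.chain u v = D.pos u :: b :: l := by
    unfold PolylineDrawing.chain
    cases D.bends u v with
    | nil => exact ⟨_, _, rfl⟩
    | cons x m => exact ⟨_, _, rfl⟩
  have hlast : (D.pos u :: b :: l).getLast? = some (D.pos v) := by
    rw [← e]
    simp [PolylineDrawing.chain, List.getLast?_cons]
  have hch : (D.chain u v).IsChain (DS D) :=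
    isChain_of_chainSegs fun s hs => ⟨u, v, ha, hs⟩
  obtain ⟨p, q, T, h1, h2, ⟨m, m1, rfl, m3, m4⟩, h4, h5, h6, h7⟩ := assemble hSL hD l (D.pos u) b
    (D.pos v) (e ▸ smp_nodup _ (pd_smp h ha)) (e ▸ hch) hlast
  obtain ⟨l', r1, r2, r3, r4⟩ := compress _ m p q rfl m1
  rw [← e] at m3 m4 h4 h7
  refine ⟨l', p, q, r1, r4, h1, h2, ?_, ?_, ?_, ?_, ?_⟩
  · rw [r2]
    intro z hz
    rcases h4 hz with k | ⟨s, hs, k⟩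
    · exact Or.inl k
    · exact Or.inr ⟨s.1, s.2, k, Or.inl hs⟩
  · rw [r2]; exact h5
  · rw [r2]; exact h6
  · rw [r2]; exact h7
  · rw [monoChain_iff, monoChain_iff]
    exact Or.imp (fun w => (m3 w).sublist r3) (fun w => (m4 w).sublist r3)

theorem er_seg {u v : V} (ha : G.Adj u v) {a c : Pt}
    (hs : (a, c) ∈ chainSegs (D.chain u v) ∨ (c, a) ∈ chainSegs (D.chain u v)) :
    DS D a c ∧ a ∈ D.chain u v ∧ c ∈ D.chain u v := by
  rcases hs with hs | hs
  · exact ⟨⟨u, v, ha, hs⟩, chainSegs_mem hs⟩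
  · exact ⟨⟨v, u, ha.symm, by rw [pd_chain_symm]; exact chainSegs_reverse hs⟩,
      (chainSegs_mem hs).symm⟩

theorem er_other (hD : Drawn D.points (DS D) Lf Rf Q) {u v : V} (ha : G.Adj u v)
    {w z : Pt} (hw : w ∈ D.points) (hz : z ∈ ER D Lf Rf Q u v) (hzw : z ∈ FB Lf Rf w) :
    w ∈ D.chain u v := by
  rcases hz with ⟨c, hc, hz⟩ | ⟨a, c, hz, hs⟩
  · rw [hD.disj hw (pd_mem_points D ha hc) hzw hz]; exact hc
  · obtain ⟨s1, s2, s3⟩ := er_seg ha hs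
    by_contra hn
    exact hD.other a c w z s1 hw (fun e => hn (e ▸ s2)) (fun e => hn (e ▸ s3)) hz hzw

theorem er_cross (h : D.IsPlanar) (hD : Drawn D.points (DS D) Lf Rf Q) {u v x y : V}
    (ha : G.Adj u v) (hb : G.Adj x y) (hne : s(u, v) ≠ s(x, y)) {z : Pt}
    (hz : z ∈ ER D Lf Rf Q u v) (hz' : z ∈ ER D Lf Rf Q x y) :
    ∃ t, (t = u ∨ t = v) ∧ (t = x ∨ t = y) ∧ z ∈ FB Lf Rf (D.pos t) := by
  have com : ∀ w, w ∈ D.chain u v → w ∈ D.chain x y →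
      ∃ t, (t = u ∨ t = v) ∧ (t = x ∨ t = y) ∧ w = D.pos t := fun w h1 h2 =>
    pd_common h ha hb hne (mem_tr_of_mem h1) (mem_tr_of_mem h2)
  suffices hw : ∃ w, w ∈ D.chain u v ∧ w ∈ D.chain x y ∧ z ∈ FB Lf Rf w by
    obtain ⟨w, w1, w2, w3⟩ := hw
    obtain ⟨t, t1, t2, rfl⟩ := com w w1 w2
    exact ⟨t, t1, t2, w3⟩
  rcases hz with ⟨c, hc, hz⟩ | ⟨a, c, hz, hs⟩
  · exact ⟨c, hc, er_other hD hb (pd_mem_points D ha hc) hz' hz, hz⟩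
  · rcases hz' with ⟨c', hc', hz'⟩ | ⟨a', c', hz', hs'⟩
    · exact ⟨c', er_other hD ha (pd_mem_points D hb hc') (Or.inr ⟨a, c, hz, hs⟩) hz', hc', hz'⟩
    · obtain ⟨s1, s2, s3⟩ := er_seg ha hs
      obtain ⟨s1', s2', s3'⟩ := er_seg hb hs'
      have hac : a ≠ c := by
        obtain ⟨u, v, ha, hs⟩ := s1
        have : (D.chain u v).IsChain (· ≠ ·) := List.Pairwise.isChain (smp_nodup _ (pd_smp h ha))
        exact chainSegs_rel this hs
      have nsame : ¬ (a ∈ D.chain x y ∧ c ∈ D.chain x y) := by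
        rintro ⟨k1, k2⟩
        obtain ⟨t, t1, t2, e1⟩ := com a s2 k1
        obtain ⟨t', t1', t2', e2⟩ := com c s3 k2
        have htt : t ≠ t' := fun e => hac (by rw [e1, e2, e])
        apply hne
        rw [Sym2.eq_iff]
        grind
      obtain ⟨w, w1, w2, w3⟩ := hD.cross a c a' c' z s1 s1'
        (fun e => nsame ⟨e.1 ▸ s2', e.2 ▸ s3'⟩) (fun e => nsame ⟨e.1 ▸ s3', e.2 ▸ s2'⟩) hz hz'
      refine ⟨w, ?_, ?_, w3⟩
      · rcases w1 with rfl | rfl <;> assumption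
      · rcases w2 with rfl | rfl <;> assumption

theorem er_range (hD : Drawn D.points (DS D) Lf Rf Q) {u v : V} (ha : G.Adj u v) {z : Pt}
    (hz : z ∈ ER D Lf Rf Q u v) {lo hi : ℝ} (hr : ∀ c ∈ D.points, lo ≤ c.2 ∧ c.2 ≤ hi) :
    lo ≤ z.2 ∧ z.2 ≤ hi := by
  rcases hz with ⟨w, hw, hzw⟩ | ⟨a, c, hz, hs⟩
  · rw [hzw.1]; exact hr w (pd_mem_points D ha hw)
  · obtain ⟨s1, s2, s3⟩ := er_seg ha hs
    obtain ⟨r1, r2⟩ := hD.range _ _ z s1 hz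
    have a1 := hr _ (pd_mem_points D ha s2)
    have a2 := hr _ (pd_mem_points D ha s3)
    exact ⟨(le_min a1.1 a2.1).trans r1, r2.trans (max_le a1.2 a2.2)⟩

theorem tr_range {l : List Pt} {lo hi : ℝ} (h : ∀ c ∈ l, lo ≤ c.2 ∧ c.2 ≤ hi) :
    ∀ z ∈ tr l, lo ≤ z.2 ∧ z.2 ≤ hi := by
  have hconv : Convex ℝ {z : Pt | lo ≤ z.2 ∧ z.2 ≤ hi} :=
    (convex_Icc lo hi).linear_preimage (LinearMap.snd ℝ ℝ ℝ)
  induction l with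
  | nil => intro z hz; exact absurd hz (Set.notMem_empty z)
  | cons a l ih =>
    cases l with
    | nil => intro z hz; rw [show z = a from hz]; exact h a (by simp)
    | cons b l =>
      rintro z (hz | hz)
      · exact hconv.segment_subset (h a (by simp)) (h b (by simp)) hz
      · exact ih (fun c hc => h c (List.mem_cons_of_mem _ hc)) z hz

theorem pl_two {p q : Pt} {l : List Pt} (h : PL p q l) (hne : p ≠ q) :
    ∃ m, l = p :: (m ++ [q]) := by
  have h1 := h.head
  have h2 := h.last
  cases l with
  | nil => simp at h1
  | cons a l =>
    simp at h1
    subst h1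
    rcases List.eq_nil_or_concat l with rfl | ⟨m, b, rfl⟩
    · simp at h2; exact absurd h2 hne
    · have : b = q := by simpa [List.getLast?_cons] using h2
      subst this
      exact ⟨m, by simp⟩

theorem edges_exist [Fintype V] (h : D.IsPlanar) (hint : D.IntCoords)
    (hD : Drawn D.points (DS D) Lf Rf Q) :
    ∃ ch : V → V → List Pt, (∀ u v, ch v u = (ch u v).reverse) ∧
      ∀ u v, G.Adj u v → ∃ p q, EdgeOK D Lf Rf Q u v (ch u v) p q := by
  classical
  have : ∀ u v, ∃ l, G.Adj u v → ∃ p q, EdgeOK D Lf Rf Q u v l p q := by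
    intro u v
    by_cases ha : G.Adj u v
    · obtain ⟨l, p, q, hl⟩ := edge_exists h hint hD ha
      exact ⟨l, fun _ => ⟨p, q, hl⟩⟩
    · exact ⟨[], fun ha' => absurd ha' ha⟩
  choose F hF using this
  let e := Fintype.equivFin V
  refine ⟨fun u v => if e u < e v then F u v else if e v < e u then (F v u).reverse else [], ?_, ?_⟩
  · intro u v
    rcases lt_trichotomy (e u) (e v) with o | o | o
    · simp [o, o.not_gt]
    · simp [o]
    · simp [o, o.not_gt]
  · intro u v ha
    have hne : e u ≠ e v := fun q => ha.ne (e.injective q)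
    rcases lt_or_gt_of_ne hne with o | o
    · simp only [o, if_true]
      exact hF u v ha
    · simp only [o, o.not_gt, if_true, if_false]
      obtain ⟨p, q, k⟩ := hF v u ha.symm
      exact ⟨q, p, k.symm⟩

end Final


/-- Any planar poly-line drawing `D` of a finite simple graph `G` can
be transformed into a planar flat orthogonal drawing `D'` of `G` with the same
y-coordinates and the same left-to-right order in each row; moreover `D'` is
y-monotone if `D` was, and `D'` has the same height as `D`. -/
theorem polyline_to_flatOrth {V : Type} [Fintype V] (G : SimpleGraph V)
    (D : PolylineDrawing G) (hpl : D.IsPlanar) (hint : D.IntCoords) :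
    ∃ D' : OrthDrawing G, D'.IsPlanar ∧ D'.IsFlat ∧ D'.IntCoords ∧
      (∀ v, (D'.box v).y1 = (D.pos v).2) ∧
      (∀ v w : V, (D.pos v).2 = (D.pos w).2 → (D.pos v).1 < (D.pos w).1 →
        (D'.box v).x2 < (D'.box w).x1) ∧
      (D.IsYMonotone → D'.IsYMonotone) ∧
      (∀ h : ℕ, D.InHeight h ↔ D'.InHeight h) := by
  obtain ⟨Lf, Rf, Q, hD⟩ := drawn_exists (pd_SL hpl hint)
  obtain ⟨ch, hsym, hch⟩ := edges_exist hpl hint hD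
  have hP : ∀ v, D.pos v ∈ D.points := fun v => Or.inl ⟨v, rfl⟩
  let D' : OrthDrawing G :=
    { box := fun v => ⟨Lf (D.pos v), Rf (D.pos v), (D.pos v).2, (D.pos v).2,
        Int.cast_le.2 (hD.le _ (hP v)), le_rfl⟩
      chain := ch
      chain_symm := hsym }
  have hbox : ∀ v, (D'.box v).pts = FB Lf Rf (D.pos v) := by
    intro v
    ext z
    constructor
    · rintro ⟨h1, h2⟩
      exact ⟨le_antisymm h2.2 h2.1, h1⟩
    · rintro ⟨h1, h2⟩
      exact ⟨h2, h1.ge, h1.le⟩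
  have hdisj : ∀ u v z, z ∈ FB Lf Rf (D.pos u) → z ∈ FB Lf Rf (D.pos v) → u = v :=
    fun u v z h1 h2 => hpl.1 (hD.disj (hP u) (hP v) h1 h2)
  have hform : ∀ u v p q, G.Adj u v → EdgeOK D Lf Rf Q u v (ch u v) p q →
      ∃ m, ch u v = p :: (m ++ [q]) := by
    intro u v p q ha hE
    exact pl_two hE.pl fun e => ha.ne (hdisj u v p hE.hp (e ▸ hE.hq))
  have hlen : ∀ u v, G.Adj u v → 2 ≤ (ch u v).length := by
    intro u v ha
    obtain ⟨p, q, hE⟩ := hch u v ha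
    obtain ⟨m, e⟩ := hform u v p q ha hE
    rw [e]; simp
  have hcurve : ∀ u v, G.Adj u v → D'.curve u v = tr (ch u v) := fun u v ha =>
    chainSet_eq_tr _ (hlen u v ha)
  refine ⟨D', ⟨?_, ?_, ?_, ?_, ?_⟩, fun _ => rfl, ?_, fun _ => rfl, ?_, ?_, ?_⟩
  · intro u v huv
    rw [hbox, hbox, Set.disjoint_left]
    exact fun z h1 h2 => huv (hdisj u v z h1 h2)
  · intro u v ha
    obtain ⟨p, q, hE⟩ := hch u v ha
    exact ⟨smp_simple _ hE.pl.smp (hlen u v ha), orthoChain_of hE.pl.orth,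
      noCol_genuine hE.nc hE.pl.orth (smp_nodup _ hE.pl.smp)⟩
  · intro u v ha
    obtain ⟨p, q, hE⟩ := hch u v ha
    obtain ⟨m, e⟩ := hform u v p q ha hE
    refine ⟨p, q, m, e, ?_, ?_⟩
    · rw [hbox]; exact hE.hp
    · rw [hbox]; exact hE.hq
  · intro u v w ha
    obtain ⟨p, q, hE⟩ := hch u v ha
    rw [hcurve u v ha, hbox]
    rintro z ⟨hz, hzw⟩
    by_cases hu : w = u
    · subst hu
      have e : z = p := hE.fp ⟨hz, hzw⟩
      exact Or.inl ⟨rfl, e ▸ hE.pl.head⟩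
    · by_cases hv : w = v
      · subst hv
        have e : z = q := hE.fq ⟨hz, hzw⟩
        exact Or.inr ⟨rfl, e ▸ hE.pl.last⟩
      · exfalso
        have hm := er_other hD ha (hP w) (hE.reg hz) hzw
        exact hpl.2.2.1 u v w ha hu hv (by rw [pd_curve]; exact mem_tr_of_mem hm)
  · intro u v x y ha hb hne
    have ends : ∀ u v, G.Adj u v → ∀ z ∈ tr (ch u v), ∀ t, (t = u ∨ t = v) →
        z ∈ FB Lf Rf (D.pos t) → (ch u v).head? = some z ∨ (ch u v).getLast? = some z := by
      intro u v ha z hz t ht hzt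
      obtain ⟨p, q, hE⟩ := hch u v ha
      rcases ht with rfl | rfl
      · have e : z = p := hE.fp ⟨hz, hzt⟩
        exact Or.inl (e ▸ hE.pl.head)
      · have e : z = q := hE.fq ⟨hz, hzt⟩
        exact Or.inr (e ▸ hE.pl.last)
    rw [hcurve u v ha, hcurve x y hb]
    rintro z ⟨hz, hz'⟩
    obtain ⟨p, q, hE⟩ := hch u v ha
    obtain ⟨p', q', hE'⟩ := hch x y hb
    obtain ⟨t, t1, t2, t3⟩ := er_cross hpl hD ha hb hne (hE.reg hz) (hE'.reg hz')
    exact ⟨ends u v ha z hz t t1 t3, ends x y hb z hz' t t2 t3⟩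
  · intro z hz
    rcases hz with hz | hz
    · simp only [Set.mem_iUnion] at hz
      obtain ⟨v, hz⟩ := hz
      have hy := (hint _ (hP v)).2
      simp only [Set.mem_insert_iff, Set.mem_singleton_iff] at hz
      rcases hz with rfl | rfl | rfl | rfl
      · exact ⟨⟨_, rfl⟩, hy⟩
      · exact ⟨⟨_, rfl⟩, hy⟩
      · exact ⟨⟨_, rfl⟩, hy⟩
      · exact ⟨⟨_, rfl⟩, hy⟩
    · simp only [Set.mem_iUnion] at hz
      obtain ⟨u, v, ha, hz⟩ := hz
      obtain ⟨p, q, hE⟩ := hch u v ha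
      exact hE.pl.int z hz
  · intro v w h1 h2
    exact Int.cast_lt.2 (hD.lt _ (hP v) _ (hP w) h1 h2)
  · intro hm u v ha
    obtain ⟨p, q, hE⟩ := hch u v ha
    exact hE.mono (hm u v ha)
  · intro n
    constructor
    · rintro ⟨y0, hy⟩
      refine ⟨y0, fun z hz => ?_⟩
      rcases hz with hz | hz
      · simp only [Set.mem_iUnion] at hz
        obtain ⟨v, hz⟩ := hz
        have hv := hy _ (hP v)
        simp only [Set.mem_insert_iff, Set.mem_singleton_iff] at hz
        rcases hz with rfl | rfl | rfl | rfl <;> exact hv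
      · simp only [Set.mem_iUnion] at hz
        obtain ⟨u, v, ha, hz⟩ := hz
        obtain ⟨p, q, hE⟩ := hch u v ha
        exact er_range hD ha (hE.reg (mem_tr_of_mem hz)) hy
    · rintro ⟨y0, hy⟩
      refine ⟨y0, fun z hz => ?_⟩
      rcases hz with ⟨v, rfl⟩ | hz
      · refine hy (((D'.box v).x1, (D'.box v).y1)) (Or.inl ?_)
        simp only [Set.mem_iUnion]
        exact ⟨v, Or.inl rfl⟩
      · simp only [Set.mem_iUnion] at hz
        obtain ⟨u, v, ha, hz⟩ := hz
        obtain ⟨p, q, hE⟩ := hch u v ha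
        have hz' : z ∈ D.chain u v := by
          simp only [PolylineDrawing.chain, List.mem_cons, List.mem_append]
          exact Or.inr (Or.inl hz)
        obtain ⟨t, t1, t2⟩ := hE.vis z hz'
        rw [← t2]
        refine tr_range (fun c hc => hy c (Or.inr ?_)) t t1
        simp only [Set.mem_iUnion]
        exact ⟨u, v, ha, hc⟩
end
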